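/- arXiv:2208.07534 — 5 statements merged into one kernel-verified Lean document; each statement's English description precedes it below -/
import Mathlib

section
/- Let λ > 0 be real, let ξ₀, b₀, b₁, b₂ ∈ ℂ, and let u : ℝ → ℂ be a twice continuously differentiable function satisfying the ordinary differential equation u''(y) = (y³ + 2ξ₀·y + b₂λ − ξ₀²λ⁻² + b₀ξ₀λ⁻³ − b₁²λ⁻⁴/4)·u(y) for all y ∈ ℝ. Define U : ℝ³ → ℂ by U(x₀, x₁, x₂) = exp(i·ξ₀·λ·x₀ + i·λ⁵·x₂ − i·(b₁/2)·x₁) · u(λ²·x₁). Then (P_mod + b₀D₀ + b₁D₁ + b₂D₂)U = 0 identically on ℝ³. -/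
open Complex

/-- Partial derivative in the `j`-th coordinate direction. -/
noncomputable def pd {n : ℕ} (j : Fin n) (f : (Fin n → ℝ) → ℂ) (x : Fin n → ℝ) : ℂ :=
  fderiv ℝ f x (Pi.single j 1)

/-- The operator `P_mod = -D₀² + 2x₁D₀D₂ + D₁² + x₁³D₂²`, where `D_j = -i ∂_j`;
equivalently `P_mod u = ∂₀²u - 2x₁ ∂₀∂₂u - ∂₁²u - x₁³ ∂₂²u`. -/
noncomputable def Pmod (u : (Fin 3 → ℝ) → ℂ) (x : Fin 3 → ℝ) : ℂ :=
  pd 0 (pd 0 u) x - 2 * (x 1 : ℂ) * pd 2 (pd 0 u) x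
    - pd 1 (pd 1 u) x - (x 1 : ℂ) ^ 3 * pd 2 (pd 2 u) x

/-- The operator `P_mod + b₀D₀ + b₁D₁ + b₂D₂`. -/
noncomputable def Pop (b₀ b₁ b₂ : ℂ) (u : (Fin 3 → ℝ) → ℂ) (x : Fin 3 → ℝ) : ℂ :=
  Pmod u x + b₀ * (-I * pd 0 u x) + b₁ * (-I * pd 1 u x) + b₂ * (-I * pd 2 u x)

/-! The phase `-i(b₁/2)x₁` cancels the first-order term in `x₁`, so on
`exp(i(αx₀ - (b₁/2)x₁ + βx₂)) w(x₁)` the operator reduces to a Schrödinger equation for `w` with a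
cubic potential. For `α = ξ₀λ` and `β = λ⁵`, the dilation `w(t) = u(λ²t)` multiplies second
derivatives by `λ⁴` and makes the potential monic. -/

section PartialDerivatives

variable {n : ℕ} {j l : Fin n} {x : Fin n → ℝ}

lemma pd_mul {f g : (Fin n → ℝ) → ℂ} (hf : DifferentiableAt ℝ f x)
    (hg : DifferentiableAt ℝ g x) :
    pd j (fun y => f y * g y) x = pd j f x * g x + f x * pd j g x := by
  simp only [pd, fderiv_fun_mul hf hg, add_apply, smul_apply, smul_eq_mul]
  ring

lemma pd_comp_apply {w : ℝ → ℂ} (hw : DifferentiableAt ℝ w (x l)) :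
    pd j (fun y => w (y l)) x = if j = l then deriv w (x l) else 0 := by
  have hcomp := hw.hasFDerivAt.comp (f := fun y : Fin n → ℝ => y l) x (hasFDerivAt_apply l x)
  have hpd : pd j (fun y => w (y l)) x = fderiv ℝ w (x l) ((Pi.single j 1 : Fin n → ℝ) l) :=
    congrArg (· (Pi.single j 1)) hcomp.fderiv
  rw [hpd, fderiv_eq_smul_deriv, Pi.single_apply]
  simp [eq_comm]

lemma hasFDerivAt_cexp_sum_mul (a : Fin n → ℂ) :
    HasFDerivAt (fun y : Fin n → ℝ => cexp (∑ i, a i * y i))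
      (cexp (∑ i, a i * x i) • ∑ i, a i • ofRealCLM.comp (.proj i)) x :=
  (HasFDerivAt.fun_sum fun i _ =>
    (ofRealCLM.hasFDerivAt.comp x (hasFDerivAt_apply i x)).const_mul (a i)).cexp

lemma pd_cexp_sum_mul (a : Fin n → ℂ) :
    pd j (fun y => cexp (∑ i, a i * y i)) x = a j * cexp (∑ i, a i * x i) := by
  rw [pd, (hasFDerivAt_cexp_sum_mul a).fderiv]
  simp [Pi.single_apply, apply_ite, mul_comm]

end PartialDerivatives

/-- The separated function `exp(∑ aᵢxᵢ) · w(x_l)`: a profile `w` in the `l`-th variable modulated by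
an exponential with complex frequencies `a`. Partial derivatives act on it through the profile. -/
noncomputable def expMode {n : ℕ} (a : Fin n → ℂ) (l : Fin n) (w : ℝ → ℂ) (x : Fin n → ℝ) : ℂ :=
  cexp (∑ i, a i * x i) * w (x l)

section ExpMode

variable {n : ℕ} {j l : Fin n} {a : Fin n → ℂ} {w : ℝ → ℂ}

lemma pd_expMode {x : Fin n → ℝ} (hw : DifferentiableAt ℝ w (x l)) :
    pd j (expMode a l w) x =
      cexp (∑ i, a i * x i) * (a j * w (x l) + if j = l then deriv w (x l) else 0) := by
  have hprofile : DifferentiableAt ℝ (fun y : Fin n → ℝ => w (y l)) x :=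
    hw.comp (f := fun y : Fin n → ℝ => y l) x (differentiableAt_apply l x)
  unfold expMode
  rw [pd_mul (hasFDerivAt_cexp_sum_mul a).differentiableAt hprofile, pd_cexp_sum_mul,
    pd_comp_apply hw]
  ring

lemma pd_expMode_self (hw : Differentiable ℝ w) :
    pd l (expMode a l w) = expMode a l (a l • w + deriv w) := by
  ext x
  simp [pd_expMode (hw _), expMode]

lemma pd_expMode_of_ne (hw : Differentiable ℝ w) (hjl : j ≠ l) :
    pd j (expMode a l w) = expMode a l (a j • w) := by
  ext x
  simp [pd_expMode (hw _), expMode, hjl]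

end ExpMode

section ModelOperator

variable {w : ℝ → ℂ}

lemma Pmod_expMode (a : Fin 3 → ℂ) (hw : Differentiable ℝ w) (hw' : Differentiable ℝ (deriv w))
    (x : Fin 3 → ℝ) :
    Pmod (expMode a 1 w) x = cexp (∑ i, a i * x i) *
      ((a 0 ^ 2 - 2 * x 1 * a 0 * a 2 - a 1 ^ 2 - (x 1 : ℂ) ^ 3 * a 2 ^ 2) * w (x 1)
        - 2 * a 1 * deriv w (x 1) - deriv (deriv w) (x 1)) := by
  have hderiv : deriv (a 1 • w + deriv w) = a 1 • deriv w + deriv (deriv w) := by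
    ext t
    rw [deriv_add ((hw t).const_smul (a 1)) (hw' t), deriv_const_smul (a 1) (hw t)]
    rfl
  have h₀ : (0 : Fin 3) ≠ 1 := by decide
  have h₂ : (2 : Fin 3) ≠ 1 := by decide
  rw [Pmod, pd_expMode_of_ne hw h₀, pd_expMode_of_ne hw h₂, pd_expMode_self hw,
    pd_expMode_of_ne (hw.const_smul _) h₀, pd_expMode_of_ne (hw.const_smul _) h₂,
    pd_expMode_of_ne (hw.const_smul _) h₂, pd_expMode_self ((hw.const_smul _).add hw'), hderiv]
  simp only [expMode, Pi.add_apply, Pi.smul_apply, smul_eq_mul]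
  ring

lemma Pop_expMode (a : Fin 3 → ℂ) (b₀ b₁ b₂ : ℂ) (hw : Differentiable ℝ w)
    (hw' : Differentiable ℝ (deriv w)) (x : Fin 3 → ℝ) :
    Pop b₀ b₁ b₂ (expMode a 1 w) x = cexp (∑ i, a i * x i) *
      ((a 0 ^ 2 - 2 * x 1 * a 0 * a 2 - a 1 ^ 2 - (x 1 : ℂ) ^ 3 * a 2 ^ 2
          - I * (b₀ * a 0 + b₁ * a 1 + b₂ * a 2)) * w (x 1)
        - (2 * a 1 + I * b₁) * deriv w (x 1) - deriv (deriv w) (x 1)) := by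
  rw [Pop, Pmod_expMode a hw hw', pd_expMode (hw _), pd_expMode (hw _), pd_expMode (hw _),
    if_neg (by decide), if_pos rfl, if_neg (by decide)]
  ring

lemma Pop_expMode_eq_zero_iff (α β b₀ b₁ b₂ : ℂ) (hw : Differentiable ℝ w)
    (hw' : Differentiable ℝ (deriv w)) (x : Fin 3 → ℝ) :
    Pop b₀ b₁ b₂ (expMode ![I * α, -I * (b₁ / 2), I * β] 1 w) x = 0 ↔
      deriv (deriv w) (x 1) =
        (β ^ 2 * (x 1 : ℂ) ^ 3 + 2 * α * β * x 1 + b₂ * β - α ^ 2 + b₀ * α - b₁ ^ 2 / 4)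
          * w (x 1) := by
  have hreduced : Pop b₀ b₁ b₂ (expMode ![I * α, -I * (b₁ / 2), I * β] 1 w) x =
      cexp (∑ i, ![I * α, -I * (b₁ / 2), I * β] i * x i) *
        ((β ^ 2 * (x 1 : ℂ) ^ 3 + 2 * α * β * x 1 + b₂ * β - α ^ 2 + b₀ * α - b₁ ^ 2 / 4)
          * w (x 1) - deriv (deriv w) (x 1)) := by
    rw [Pop_expMode _ _ _ _ hw hw']
    congr 1
    simp only [Matrix.cons_val]
    ring_nf
    simp only [I_sq]
    ring
  rw [hreduced, mul_eq_zero_iff_left (exp_ne_zero _), sub_eq_zero, eq_comm]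

end ModelOperator

section Dilation

variable {𝕜 E : Type*} [NontriviallyNormedField 𝕜] [NormedAddCommGroup E] [NormedSpace 𝕜 E]
  (c : 𝕜) (f : 𝕜 → E)

lemma deriv_fun_comp_mul_left : deriv (fun t => f (c * t)) = fun t => c • deriv f (c * t) :=
  funext (deriv_comp_mul_left c f)

lemma deriv_deriv_comp_mul_left (t : 𝕜) :
    deriv (deriv fun s => f (c * s)) t = c ^ 2 • deriv (deriv f) (c * t) := by
  rw [deriv_fun_comp_mul_left, deriv_fun_const_smul_field, deriv_comp_mul_left, smul_smul, sq]

end Dilation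

theorem exact_solution_family_general {lam : ℝ} (hlam : lam ≠ 0) (ξ₀ b₀ b₁ b₂ : ℂ) {u : ℝ → ℂ}
    (hu : Differentiable ℝ u) (hu' : Differentiable ℝ (deriv u)) (x : Fin 3 → ℝ) :
    Pop b₀ b₁ b₂
        (fun x : Fin 3 → ℝ =>
          cexp (I * ξ₀ * (lam : ℂ) * (x 0 : ℂ) + I * (lam : ℂ) ^ 5 * (x 2 : ℂ)
              - I * (b₁ / 2) * (x 1 : ℂ)) * u (lam ^ 2 * x 1)) x = 0 ↔
      deriv (deriv u) (lam ^ 2 * x 1) =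
        (((lam ^ 2 * x 1 : ℝ) : ℂ) ^ 3 + 2 * ξ₀ * ((lam ^ 2 * x 1 : ℝ) : ℂ) + b₂ * (lam : ℂ)
          - ξ₀ ^ 2 * ((lam : ℂ) ^ 2)⁻¹ + b₀ * ξ₀ * ((lam : ℂ) ^ 3)⁻¹
          - b₁ ^ 2 * ((lam : ℂ) ^ 4)⁻¹ / 4) * u (lam ^ 2 * x 1) := by
  have hlam' : (lam : ℂ) ≠ 0 := ofReal_ne_zero.mpr hlam
  have hscale : Differentiable ℝ fun t : ℝ => lam ^ 2 * t := differentiable_id.const_mul _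
  have hw : Differentiable ℝ fun t => u (lam ^ 2 * t) := hu.comp hscale
  have hw' : Differentiable ℝ (deriv fun t => u (lam ^ 2 * t)) := by
    rw [deriv_fun_comp_mul_left]
    exact (hu'.comp hscale).const_smul _
  have hmode : (fun x : Fin 3 → ℝ =>
      cexp (I * ξ₀ * (lam : ℂ) * (x 0 : ℂ) + I * (lam : ℂ) ^ 5 * (x 2 : ℂ)
        - I * (b₁ / 2) * (x 1 : ℂ)) * u (lam ^ 2 * x 1)) =
      expMode ![I * (ξ₀ * lam), -I * (b₁ / 2), I * (lam : ℂ) ^ 5] 1 fun t => u (lam ^ 2 * t) := by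
    ext x
    simp only [expMode, Fin.sum_univ_three, Matrix.cons_val]
    ring_nf
  rw [hmode, Pop_expMode_eq_zero_iff _ _ _ _ _ hw hw', deriv_deriv_comp_mul_left, real_smul,
    ← mul_right_inj' (pow_ne_zero 4 hlam')]
  push_cast
  field_simp

/-- If `u : ℝ → ℂ` is `C²` and solves
`u'' = (y³ + 2ξ₀y + b₂λ − ξ₀²λ⁻² + b₀ξ₀λ⁻³ − b₁²λ⁻⁴/4)·u`, then
`U(x) = exp(iξ₀λx₀ + iλ⁵x₂ − i(b₁/2)x₁)·u(λ²x₁)` solves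
`(P_mod + b₀D₀ + b₁D₁ + b₂D₂)U = 0` on `ℝ³`. -/
theorem exact_solution_family (lam : ℝ) (hlam : 0 < lam) (ξ₀ b₀ b₁ b₂ : ℂ)
    (u : ℝ → ℂ) (hu : ContDiff ℝ 2 u)
    (hODE : ∀ y : ℝ, deriv (deriv u) y =
      ((y : ℂ) ^ 3 + 2 * ξ₀ * (y : ℂ) + b₂ * (lam : ℂ)
        - ξ₀ ^ 2 * ((lam : ℂ) ^ 2)⁻¹ + b₀ * ξ₀ * ((lam : ℂ) ^ 3)⁻¹
        - b₁ ^ 2 * ((lam : ℂ) ^ 4)⁻¹ / 4) * u y) :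
    ∀ x : Fin 3 → ℝ,
      Pop b₀ b₁ b₂
        (fun x : Fin 3 → ℝ =>
          Complex.exp (I * ξ₀ * (lam : ℂ) * (x 0 : ℂ) + I * (lam : ℂ) ^ 5 * (x 2 : ℂ)
              - I * (b₁ / 2) * (x 1 : ℂ)) * u (lam ^ 2 * x 1)) x = 0 :=
  fun x => (exact_solution_family_general hlam.ne' ξ₀ b₀ b₁ b₂ (hu.differentiable two_ne_zero)
    hu.differentiable_deriv_two x).2 (hODE _)
end

section
/- Let p(x, ξ) = −ξ₀² + 2x₁ξ₀ξ₂ + ξ₁² + x₁³ξ₂² and let ρ = (x, ξ) be any point with x₁ = 0, ξ₀ = ξ₁ = 0 and ξ₂ ≠ 0. Let F = F_p(ρ) be the Hamilton map of p at ρ, i.e. the 6×6 real matrix that is the Jacobian at ρ of the Hamilton vector field H_p = (∂p/∂ξ₀, ∂p/∂ξ₁, ∂p/∂ξ₂, −∂p/∂x₀, −∂p/∂x₁, −∂p/∂x₂). Then F⁴ = 0 (so in particular F has no nonzero real eigenvalues), and Ker(F²) ∩ Im(F²) ≠ {0}; in fact Ker(F²) ∩ Im(F²) contains the two-dimensional span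 of the coordinate vectors in the x₀- and x₁-directions, so p is of spectral type 2 at every point of Σ = {x₁ = 0, ξ₀ = ξ₁ = 0, ξ₂ ≠ 0}. -/
/-- The principal symbol `p(x,ξ) = −ξ₀² + 2x₁ξ₀ξ₂ + ξ₁² + x₁³ξ₂²` of `P_mod`. -/
noncomputable def psym (ρ : (Fin 3 → ℝ) × (Fin 3 → ℝ)) : ℝ :=
  -(ρ.2 0) ^ 2 + 2 * (ρ.1 1) * (ρ.2 0) * (ρ.2 2) + (ρ.2 1) ^ 2 + (ρ.1 1) ^ 3 * (ρ.2 2) ^ 2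

/-- The Hamilton vector field `H_p = (∂p/∂ξ, −∂p/∂x)` of `psym` on `ℝ³ × ℝ³`. -/
noncomputable def Hp (ρ : (Fin 3 → ℝ) × (Fin 3 → ℝ)) : (Fin 3 → ℝ) × (Fin 3 → ℝ) :=
  (fun i => fderiv ℝ psym ρ (0, Pi.single i 1),
   fun i => -(fderiv ℝ psym ρ (Pi.single i 1, 0)))

/-- The Hamilton map of `psym` at `ρ`: the linearization (Jacobian) of the Hamilton
vector field at `ρ`, as a linear endomorphism of `ℝ³ × ℝ³`. -/
noncomputable def HamiltonMap (ρ : (Fin 3 → ℝ) × (Fin 3 → ℝ)) :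
    ((Fin 3 → ℝ) × (Fin 3 → ℝ)) →ₗ[ℝ] ((Fin 3 → ℝ) × (Fin 3 → ℝ)) :=
  (fderiv ℝ Hp ρ).toLinearMap

/-!
Where `x₁ = 0`, the Jacobian `F` of `H_p` squares to
`F² = (4ξ₂ ∂_{x₀} + 4ξ₀ ∂_{x₂}) ⊗ dξ₁ - ∂_{x₁} ⊗ (4ξ₂ dξ₀ + 4ξ₀ dξ₂)`.
This map takes values in the position directions and annihilates them, so `F⁴ = 0` and
`Im F² ⊆ Ker F²`. If moreover `ξ₀ = 0` and `ξ₂ ≠ 0`, then `Im F²` is exactly the plane spanned by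
`∂_{x₀}` and `∂_{x₁}`.
-/

/-- The differential `dxᵢ` of the `i`-th position coordinate, as a linear form on `ℝ³ × ℝ³`. -/
def dx (i : Fin 3) : ((Fin 3 → ℝ) × (Fin 3 → ℝ)) →L[ℝ] ℝ :=
  (ContinuousLinearMap.proj i).comp (ContinuousLinearMap.fst ℝ (Fin 3 → ℝ) (Fin 3 → ℝ))

/-- The differential `dξᵢ` of the `i`-th momentum coordinate, as a linear form on `ℝ³ × ℝ³`. -/
def dξ (i : Fin 3) : ((Fin 3 → ℝ) × (Fin 3 → ℝ)) →L[ℝ] ℝ :=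
  (ContinuousLinearMap.proj i).comp (ContinuousLinearMap.snd ℝ (Fin 3 → ℝ) (Fin 3 → ℝ))

section Derivatives

variable (ρ v : (Fin 3 → ℝ) × (Fin 3 → ℝ))

@[simp]
theorem dx_apply (i : Fin 3) : dx i v = v.1 i := rfl

@[simp]
theorem dξ_apply (i : Fin 3) : dξ i v = v.2 i := rfl

theorem hasFDerivAt_psym :
    HasFDerivAt psym
      ((-2 * ρ.2 0 + 2 * ρ.1 1 * ρ.2 2) • dξ 0 + (2 * ρ.2 1) • dξ 1
        + (2 * ρ.1 1 * ρ.2 0 + 2 * ρ.1 1 ^ 3 * ρ.2 2) • dξ 2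
        + (2 * ρ.2 0 * ρ.2 2 + 3 * ρ.1 1 ^ 2 * ρ.2 2 ^ 2) • dx 1) ρ := by
  have hx₁ := (dx 1).hasFDerivAt (x := ρ)
  have hξ (i : Fin 3) := (dξ i).hasFDerivAt (x := ρ)
  have hp := ((((hξ 0).pow 2).neg.add (((hx₁.const_mul 2).mul (hξ 0)).mul (hξ 2))).add
    ((hξ 1).pow 2)).add ((hx₁.pow 3).mul ((hξ 2).pow 2))
  refine hp.congr_fderiv ?_
  simp only [dx_apply, dξ_apply, Pi.mul_apply]
  module

theorem hp_apply :
    Hp ρ =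
      (![-2 * ρ.2 0 + 2 * ρ.1 1 * ρ.2 2, 2 * ρ.2 1, 2 * ρ.1 1 * ρ.2 0 + 2 * ρ.1 1 ^ 3 * ρ.2 2],
       ![0, -(2 * ρ.2 0 * ρ.2 2 + 3 * ρ.1 1 ^ 2 * ρ.2 2 ^ 2), 0]) := by
  ext i <;> fin_cases i <;> simp [Hp, (hasFDerivAt_psym ρ).fderiv]

theorem hasFDerivAt_hp :
    HasFDerivAt Hp
      ((ContinuousLinearMap.pi
        ![(-2 : ℝ) • dξ 0 + (2 * ρ.2 2) • dx 1 + (2 * ρ.1 1) • dξ 2,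
          (2 : ℝ) • dξ 1,
          (2 * ρ.1 1) • dξ 0 + (2 * ρ.2 0 + 6 * ρ.1 1 ^ 2 * ρ.2 2) • dx 1
            + (2 * ρ.1 1 ^ 3) • dξ 2]).prod
      (ContinuousLinearMap.pi
        ![0,
          -((2 * ρ.2 2) • dξ 0 + (6 * ρ.1 1 * ρ.2 2 ^ 2) • dx 1
            + (2 * ρ.2 0 + 6 * ρ.1 1 ^ 2 * ρ.2 2) • dξ 2),
          0])) ρ := by
  have hx₁ := (dx 1).hasFDerivAt (x := ρ)
  have hξ (i : Fin 3) := (dξ i).hasFDerivAt (x := ρ)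
  rw [funext hp_apply]
  refine .prodMk (hasFDerivAt_pi.2 fun i => ?_) (hasFDerivAt_pi.2 fun i => ?_) <;> fin_cases i
  · refine (((hξ 0).const_mul (-2)).add ((hx₁.const_mul 2).mul (hξ 2))).congr_fderiv ?_
    simp only [dx_apply, dξ_apply, Matrix.cons_val, Fin.zero_eta]
    module
  · exact (hξ 1).const_mul 2
  · refine (((hx₁.const_mul 2).mul (hξ 0)).add
      (((hx₁.pow 3).const_mul 2).mul (hξ 2))).congr_fderiv ?_
    simp only [dx_apply, dξ_apply, Matrix.cons_val, Fin.reduceFinMk]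
    module
  · exact hasFDerivAt_const 0 ρ
  · refine ((((hξ 0).const_mul 2).mul (hξ 2)).add
      (((hx₁.pow 2).const_mul 3).mul ((hξ 2).pow 2))).neg.congr_fderiv ?_
    simp only [dx_apply, dξ_apply, Matrix.cons_val, Fin.mk_one]
    module
  · exact hasFDerivAt_const 0 ρ

theorem hamiltonMap_apply :
    HamiltonMap ρ v =
      (![-2 * v.2 0 + 2 * ρ.2 2 * v.1 1 + 2 * ρ.1 1 * v.2 2,
         2 * v.2 1,
         2 * ρ.1 1 * v.2 0 + (2 * ρ.2 0 + 6 * ρ.1 1 ^ 2 * ρ.2 2) * v.1 1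
           + 2 * ρ.1 1 ^ 3 * v.2 2],
       ![0,
         -(2 * ρ.2 2 * v.2 0 + 6 * ρ.1 1 * ρ.2 2 ^ 2 * v.1 1
           + (2 * ρ.2 0 + 6 * ρ.1 1 ^ 2 * ρ.2 2) * v.2 2),
         0]) := by
  rw [HamiltonMap, (hasFDerivAt_hp ρ).fderiv]
  ext i <;> fin_cases i <;> simp

end Derivatives

section

variable {x ξ : Fin 3 → ℝ}

theorem hamiltonMap_sq_apply (hx : x 1 = 0) (v : (Fin 3 → ℝ) × (Fin 3 → ℝ)) :
    (HamiltonMap (x, ξ) ^ 2) v =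
      (![4 * ξ 2 * v.2 1, -(4 * ξ 2 * v.2 0 + 4 * ξ 0 * v.2 2), 4 * ξ 0 * v.2 1], 0) := by
  rw [pow_two, Module.End.mul_apply, hamiltonMap_apply, hamiltonMap_apply]
  simp only [hx, Matrix.cons_val]
  refine Prod.ext ?_ (by simp)
  congrm ![?_, ?_, ?_] <;> ring

theorem hamiltonMap_pow_four (hx : x 1 = 0) : HamiltonMap (x, ξ) ^ 4 = 0 := by
  refine LinearMap.ext fun v => ?_
  rw [pow_add _ 2 2, Module.End.mul_apply, hamiltonMap_sq_apply hx, hamiltonMap_sq_apply hx]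
  ext i <;> fin_cases i <;> simp

theorem range_hamiltonMap_sq_le_ker (hx : x 1 = 0) :
    LinearMap.range (HamiltonMap (x, ξ) ^ 2) ≤ LinearMap.ker (HamiltonMap (x, ξ) ^ 2) :=
  LinearMap.range_le_ker_iff.2 <| by
    rw [← Module.End.mul_eq_comp, ← pow_add, hamiltonMap_pow_four hx]

theorem range_hamiltonMap_sq (hx : x 1 = 0) (hξ0 : ξ 0 = 0) (hξ2 : ξ 2 ≠ 0) :
    LinearMap.range (HamiltonMap (x, ξ) ^ 2) =
      Submodule.span ℝ
        {((Pi.single 0 1, 0) : (Fin 3 → ℝ) × (Fin 3 → ℝ)),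
         ((Pi.single 1 1, 0) : (Fin 3 → ℝ) × (Fin 3 → ℝ))} := by
  apply le_antisymm
  · rintro _ ⟨v, rfl⟩
    refine Submodule.mem_span_pair.2 ⟨4 * ξ 2 * v.2 1, -(4 * ξ 2 * v.2 0), ?_⟩
    rw [hamiltonMap_sq_apply hx]
    ext i <;> fin_cases i <;> simp [hξ0]
  · obtain ⟨t, ht⟩ : ∃ t, 4 * ξ 2 * t = 1 :=
      ⟨_, mul_inv_cancel₀ (mul_ne_zero four_ne_zero hξ2)⟩
    have hdir₀ : (HamiltonMap (x, ξ) ^ 2) (0, Pi.single 1 t) = (Pi.single 0 1, 0) := by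
      rw [hamiltonMap_sq_apply hx]
      ext i <;> fin_cases i <;> simp [hξ0, ht]
    have hdir₁ : (HamiltonMap (x, ξ) ^ 2) (0, Pi.single 0 (-t)) = (Pi.single 1 1, 0) := by
      rw [hamiltonMap_sq_apply hx]
      ext i <;> fin_cases i <;> simp [hξ0, ht]
    exact Submodule.span_le.2 (Set.pair_subset ⟨_, hdir₀⟩ ⟨_, hdir₁⟩)

end

theorem linearIndependent_pair_single_one_zero {R M ι : Type*} [Ring R] [AddCommGroup M]
    [Module R M] [DecidableEq ι] {i j : ι} (hij : i ≠ j) :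
    LinearIndependent R
      ![((Pi.single i 1, 0) : (ι → R) × M), ((Pi.single j 1, 0) : (ι → R) × M)] := by
  refine LinearIndependent.pair_iff.2 fun s t h => ?_
  have hfst := congrArg Prod.fst h
  exact ⟨by simpa [hij] using congrFun hfst i, by simpa [hij.symm] using congrFun hfst j⟩

theorem hamilton_map_spectral_type_two_general (x ξ : Fin 3 → ℝ)
    (hx : x 1 = 0) (hξ0 : ξ 0 = 0) (hξ2 : ξ 2 ≠ 0) :
    (HamiltonMap (x, ξ)) ^ 4 = 0 ∧
    LinearMap.ker ((HamiltonMap (x, ξ)) ^ 2) ⊓ LinearMap.range ((HamiltonMap (x, ξ)) ^ 2)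
      ≠ ⊥ ∧
    Submodule.span ℝ
        {((Pi.single 0 1, 0) : (Fin 3 → ℝ) × (Fin 3 → ℝ)),
         ((Pi.single 1 1, 0) : (Fin 3 → ℝ) × (Fin 3 → ℝ))}
      = LinearMap.ker ((HamiltonMap (x, ξ)) ^ 2)
          ⊓ LinearMap.range ((HamiltonMap (x, ξ)) ^ 2) ∧
    LinearIndependent ℝ
      ![((Pi.single 0 1, 0) : (Fin 3 → ℝ) × (Fin 3 → ℝ)),
        ((Pi.single 1 1, 0) : (Fin 3 → ℝ) × (Fin 3 → ℝ))] := by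
  have hspan := (inf_eq_right.2 (range_hamiltonMap_sq_le_ker hx)).trans
    (range_hamiltonMap_sq hx hξ0 hξ2)
  have hindep := linearIndependent_pair_single_one_zero (R := ℝ) (M := Fin 3 → ℝ)
    (zero_ne_one (α := Fin 3))
  refine ⟨hamiltonMap_pow_four hx, ?_, hspan.symm, hindep⟩
  rw [hspan]
  exact (Submodule.ne_bot_iff _).2 ⟨_, Submodule.mem_span_of_mem (Set.mem_insert _ _),
    hindep.ne_zero 0⟩

/-- At every point `ρ = (x, ξ)` of `Σ = {x₁ = 0, ξ₀ = ξ₁ = 0, ξ₂ ≠ 0}`, the Hamilton map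
`F = F_p(ρ)` satisfies `F⁴ = 0` (so `F` has no nonzero real eigenvalue), and
`Ker F² ∩ Im F²` contains the span of the coordinate vectors in the `x₀`- and
`x₁`-directions (which is two-dimensional since these vectors are linearly independent);
in particular `Ker F² ∩ Im F² ≠ {0}`, i.e. `p` is of spectral type 2 on `Σ`. -/
theorem hamilton_map_spectral_type_two (x ξ : Fin 3 → ℝ)
    (hx : x 1 = 0) (hξ0 : ξ 0 = 0) (hξ1 : ξ 1 = 0) (hξ2 : ξ 2 ≠ 0) :
    (HamiltonMap (x, ξ)) ^ 4 = 0 ∧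
    LinearMap.ker ((HamiltonMap (x, ξ)) ^ 2) ⊓ LinearMap.range ((HamiltonMap (x, ξ)) ^ 2)
      ≠ ⊥ ∧
    Submodule.span ℝ
        {((Pi.single 0 1, 0) : (Fin 3 → ℝ) × (Fin 3 → ℝ)),
         ((Pi.single 1 1, 0) : (Fin 3 → ℝ) × (Fin 3 → ℝ))}
      ≤ LinearMap.ker ((HamiltonMap (x, ξ)) ^ 2)
          ⊓ LinearMap.range ((HamiltonMap (x, ξ)) ^ 2) ∧
    LinearIndependent ℝ
      ![((Pi.single 0 1, 0) : (Fin 3 → ℝ) × (Fin 3 → ℝ)),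
        ((Pi.single 1 1, 0) : (Fin 3 → ℝ) × (Fin 3 → ℝ))] := by
  obtain ⟨hpow, hne, hspan, hindep⟩ := hamilton_map_spectral_type_two_general x ξ hx hξ0 hξ2
  exact ⟨hpow, hne, hspan.le, hindep⟩
end

section
/- Let ω = e^(2πi/5) and let B > 0. (i) If A ∈ ℂ satisfies 0 < arg A < π, define ζ = e^(−πi/5)·A^(1/6)·(1 + λ^(−5/6)z)·λ^(1/6) for λ > 0 and z ∈ ℂ with |z| ≤ B, where A^(1/6) is the principal sixth root. Then there exist ε > 0 and λ₀ > 0 (depending only on A and B) such that for all λ ≥ λ₀ and all |z| ≤ B one has |arg ζ| < π/4 − ε and Im(ω²ζ⁴) > 0. (ii) If A ∈ ℂ satisfies −π ≤ arg A < −π/2, the same conclusions hold for ζ = e^(2πi/15)·A^(1/6)·(1 + λ^(−5/6)z)·λ^(1/6). -/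
open Real Complex

/-- `ω = e^(2πi/5)`. -/
noncomputable def omega5 : ℂ := Complex.exp (2 * (π : ℂ) * I / 5)

/-!
With `θ = arg ζ`, the number `ω²ζ⁴` has argument `4π/5 + 4θ` modulo `2π`, so `Im (ω²ζ⁴) > 0` on the
open sector `-π/5 < θ < π/20`, where also `|θ| < π/5 = π/4 - π/20`. Taking the principal sixth root
divides the argument of `A` by six, which puts `e^(ic) A^(1/6)` in this sector for both choices of
`c`. The positive factor `λ^(1/6)` does not change arguments and `1 + λ^(-5/6)z → 1` uniformly in
`‖z‖ ≤ B`, so `ζ` stays in the sector once `λ` is large.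
-/

open Filter Set Topology

/-- The open angular sector `a < arg ζ < b` with vertex `0`. The vertex is excluded explicitly
because `arg 0 = 0` by convention. -/
def angularSector (a b : ℝ) : Set ℂ := {ζ | ζ ≠ 0 ∧ ζ.arg ∈ Ioo a b}

theorem isOpen_angularSector {a b : ℝ} (hb : b ≤ π) : IsOpen (angularSector a b) := by
  refine isOpen_iff_mem_nhds.2 fun ζ ⟨hζ, harg⟩ ↦ ?_
  have hslit : ζ ∈ slitPlane := mem_slitPlane_iff_arg.2 ⟨(harg.2.trans_le hb).ne, hζ⟩
  exact (eventually_ne_nhds hζ).and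
    ((continuousAt_arg hslit).eventually (Ioo_mem_nhds harg.1 harg.2))

theorem mul_ofReal_mem_angularSector {a b : ℝ} {ζ : ℂ} (hζ : ζ ∈ angularSector a b) {t : ℝ}
    (ht : 0 < t) : ζ * t ∈ angularSector a b :=
  ⟨mul_ne_zero hζ.1 (ofReal_ne_zero.2 ht.ne'), by simpa only [arg_mul_real ht] using hζ.2⟩

theorem arg_exp_mul_I_mul_cpow {A : ℂ} (hA : A ≠ 0) {c r : ℝ}
    (h : c + r * A.arg ∈ Ioc (-π) π) :
    (Complex.exp (c * I) * A ^ (r : ℂ)).arg = c + r * A.arg := by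
  have him : (c * I + Complex.log A * r).im = c + r * A.arg := by
    simp [Complex.log_im, mul_comm]
  rw [cpow_def_of_ne_zero hA, ← Complex.exp_add, Complex.arg_exp, him, toIocMod_eq_self]
  rwa [show -π + 2 * π = π by ring]

theorem exp_mul_I_mul_cpow_mem_angularSector {A : ℂ} (hA : A ≠ 0) {a b c r : ℝ} (ha : -π ≤ a)
    (hb : b ≤ π) (h : c + r * A.arg ∈ Ioo a b) :
    Complex.exp (c * I) * A ^ (r : ℂ) ∈ angularSector a b := by
  refine ⟨mul_ne_zero (Complex.exp_ne_zero _) (cpow_ne_zero_iff.2 (.inl hA)), ?_⟩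
  rwa [arg_exp_mul_I_mul_cpow hA ⟨ha.trans_lt h.1, h.2.le.trans hb⟩]

theorem eventually_forall_norm_le_add_smul_mem {ι 𝕜 E : Type*} [NormedField 𝕜]
    [NormedAddCommGroup E] [NormedSpace 𝕜 E] {l : Filter ι} {s : ι → 𝕜} (hs : Tendsto s l (𝓝 0))
    {a : E} {U : Set E} (hU : U ∈ 𝓝 a) (B : ℝ) :
    ∀ᶠ i in l, ∀ z : E, ‖z‖ ≤ B → a + s i • z ∈ U := by
  have hbounded : IsBoundedUnder (· ≤ ·) (l ×ˢ 𝓟 {z : E | ‖z‖ ≤ B}) (norm ∘ Prod.snd) :=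
    isBoundedUnder_of_eventually_le (a := B)
      (eventually_prod_principal_iff.2 (.of_forall fun _ _ hz ↦ hz))
  have hsmul : Tendsto (fun p : ι × E ↦ s p.1 • p.2) (l ×ˢ 𝓟 {z | ‖z‖ ≤ B}) (𝓝 0) :=
    (hs.comp tendsto_fst).zero_smul_isBoundedUnder_le hbounded
  have hadd : Tendsto (fun p : ι × E ↦ a + s p.1 • p.2) (l ×ˢ 𝓟 {z | ‖z‖ ≤ B}) (𝓝 a) := by
    simpa only [add_zero] using hsmul.const_add a
  exact eventually_prod_principal_iff.1 (hadd hU)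

theorem eventually_mul_one_add_rpow_mul_rpow_mem_angularSector {a b : ℝ} (hb : b ≤ π) {W : ℂ}
    (hW : W ∈ angularSector a b) {p : ℝ} (hp : 0 < p) (q B : ℝ) :
    ∀ᶠ x : ℝ in atTop, ∀ z : ℂ, ‖z‖ ≤ B →
      W * (1 + ((x ^ (-p) : ℝ) : ℂ) * z) * ((x ^ q : ℝ) : ℂ) ∈ angularSector a b := by
  have hnhds : {u | W * u ∈ angularSector a b} ∈ 𝓝 (1 : ℂ) :=
    ((isOpen_angularSector hb).preimage (continuous_const_mul W)).mem_nhds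
      (by simpa only [mem_preimage, mul_one] using hW)
  filter_upwards [eventually_forall_norm_le_add_smul_mem (tendsto_rpow_neg_atTop hp) hnhds B,
    eventually_gt_atTop 0] with x hmem hx z hz
  exact mul_ofReal_mem_angularSector (hmem z hz) (rpow_pos_of_pos hx q)

theorem im_exp_mul_I_mul_pow (α : ℝ) (n : ℕ) (ζ : ℂ) :
    (Complex.exp (α * I) * ζ ^ n).im = ‖ζ‖ ^ n * Real.sin (α + n * ζ.arg) := by
  have hpolar : Complex.exp (α * I) * ζ ^ n
      = ((‖ζ‖ ^ n : ℝ) : ℂ) * Complex.exp (((α + n * ζ.arg : ℝ) : ℂ) * I) := by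
    nth_rw 1 [← norm_mul_exp_arg_mul_I ζ]
    rw [mul_pow, ← Complex.exp_nat_mul, mul_left_comm, ← Complex.exp_add]
    push_cast
    ring_nf
  rw [hpolar, im_ofReal_mul, exp_ofReal_mul_I_im]

theorem im_omega5_sq_mul_pow_four_pos {ζ : ℂ} (hζ : ζ ∈ angularSector (-(π / 5)) (π / 20)) :
    0 < (omega5 ^ 2 * ζ ^ 4).im := by
  obtain ⟨hne, hlower, hupper⟩ := hζ
  have homega : omega5 ^ 2 = Complex.exp ((4 * π / 5 : ℝ) * I) := by
    rw [omega5, ← Complex.exp_nat_mul]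
    push_cast
    ring_nf
  have hsin : 0 < Real.sin (4 * π / 5 + (4 : ℕ) * ζ.arg) :=
    Real.sin_pos_of_pos_of_lt_pi (by push_cast; linarith) (by push_cast; linarith)
  rw [homega, im_exp_mul_I_mul_pow]
  positivity

theorem abs_arg_lt_of_mem_angularSector {ζ : ℂ}
    (hζ : ζ ∈ angularSector (-(π / 5)) (π / 20)) : |ζ.arg| < π / 4 - π / 20 := by
  obtain ⟨-, hlower, hupper⟩ := hζ
  exact abs_lt.2 ⟨by linarith, by linarith [Real.pi_pos]⟩

theorem zeta_sector_conditions_general (B : ℝ) {A : ℂ} (hA : A ≠ 0) {c : ℝ}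
    (hc : c + A.arg / 6 ∈ Ioo (-(π / 5)) (π / 20)) :
    ∃ lam₀ > (0 : ℝ), ∀ lam : ℝ, lam₀ ≤ lam → ∀ z : ℂ, ‖z‖ ≤ B →
      |(Complex.exp (c * I) * A ^ ((1 : ℂ) / 6)
          * (1 + ((lam ^ ((-5 : ℝ) / 6) : ℝ) : ℂ) * z)
          * ((lam ^ ((1 : ℝ) / 6) : ℝ) : ℂ)).arg| < π / 4 - π / 20 ∧
      0 < (omega5 ^ 2 * (Complex.exp (c * I) * A ^ ((1 : ℂ) / 6)
          * (1 + ((lam ^ ((-5 : ℝ) / 6) : ℝ) : ℂ) * z)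
          * ((lam ^ ((1 : ℝ) / 6) : ℝ) : ℂ)) ^ 4).im := by
  have hpi := Real.pi_pos
  have hW : Complex.exp (c * I) * A ^ ((1 : ℂ) / 6) ∈ angularSector (-(π / 5)) (π / 20) := by
    simpa using exp_mul_I_mul_cpow_mem_angularSector hA (r := 1 / 6) (by linarith) (by linarith)
      (by rwa [one_div_mul_eq_div])
  have hmem := eventually_mul_one_add_rpow_mul_rpow_mem_angularSector (by linarith) hW
    (p := 5 / 6) (by norm_num) (1 / 6) B
  obtain ⟨lam₀, hlam₀⟩ := eventually_atTop.1 (hmem.and (eventually_gt_atTop 0))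
  refine ⟨lam₀, (hlam₀ lam₀ le_rfl).2, fun lam hlam z hz ↦ ?_⟩
  have hζ := (hlam₀ lam hlam).1 z hz
  rw [← neg_div 6 (5 : ℝ)] at hζ
  exact ⟨abs_arg_lt_of_mem_angularSector hζ, im_omega5_sq_mul_pow_four_pos hζ⟩

/-- For `ζ(λ, z) = e^(−πi/5)A^(1/6)(1 + λ^(−5/6)z)λ^(1/6)` (when `0 < arg A < π`), resp.
`ζ(λ, z) = e^(2πi/15)A^(1/6)(1 + λ^(−5/6)z)λ^(1/6)` (when `−π ≤ arg A < −π/2`), there are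
`ε > 0` and `λ₀ > 0`, depending only on `A` and `B`, such that `|arg ζ| < π/4 − ε` and
`Im(ω²ζ⁴) > 0` for all `λ ≥ λ₀` and `|z| ≤ B`. -/
theorem zeta_sector_conditions (B : ℝ) (hB : 0 < B) :
    (∀ A : ℂ, 0 < A.arg → A.arg < π →
      ∃ ε > (0:ℝ), ∃ lam₀ > (0:ℝ), ∀ lam : ℝ, lam₀ ≤ lam → ∀ z : ℂ, ‖z‖ ≤ B →
        |(Complex.exp (-(π : ℂ) * I / 5) * A ^ ((1 : ℂ) / 6)
            * (1 + ((lam ^ ((-5 : ℝ) / 6) : ℝ) : ℂ) * z)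
            * ((lam ^ ((1 : ℝ) / 6) : ℝ) : ℂ)).arg| < π / 4 - ε ∧
        0 < (omega5 ^ 2 * (Complex.exp (-(π : ℂ) * I / 5) * A ^ ((1 : ℂ) / 6)
            * (1 + ((lam ^ ((-5 : ℝ) / 6) : ℝ) : ℂ) * z)
            * ((lam ^ ((1 : ℝ) / 6) : ℝ) : ℂ)) ^ 4).im) ∧
    (∀ A : ℂ, -π ≤ A.arg → A.arg < -(π / 2) →
      ∃ ε > (0:ℝ), ∃ lam₀ > (0:ℝ), ∀ lam : ℝ, lam₀ ≤ lam → ∀ z : ℂ, ‖z‖ ≤ B →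
        |(Complex.exp (2 * (π : ℂ) * I / 15) * A ^ ((1 : ℂ) / 6)
            * (1 + ((lam ^ ((-5 : ℝ) / 6) : ℝ) : ℂ) * z)
            * ((lam ^ ((1 : ℝ) / 6) : ℝ) : ℂ)).arg| < π / 4 - ε ∧
        0 < (omega5 ^ 2 * (Complex.exp (2 * (π : ℂ) * I / 15) * A ^ ((1 : ℂ) / 6)
            * (1 + ((lam ^ ((-5 : ℝ) / 6) : ℝ) : ℂ) * z)
            * ((lam ^ ((1 : ℝ) / 6) : ℝ) : ℂ)) ^ 4).im) := by
  have hpi := Real.pi_pos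
  refine ⟨fun A hpos _ ↦ ⟨π / 20, by positivity, ?_⟩, fun A _ hlt ↦ ⟨π / 20, by positivity, ?_⟩⟩
  · have hA : A ≠ 0 := by rintro rfl; simp at hpos
    simpa [div_mul_eq_mul_div] using zeta_sector_conditions_general B hA (c := -π / 5)
      ⟨by linarith, by linarith [A.arg_le_pi]⟩
  · have hA : A ≠ 0 := by rintro rfl; rw [arg_zero] at hlt; linarith
    simpa [div_mul_eq_mul_div] using zeta_sector_conditions_general B hA (c := 2 * π / 15)
      ⟨by linarith [A.neg_pi_lt_arg], by linarith⟩
end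

section
/- Let M > 0. There exist constants c > 0, C > 0, ℓ₁ > 0, ℓ₂ > 0, depending only on M, with the following property: for all a, b ∈ ℂ with |a| ≤ M and |b| ≤ M, all λ ≥ 1, and every smooth function y : ℝ → ℂ satisfying y''(x) = (x³ + a·λ^(2/3)·x + b·λ)·y(x) for all x ∈ ℝ, one has, for every T > 0, every integer k ≥ 0, and every x with |x| ≤ T: |y^(k)(x)| ≤ C^(k+1)·(k + λ^(1/3) + |x|)^(3k/2)·λ^(ℓ₁)·(1 + T)^(ℓ₂)·exp(c·λ^(5/6)·(1 + λ^(−1/3)·T)^(5/2))·(|y(T)| + |y'(T)|). -/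
open Real

/-!
The system for `(κ y, y')` has growth rate at most `κ` wherever the potential is bounded by `κ²`, so
Grönwall's inequality carries the data at `T` to every `x ∈ [-T, T]`. Higher derivatives follow from
Leibniz' rule `y^(j+2) = ∑ᵢ (j choose i) P^(i) y^(j-i)`. The point is that for the monomial `P = zᵐ`
the weighted sum `∑ᵢ (j choose i) ‖P^(i)(z)‖` is at most `(j + ‖z‖)ᵐ`, by the binomial theorem and
`(j choose i) (m)ᵢ = (j)ᵢ (m choose i)`. Hence a degree `d` potential whose coefficients scale like
`μ^(d-m)` makes each pair of derivatives cost one factor `(j + μ + ‖z‖)ᵈ`.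
-/

namespace AiryType

open Finset Polynomial Set
open scoped ContDiff

section PolynomialBounds

lemma sum_choose_mul_descFactorial_mul_pow_le (m j : ℕ) {r : ℝ} (hr : 0 ≤ r) :
    ∑ i ∈ range (j + 1), (j.choose i : ℝ) * (m.descFactorial i * r ^ (m - i)) ≤ (j + r) ^ m := by
  have choose_swap (i : ℕ) :
      j.choose i * m.descFactorial i = j.descFactorial i * m.choose i := by
    simp only [Nat.descFactorial_eq_factorial_mul_choose]
    ring
  calc ∑ i ∈ range (j + 1), (j.choose i : ℝ) * (m.descFactorial i * r ^ (m - i))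
      = ∑ i ∈ range (j + 1), (j.descFactorial i : ℝ) * r ^ (m - i) * m.choose i := by
        refine sum_congr rfl fun i _ ↦ ?_
        have := congrArg (Nat.cast (R := ℝ)) (choose_swap i)
        push_cast at this
        linear_combination r ^ (m - i) * this
    _ ≤ ∑ i ∈ range (j + 1), (j : ℝ) ^ i * r ^ (m - i) * m.choose i := by
        gcongr with i
        exact_mod_cast Nat.descFactorial_le_pow j i
    _ ≤ ∑ i ∈ range (max j m + 1), (j : ℝ) ^ i * r ^ (m - i) * m.choose i := by
        refine sum_le_sum_of_subset_of_nonneg (range_mono (by omega)) fun i _ _ ↦ by positivity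
    _ = ∑ i ∈ range (m + 1), (j : ℝ) ^ i * r ^ (m - i) * m.choose i := by
        refine (sum_subset (range_mono (by omega)) fun i _ hi ↦ ?_).symm
        rw [Nat.choose_eq_zero_of_lt (by simpa using hi), Nat.cast_zero, mul_zero]
    _ = (j + r) ^ m := (add_pow _ _ _).symm

variable {𝕜 : Type*} [NormedField 𝕜] {p : 𝕜[X]} {d : ℕ}

lemma norm_eval_iterate_derivative_le (hdeg : p.natDegree ≤ d) (i : ℕ) (z : 𝕜) :
    ‖(derivative^[i] p).eval z‖ ≤
      ∑ m ∈ range (d + 1), ‖p.coeff m‖ * (m.descFactorial i * ‖z‖ ^ (m - i)) := by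
  conv_lhs =>
    rw [p.as_sum_range_C_mul_X_pow' (Nat.lt_succ_of_le hdeg), iterate_derivative_sum,
      eval_finsetSum]
  refine norm_sum_le_of_le _ fun m _ ↦ ?_
  rw [iterate_derivative_C_mul, iterate_derivative_X_pow_eq_natCast_mul]
  simp only [eval_mul, eval_C, eval_natCast, eval_pow, eval_X, norm_mul, norm_pow]
  gcongr
  simpa using Nat.norm_cast_le (α := 𝕜) (m.descFactorial i)

lemma sum_norm_coeff_mul_pow_le {K μ r : ℝ} (hμ : 0 ≤ μ) (hr : 0 ≤ r)
    (hcoeff : ∀ m ≤ d, ‖p.coeff m‖ ≤ K * μ ^ (d - m)) :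
    ∑ m ∈ range (d + 1), ‖p.coeff m‖ * r ^ m ≤ K * (μ + r) ^ d := by
  have hK : 0 ≤ K := by simpa using (norm_nonneg _).trans (hcoeff d le_rfl)
  calc ∑ m ∈ range (d + 1), ‖p.coeff m‖ * r ^ m
      ≤ ∑ m ∈ range (d + 1), K * (r ^ m * μ ^ (d - m) * d.choose m) := by
        refine sum_le_sum fun m hm ↦ ?_
        have hmd : m ≤ d := Nat.lt_succ_iff.mp (mem_range.mp hm)
        have hchoose : (1 : ℝ) ≤ d.choose m := by exact_mod_cast Nat.choose_pos hmd
        calc ‖p.coeff m‖ * r ^ m ≤ K * μ ^ (d - m) * r ^ m := by gcongr; exact hcoeff m hmd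
          _ ≤ K * μ ^ (d - m) * r ^ m * d.choose m := le_mul_of_one_le_right (by positivity) hchoose
          _ = K * (r ^ m * μ ^ (d - m) * d.choose m) := by ring
    _ = K * (μ + r) ^ d := by rw [← mul_sum, ← add_pow, add_comm]

lemma sum_choose_mul_norm_eval_iterate_derivative_le {K μ : ℝ} (hμ : 0 ≤ μ)
    (hdeg : p.natDegree ≤ d) (hcoeff : ∀ m ≤ d, ‖p.coeff m‖ ≤ K * μ ^ (d - m)) (j : ℕ) (z : 𝕜) :
    ∑ i ∈ range (j + 1), j.choose i * ‖(derivative^[i] p).eval z‖ ≤ K * (μ + (j + ‖z‖)) ^ d :=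
  calc ∑ i ∈ range (j + 1), j.choose i * ‖(derivative^[i] p).eval z‖
      ≤ ∑ i ∈ range (j + 1), (j.choose i : ℝ) *
          ∑ m ∈ range (d + 1), ‖p.coeff m‖ * (m.descFactorial i * ‖z‖ ^ (m - i)) := by
        gcongr with i
        exact norm_eval_iterate_derivative_le hdeg i z
    _ = ∑ m ∈ range (d + 1), ‖p.coeff m‖ *
          ∑ i ∈ range (j + 1), (j.choose i : ℝ) * (m.descFactorial i * ‖z‖ ^ (m - i)) := by
        simp only [mul_sum]
        rw [sum_comm]
        simp only [mul_left_comm]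
    _ ≤ ∑ m ∈ range (d + 1), ‖p.coeff m‖ * (j + ‖z‖) ^ m := by
        gcongr with m
        exact sum_choose_mul_descFactorial_mul_pow_le m j (norm_nonneg z)
    _ ≤ K * (μ + (j + ‖z‖)) ^ d := sum_norm_coeff_mul_pow_le hμ (by positivity) hcoeff

end PolynomialBounds

section RealRestriction

lemma iteratedDeriv_eval_ofReal (p : ℂ[X]) (n : ℕ) :
    iteratedDeriv n (fun x : ℝ ↦ p.eval (x : ℂ)) = fun x : ℝ ↦ (derivative^[n] p).eval (x : ℂ) := by
  induction n with
  | zero => simp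
  | succ n ih =>
    ext x
    rw [iteratedDeriv_succ, ih, Function.iterate_succ_apply']
    exact ((derivative^[n] p).hasDerivAt (x : ℂ)).comp_ofReal.deriv

lemma contDiff_eval_ofReal (p : ℂ[X]) {n : ℕ∞ω} :
    ContDiff ℝ n fun x : ℝ ↦ p.eval (x : ℂ) := by
  simp only [eval_eq_sum_range]
  exact ContDiff.sum fun i _ ↦ contDiff_const.mul (Complex.ofRealCLM.contDiff.pow i)

end RealRestriction

section SecondOrderEquation

variable {𝕜 E : Type*} [NormedField 𝕜] [NormedAddCommGroup E] [NormedSpace ℝ E] [NormedSpace 𝕜 E]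
  {P : ℝ → 𝕜}

/-- The weight `κ` balances the system `u' = v`, `v' = P u`: both components grow at rate `κ`. -/
lemma max_norm_le_mul_exp {u v : ℝ → E} {κ a b : ℝ} (hκ : 0 ≤ κ)
    (hu : ∀ t ∈ Icc a b, HasDerivAt u (v t) t) (hv : ∀ t ∈ Icc a b, HasDerivAt v (P t • u t) t)
    (hP : ∀ t ∈ Icc a b, ‖P t‖ ≤ κ ^ 2) {t : ℝ} (ht : t ∈ Icc a b) :
    max (κ * ‖u t‖) ‖v t‖ ≤ max (κ * ‖u a‖) ‖v a‖ * exp (κ * (t - a)) := by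
  let w : ℝ → E × E := fun t ↦ (κ • u t, v t)
  have norm_w (t : ℝ) : ‖w t‖ = max (κ * ‖u t‖) ‖v t‖ := by
    simp only [w, Prod.norm_def, norm_smul, norm_of_nonneg hκ]
  have hw (t : ℝ) (ht : t ∈ Icc a b) : HasDerivAt w (κ • v t, P t • u t) t :=
    ((hu t ht).const_smul κ).prodMk (hv t ht)
  have growth (t : ℝ) (ht : t ∈ Icc a b) : ‖(κ • v t, P t • u t)‖ ≤ κ * ‖w t‖ + 0 := by
    rw [add_zero, norm_w, Prod.norm_def, mul_max_of_nonneg _ _ hκ, max_comm]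
    simp only [norm_smul, norm_of_nonneg hκ]
    gcongr ?_ ⊔ _
    calc ‖P t‖ * ‖u t‖ ≤ κ ^ 2 * ‖u t‖ := by gcongr; exact hP t ht
      _ = κ * (κ * ‖u t‖) := by ring
  have gronwall := norm_le_gronwallBound_of_norm_deriv_right_le
    (fun t ht ↦ (hw t ht).continuousAt.continuousWithinAt)
    (fun t ht ↦ (hw t (Ico_subset_Icc_self ht)).hasDerivWithinAt) le_rfl
    (fun t ht ↦ growth t (Ico_subset_Icc_self ht)) t ht
  simpa only [gronwallBound_ε0, norm_w] using gronwall

variable {y : ℝ → E} (hy : Differentiable ℝ y) (hdy : Differentiable ℝ (deriv y))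
  (hode : deriv (deriv y) = P • y)
include hy hdy hode

lemma max_norm_le_mul_exp_of_right {κ T x : ℝ} (hκ : 0 ≤ κ) (hxT : x ≤ T)
    (hP : ∀ t ∈ Icc x T, ‖P t‖ ≤ κ ^ 2) :
    max (κ * ‖y x‖) ‖deriv y x‖ ≤ max (κ * ‖y T‖) ‖deriv y T‖ * exp (κ * (T - x)) := by
  have reflect {z : ℝ → E} (hz : Differentiable ℝ z) (t : ℝ) :
      HasDerivAt (fun s ↦ z (T - s)) (-deriv z (T - t)) t := by
    simpa using (hz (T - t)).hasDerivAt.comp_const_sub T t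
  have hv (t : ℝ) : HasDerivAt (fun s ↦ -deriv y (T - s)) (P (T - t) • y (T - t)) t := by
    simpa only [hode, Pi.smul_apply', neg_neg] using (reflect hdy t).fun_neg
  have hP' : ∀ t ∈ Icc 0 (T - x), ‖P (T - t)‖ ≤ κ ^ 2 := fun t ht ↦
    hP (T - t) ⟨by linarith [ht.2], by linarith [ht.1]⟩
  have hend : T - x ∈ Icc 0 (T - x) := ⟨by linarith, le_rfl⟩
  simpa using max_norm_le_mul_exp hκ (fun t _ ↦ reflect hy t) (fun t _ ↦ hv t) hP' hend

variable [NormedAlgebra ℝ 𝕜] [IsScalarTower ℝ 𝕜 E] (hPsmooth : ContDiff ℝ ∞ P)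
include hPsmooth

lemma contDiff_infty_of_deriv_deriv_eq_smul : ContDiff ℝ ∞ y := by
  suffices h : ∀ n : ℕ, ContDiff ℝ n y ∧ ContDiff ℝ n (deriv y) from
    contDiff_infty.mpr fun n ↦ (h n).1
  intro n
  induction n with
  | zero => exact ⟨contDiff_zero.mpr hy.continuous, contDiff_zero.mpr hdy.continuous⟩
  | succ n ih =>
    have hdd : ContDiff ℝ n (deriv (deriv y)) := hode ▸ (contDiff_infty.mp hPsmooth n).smul ih.1
    exact ⟨contDiff_succ_iff_deriv.mpr ⟨hy, by simp, ih.2⟩,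
      contDiff_succ_iff_deriv.mpr ⟨hdy, by simp, hdd⟩⟩

lemma norm_iteratedDeriv_le_pow_mul {x q G : ℝ} {n : ℕ} (hq : 1 ≤ q)
    (hPq : ∀ j, j + 2 ≤ n → ∑ i ∈ range (j + 1), j.choose i * ‖iteratedDeriv i P x‖ ≤ q ^ 2)
    (h₀ : ‖y x‖ ≤ G) (h₁ : ‖deriv y x‖ ≤ G) {j : ℕ} (hj : j ≤ n) :
    ‖iteratedDeriv j y x‖ ≤ q ^ j * G := by
  have hG : 0 ≤ G := (norm_nonneg _).trans h₀
  induction j using Nat.strong_induction_on with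
  | _ j ih =>
    match j with
    | 0 => simpa using h₀
    | 1 => simpa [iteratedDeriv_one] using h₁.trans (le_mul_of_one_le_left hG hq)
    | j + 2 =>
      have leibniz : iteratedDeriv (j + 2) y x = ∑ i ∈ range (j + 1),
          j.choose i • iteratedDeriv i P x • iteratedDeriv (j - i) y x := by
        rw [iteratedDeriv_succ', iteratedDeriv_succ', hode]
        have hysmooth := contDiff_infty_of_deriv_deriv_eq_smul hy hdy hode hPsmooth
        simpa only [iteratedDerivWithin_univ] using
          iteratedDerivWithin_smul (mem_univ x) uniqueDiffOn_univ
            (contDiff_infty.mp hPsmooth j).contDiffWithinAt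
            (contDiff_infty.mp hysmooth j).contDiffWithinAt
      have lower (i : ℕ) : ‖iteratedDeriv (j - i) y x‖ ≤ q ^ j * G :=
        (ih (j - i) (by omega) (by omega)).trans (by gcongr; exact Nat.sub_le j i)
      calc ‖iteratedDeriv (j + 2) y x‖
          ≤ ∑ i ∈ range (j + 1), j.choose i * ‖iteratedDeriv i P x‖ * (q ^ j * G) := by
            rw [leibniz]
            refine norm_sum_le_of_le _ fun i _ ↦ ?_
            simp only [← Nat.cast_smul_eq_nsmul ℝ, norm_smul, RCLike.norm_natCast, mul_assoc]
            gcongr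
            exact lower i
        _ = (∑ i ∈ range (j + 1), j.choose i * ‖iteratedDeriv i P x‖) * (q ^ j * G) :=
            (sum_mul ..).symm
        _ ≤ q ^ 2 * (q ^ j * G) := by gcongr; exact hPq j hj
        _ = q ^ (j + 2) * G := by ring

end SecondOrderEquation

section PolynomialPotential

lemma rpow_half_natCast_sq (d : ℕ) {r : ℝ} (hr : 0 ≤ r) : (r ^ ((d : ℝ) / 2)) ^ 2 = r ^ d := by
  rw [← rpow_natCast, ← rpow_mul hr, Nat.cast_ofNat, div_mul_cancel₀ _ two_ne_zero, rpow_natCast]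

lemma le_sq_mul_rpow_half_natCast (d : ℕ) {K r : ℝ} (hK : 1 ≤ K) (hr : 0 ≤ r) :
    K * r ^ d ≤ (K * r ^ ((d : ℝ) / 2)) ^ 2 := by
  rw [mul_pow, rpow_half_natCast_sq d hr]
  gcongr
  exact le_self_pow₀ hK two_ne_zero

lemma mul_exp_mul_le_exp_two_mul {κ L S : ℝ} (hκ : 0 ≤ κ) (hL : 1 + L ≤ 2 * S) :
    κ * exp (κ * L) ≤ exp (2 * κ * S) :=
  calc κ * exp (κ * L) ≤ exp κ * exp (κ * L) := by
        gcongr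
        linarith [add_one_le_exp κ]
    _ = exp (κ * (1 + L)) := by rw [← exp_add, mul_one_add]
    _ ≤ exp (κ * (2 * S)) := by gcongr
    _ = exp (2 * κ * S) := by ring_nf

variable {E : Type*} [NormedAddCommGroup E] [NormedSpace ℂ E] {p : ℂ[X]} {d : ℕ} {K μ : ℝ}
  {y : ℝ → E}

lemma max_norm_le_exp_rpow_mul (hK : 1 ≤ K) (hμ : 1 ≤ μ) (hdeg : p.natDegree ≤ d)
    (hcoeff : ∀ m ≤ d, ‖p.coeff m‖ ≤ K * μ ^ (d - m))
    (hy : Differentiable ℝ y) (hdy : Differentiable ℝ (deriv y))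
    (hode : ∀ x : ℝ, deriv (deriv y) x = p.eval (x : ℂ) • y x) {T x : ℝ} (hx : |x| ≤ T) :
    max ‖y x‖ ‖deriv y x‖ ≤
      exp (2 * K * (μ + T) ^ ((d : ℝ) / 2 + 1)) * (‖y T‖ + ‖deriv y T‖) := by
  obtain ⟨hTx, hxT⟩ := abs_le.mp hx
  have hS : 1 ≤ μ + T := by linarith [abs_nonneg x]
  set κ := K * (μ + T) ^ ((d : ℝ) / 2) with hκ_def
  have hκ : 1 ≤ κ := one_le_mul_of_one_le_of_one_le hK (one_le_rpow hS (by positivity))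
  have hP : ∀ t ∈ Icc x T, ‖p.eval (t : ℂ)‖ ≤ κ ^ 2 := fun t ht ↦
    calc ‖p.eval (t : ℂ)‖ ≤ K * (μ + |t|) ^ d := by
          simpa using
            sum_choose_mul_norm_eval_iterate_derivative_le (by linarith) hdeg hcoeff 0 (t : ℂ)
      _ ≤ K * (μ + T) ^ d := by
          gcongr
          exact abs_le.mpr ⟨by linarith [ht.1], ht.2⟩
      _ ≤ κ ^ 2 := le_sq_mul_rpow_half_natCast d hK (by linarith)
  calc max ‖y x‖ ‖deriv y x‖ ≤ max (κ * ‖y x‖) ‖deriv y x‖ := by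
        gcongr
        exact le_mul_of_one_le_left (norm_nonneg _) hκ
    _ ≤ max (κ * ‖y T‖) ‖deriv y T‖ * exp (κ * (T - x)) :=
        max_norm_le_mul_exp_of_right hy hdy (funext hode) (by linarith) hxT hP
    _ ≤ κ * (‖y T‖ + ‖deriv y T‖) * exp (κ * (T - x)) := by
        gcongr
        refine max_le ?_ ?_ <;> nlinarith [norm_nonneg (y T), norm_nonneg (deriv y T)]
    _ = κ * exp (κ * (T - x)) * (‖y T‖ + ‖deriv y T‖) := by ring
    _ ≤ exp (2 * κ * (μ + T)) * (‖y T‖ + ‖deriv y T‖) := by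
        gcongr
        exact mul_exp_mul_le_exp_two_mul (by linarith) (by linarith)
    _ = _ := by rw [rpow_add_one (by linarith), hκ_def]; ring_nf

end PolynomialPotential

section AiryCubic

/-- The potential `z³ + a λ^(2/3) z + b λ` in terms of `μ = λ^(1/3)`, the variable in which its
coefficients are homogeneous. -/
noncomputable def airyCubic (a b : ℂ) (μ : ℝ) : Cubic ℂ := ⟨1, 0, a * μ ^ 2, b * μ ^ 3⟩

lemma norm_coeff_airyCubic_le {a b : ℂ} {M μ : ℝ} (ha : ‖a‖ ≤ M) (hb : ‖b‖ ≤ M) (hμ : 0 ≤ μ) :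
    ∀ m ≤ 3, ‖(airyCubic a b μ).toPoly.coeff m‖ ≤ (1 + M) * μ ^ (3 - m) := by
  have hM : 0 ≤ M := (norm_nonneg a).trans ha
  intro m hm
  interval_cases m <;>
    simp only [airyCubic, Cubic.coeff_eq_a, Cubic.coeff_eq_b, Cubic.coeff_eq_c, Cubic.coeff_eq_d,
      norm_mul, norm_pow, norm_one, norm_zero, Complex.norm_real, norm_of_nonneg hμ]
  · gcongr
    linarith
  · gcongr
    linarith
  · positivity
  · simpa using hM

lemma eval_airyCubic_rpow (a b : ℂ) {lam : ℝ} (hlam : 0 ≤ lam) (z : ℂ) :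
    (airyCubic a b (lam ^ ((1 : ℝ) / 3))).toPoly.eval z =
      z ^ 3 + a * ((lam ^ ((2 : ℝ) / 3) : ℝ) : ℂ) * z + b * (lam : ℂ) := by
  have hsq : (lam ^ ((1 : ℝ) / 3)) ^ 2 = lam ^ ((2 : ℝ) / 3) := by
    rw [← rpow_mul_natCast hlam]
    norm_num
  have hcube : (lam ^ ((1 : ℝ) / 3)) ^ 3 = lam := by
    rw [← rpow_mul_natCast hlam]
    norm_num
  simp only [airyCubic, Cubic.toPoly, ← Complex.ofReal_pow, hsq, hcube]
  simp

lemma rpow_mul_one_add_rpow_mul {lam T : ℝ} (hlam : 0 < lam) (hT : 0 ≤ T) :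
    lam ^ ((5 : ℝ) / 6) * (1 + lam ^ ((-1 : ℝ) / 3) * T) ^ ((5 : ℝ) / 2) =
      (lam ^ ((1 : ℝ) / 3) + T) ^ ((5 : ℝ) / 2) := by
  have h₅ : lam ^ ((5 : ℝ) / 6) = (lam ^ ((1 : ℝ) / 3)) ^ ((5 : ℝ) / 2) := by
    rw [← rpow_mul hlam.le]
    norm_num
  have h₁ : lam ^ ((1 : ℝ) / 3) * lam ^ ((-1 : ℝ) / 3) = 1 := by
    rw [← rpow_add hlam]
    norm_num
  rw [h₅, ← mul_rpow (by positivity) (by positivity), mul_add, mul_one, ← mul_assoc, h₁, one_mul]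

end AiryCubic

end AiryType

open AiryType

theorem derivative_estimates_airy_type_general {E : Type*} [NormedAddCommGroup E] [NormedSpace ℂ E]
    {p : Polynomial ℂ} {d : ℕ} {K μ : ℝ} (hK : 1 ≤ K) (hμ : 1 ≤ μ) (hdeg : p.natDegree ≤ d)
    (hcoeff : ∀ m ≤ d, ‖p.coeff m‖ ≤ K * μ ^ (d - m)) {y : ℝ → E} (hy : Differentiable ℝ y)
    (hdy : Differentiable ℝ (deriv y))
    (hode : ∀ x : ℝ, deriv (deriv y) x = p.eval (x : ℂ) • y x) {T x : ℝ} (hx : |x| ≤ T) (k : ℕ) :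
    ‖iteratedDeriv k y x‖ ≤
      K ^ k * (k + μ + |x|) ^ (d * (k : ℝ) / 2)
        * exp (2 * K * (μ + T) ^ ((d : ℝ) / 2 + 1)) * (‖y T‖ + ‖deriv y T‖) := by
  have hN : 1 ≤ k + μ + |x| := by linarith [abs_nonneg x, k.cast_nonneg (α := ℝ)]
  set q := K * (k + μ + |x|) ^ ((d : ℝ) / 2) with hq_def
  have hq : 1 ≤ q := one_le_mul_of_one_le_of_one_le hK (one_le_rpow hN (by positivity))
  have hPq (j : ℕ) (hj : j + 2 ≤ k) : ∑ i ∈ Finset.range (j + 1),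
      j.choose i * ‖iteratedDeriv i (fun x : ℝ ↦ p.eval (x : ℂ)) x‖ ≤ q ^ 2 := by
    have hjk : (j : ℝ) ≤ k := by exact_mod_cast (by omega : j ≤ k)
    simp only [iteratedDeriv_eval_ofReal]
    calc _ ≤ K * (μ + (j + ‖(x : ℂ)‖)) ^ d :=
          sum_choose_mul_norm_eval_iterate_derivative_le (by linarith) hdeg hcoeff j x
      _ ≤ K * (k + μ + |x|) ^ d := by
          rw [Complex.norm_real, norm_eq_abs]
          gcongr ?_ * ?_ ^ _
          linarith
      _ ≤ q ^ 2 := le_sq_mul_rpow_half_natCast d hK (by linarith)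
  obtain ⟨h₀, h₁⟩ := max_le_iff.mp (max_norm_le_exp_rpow_mul hK hμ hdeg hcoeff hy hdy hode hx)
  have hpow : (k + μ + |x|) ^ (d * (k : ℝ) / 2) = ((k + μ + |x|) ^ ((d : ℝ) / 2)) ^ k := by
    rw [← rpow_mul_natCast (by linarith), div_mul_eq_mul_div]
  calc ‖iteratedDeriv k y x‖ ≤ q ^ k * _ :=
        norm_iteratedDeriv_le_pow_mul hy hdy (funext hode) (contDiff_eval_ofReal p) hq hPq h₀ h₁
          le_rfl
    _ = _ := by rw [hpow, hq_def, mul_pow, mul_assoc _ (exp _)]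

/-- A priori derivative estimates for solutions of `y'' = (x³ + aλ^(2/3)x + bλ)y`:
for every `M > 0` there are `c, C, ℓ₁, ℓ₂ > 0` depending only on `M` such that for
`|a|, |b| ≤ M`, `λ ≥ 1`, every smooth solution `y` and every `T > 0`, `k ∈ ℕ`, `|x| ≤ T`:
`|y^(k)(x)| ≤ C^(k+1)(k + λ^(1/3) + |x|)^(3k/2) λ^(ℓ₁)(1+T)^(ℓ₂)
   exp(cλ^(5/6)(1 + λ^(−1/3)T)^(5/2))(|y(T)| + |y'(T)|)`. -/
theorem derivative_estimates_airy_type (M : ℝ) (hM : 0 < M) :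
    ∃ c > (0:ℝ), ∃ C > (0:ℝ), ∃ l₁ > (0:ℝ), ∃ l₂ > (0:ℝ),
      ∀ a b : ℂ, ‖a‖ ≤ M → ‖b‖ ≤ M → ∀ lam : ℝ, 1 ≤ lam →
        ∀ y : ℝ → ℂ, ContDiff ℝ (⊤ : ℕ∞) y →
          (∀ x : ℝ, deriv (deriv y) x =
            ((x : ℂ) ^ 3 + a * ((lam ^ ((2 : ℝ) / 3) : ℝ) : ℂ) * (x : ℂ)
              + b * (lam : ℂ)) * y x) →
          ∀ T : ℝ, 0 < T → ∀ k : ℕ, ∀ x : ℝ, |x| ≤ T →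
            ‖iteratedDeriv k y x‖ ≤
              C ^ (k + 1) * ((k : ℝ) + lam ^ ((1 : ℝ) / 3) + |x|) ^ (3 * (k : ℝ) / 2)
                * lam ^ l₁ * (1 + T) ^ l₂
                * Real.exp (c * lam ^ ((5 : ℝ) / 6)
                    * (1 + lam ^ ((-1 : ℝ) / 3) * T) ^ ((5 : ℝ) / 2))
                * (‖y T‖ + ‖deriv y T‖) := by
  refine ⟨2 * (1 + M), by positivity, 1 + M, by positivity, 1, one_pos, 1, one_pos, ?_⟩
  intro a b ha hb lam hlam y hy hode T hT k x hx
  have hμ : 1 ≤ lam ^ ((1 : ℝ) / 3) := one_le_rpow hlam (by norm_num)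
  have hode' (t : ℝ) : deriv (deriv y) t =
      (airyCubic a b (lam ^ ((1 : ℝ) / 3))).toPoly.eval (t : ℂ) • y t := by
    rw [hode, eval_airyCubic_rpow a b (by positivity), smul_eq_mul]
  have bound := derivative_estimates_airy_type_general (by linarith) hμ
    (Cubic.natDegree_of_a_ne_zero' one_ne_zero).le
    (norm_coeff_airyCubic_le ha hb (by positivity)) (hy.differentiable (by simp))
    ((contDiff_infty_iff_deriv.mp hy).2.differentiable (by simp)) hode' hx k
  rw [Nat.cast_ofNat, show (3 : ℝ) / 2 + 1 = 5 / 2 by norm_num] at bound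
  rw [mul_assoc (2 * (1 + M)), rpow_mul_one_add_rpow_mul (by positivity) hT.le, rpow_one, rpow_one]
  have hfactor : 1 ≤ (1 + M) * (lam * (1 + T)) :=
    one_le_mul_of_one_le_of_one_le (by linarith)
      (one_le_mul_of_one_le_of_one_le hlam (by linarith))
  exact (bound.trans (le_mul_of_one_le_right (by positivity) hfactor)).trans_eq (by ring)
end

section
/- Fix b₀, b₁, b₂ ∈ ℂ, s > 1 and h > 0, and set P = P_mod + b₀D₀ + b₁D₁ + b₂D₂. Assume the Cauchy problem for P is locally solvable in γ^(s) at the origin. Then there exists δ > 0 such that for every 0 < ε₁ < δ and every pair (u₀, u₁) with u₀, u₁ ∈ γ₀^(s,h)({|x'| ≤ ε₁}), there is a unique solution u ∈ C²(D_δ) of Pu = 0 in D_δ with D₀ʲu(0, x') = u_j(x') for j = 0, 1, and moreover for every compact set L ⊂ D_δ there exists C > 0, independent of the data (u₀, u₁), such that the C²-norm of u on L satisfies |u|_{C²(L)} ≤ C·Σ_{j=0}^{1} sup_{α, x'} |∂^α u_j(x')| / (h^|α|·(|α|!)^s). -/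
open Complex

/-- Iterated partial derivative in direction `j`. -/
noncomputable def pdIter {n : ℕ} (j : Fin n) (k : ℕ) (f : (Fin n → ℝ) → ℂ) :
    (Fin n → ℝ) → ℂ :=
  (pd j)^[k] f

/-- The multi-index partial derivative `∂^α f` on `ℝ²`. -/
noncomputable def pdMulti (α : Fin 2 → ℕ) (f : (Fin 2 → ℝ) → ℂ) : (Fin 2 → ℝ) → ℂ :=
  pdIter 0 (α 0) (pdIter 1 (α 1) f)

/-- The Gevrey class `γ^(s)(ℝ²)`. -/
def GevreyClass (s : ℝ) (f : (Fin 2 → ℝ) → ℂ) : Prop :=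
  ContDiff ℝ (⊤ : ℕ∞) f ∧ ∀ K : Set (Fin 2 → ℝ), IsCompact K →
    ∃ C > (0:ℝ), ∃ h > (0:ℝ), ∀ x ∈ K, ∀ α : Fin 2 → ℕ,
      ‖pdMulti α f x‖ ≤ C * h ^ (α 0 + α 1) * (Nat.factorial (α 0 + α 1) : ℝ) ^ s

/-- `u` is a `C²` solution of the Cauchy problem for the operator `P` on `U` with
Cauchy data `(u₀, u₁)` on `U ∩ {x₀ = 0}` (recall `D₀ = -i ∂₀`). -/
def IsCauchySolution (P : ((Fin 3 → ℝ) → ℂ) → (Fin 3 → ℝ) → ℂ) (U : Set (Fin 3 → ℝ))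
    (u₀ u₁ : (Fin 2 → ℝ) → ℂ) (u : (Fin 3 → ℝ) → ℂ) : Prop :=
  ContDiffOn ℝ 2 u U ∧ (∀ x ∈ U, P u x = 0) ∧
    ∀ x' : Fin 2 → ℝ, Fin.cons 0 x' ∈ U →
      u (Fin.cons 0 x') = u₀ x' ∧ -I * pd 0 u (Fin.cons 0 x') = u₁ x'

/-- The Cauchy problem for `P` is locally solvable in `γ^(s)` at the origin. -/
def LocallySolvable (P : ((Fin 3 → ℝ) → ℂ) → (Fin 3 → ℝ) → ℂ) (s : ℝ) : Prop :=
  ∀ u₀ u₁ : (Fin 2 → ℝ) → ℂ, GevreyClass s u₀ → GevreyClass s u₁ →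
    ∃ U ∈ nhds (0 : Fin 3 → ℝ), ∃ u : (Fin 3 → ℝ) → ℂ, IsCauchySolution P U u₀ u₁ u

/-- The lens-shaped region `D_δ = {x ∈ ℝ³ : |x'|² + |x₀| < δ}`. -/
def Dset (δ : ℝ) : Set (Fin 3 → ℝ) := {x | (x 1) ^ 2 + (x 2) ^ 2 + |x 0| < δ}

/-- `C` is an admissible constant in the `γ^(s,h)`-bounds for `f`, i.e.
`|∂^α f(x')| ≤ C·h^|α|·(|α|!)^s` for all `α` and `x'`.  The norm of
`γ₀^(s,h)(K)` is the least such `C`. -/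
def GevreyBound (s h C : ℝ) (f : (Fin 2 → ℝ) → ℂ) : Prop :=
  ∀ α : Fin 2 → ℕ, ∀ x : Fin 2 → ℝ,
    ‖pdMulti α f x‖ ≤ C * h ^ (α 0 + α 1) * (Nat.factorial (α 0 + α 1) : ℝ) ^ s

/-- `f ∈ γ₀^(s,h)({|x'| ≤ ε₁})`: a smooth function supported in `{|x'| ≤ ε₁}` with finite
`γ^(s,h)`-norm. -/
def MemGevreyZero (s h ε₁ : ℝ) (f : (Fin 2 → ℝ) → ℂ) : Prop :=
  ContDiff ℝ (⊤ : ℕ∞) f ∧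
    tsupport f ⊆ {x : Fin 2 → ℝ | (x 0) ^ 2 + (x 1) ^ 2 ≤ ε₁ ^ 2} ∧
    ∃ C : ℝ, GevreyBound s h C f

/-!
Gevrey data are encoded by their weighted derivatives, and a `C²` function by its field of second
order jets. On each `D_δ` the bounded jet fields of solutions, paired with their data, form a closed
linear relation between two Banach spaces, and by local solvability the data occurring in these
relations, for a sequence `δ → 0`, exhaust the space of all data. By Baire's theorem one relation
has approximate solutions of controlled norm for every datum, and the iteration in the proof of
the open mapping theorem makes them exact.

Uniqueness rests on Holmgren's foliation by the paraboloids `ε x₀ + |x'|² = t`, `ε = ±1`. A solution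
`w` with zero data, extended by zero to the past, restricts to a compactly supported function on
each paraboloid, hence is determined by its moments there. Differentiation in `t` and integration
by parts express the moments of the other derivatives of `w` through those of `∂₀²w`, each step
gaining a factor which is small for small `δ`. As `{x₀ = 0}` is noncharacteristic, the equation then
returns every bound for the moments of `∂₀²w` with half the constant, so the moments vanish.
-/

section OpenMapping

open Set Filter Topology Metric

variable {E Y : Type*} [NormedAddCommGroup E] [NormedSpace ℝ E] [NormedAddCommGroup Y]
  [NormedSpace ℝ Y]

theorem exists_preimage_norm_le_of_approx [CompleteSpace E] (f : E →L[ℝ] Y) {C : ℝ}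
    (happrox : ∀ y, ∃ x, ‖y - f x‖ ≤ 1 / 2 * ‖y‖ ∧ ‖x‖ ≤ C * ‖y‖) (hC : 0 ≤ C) (y : Y) :
    ∃ x, f x = y ∧ ‖x‖ ≤ 2 * C * ‖y‖ := by
  choose g hg_approx hg_norm using happrox
  let residual : ℕ → Y := fun n => (fun z => z - f (g z))^[n] y
  have residual_succ (n : ℕ) : residual (n + 1) = residual n - f (g (residual n)) :=
    Function.iterate_succ_apply' _ _ _
  have residual_le (n : ℕ) : ‖residual n‖ ≤ (1 / 2) ^ n * ‖y‖ := by
    induction n with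
    | zero => simp [residual]
    | succ n ih =>
      rw [residual_succ, pow_succ', mul_assoc]
      exact (hg_approx _).trans (by gcongr)
  have term_le (n : ℕ) : ‖g (residual n)‖ ≤ (1 / 2) ^ n * (C * ‖y‖) := by
    calc ‖g (residual n)‖ ≤ C * ‖residual n‖ := hg_norm _
      _ ≤ C * ((1 / 2) ^ n * ‖y‖) := by gcongr; exact residual_le n
      _ = (1 / 2) ^ n * (C * ‖y‖) := by ring
  have hgeom : HasSum (fun n : ℕ => (1 / 2 : ℝ) ^ n * (C * ‖y‖)) (2 * (C * ‖y‖)) :=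
    hasSum_geometric_two.mul_right _
  have hsum : HasSum (fun n => g (residual n)) (∑' n, g (residual n)) :=
    (Summable.of_norm_bounded hgeom.summable term_le).hasSum
  have residual_tendsto : Tendsto residual atTop (𝓝 0) := by
    refine squeeze_zero_norm residual_le ?_
    simpa using (tendsto_pow_atTop_nhds_zero_of_lt_one (r := (1 / 2 : ℝ)) (by norm_num)
      (by norm_num)).mul_const ‖y‖
  have partial_sum (n : ℕ) :
      ∑ i ∈ Finset.range n, f (g (residual i)) = y - residual n := by
    rw [← show residual 0 = y from rfl, ← Finset.sum_range_sub']
    exact Finset.sum_congr rfl fun i _ => by rw [residual_succ, sub_sub_cancel]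
  refine ⟨∑' n, g (residual n), ?_, ?_⟩
  · refine tendsto_nhds_unique (hsum.mapL f).tendsto_sum_nat ?_
    simpa only [partial_sum, sub_zero] using residual_tendsto.const_sub y
  · rw [mul_assoc]
    exact tsum_of_norm_bounded hgeom term_le

theorem convex_zero_mem_interior_of_neg_mem {s : Set Y} (hs : Convex ℝ s)
    (hneg : ∀ x ∈ s, -x ∈ s) (hne : (interior s).Nonempty) : (0 : Y) ∈ interior s := by
  obtain ⟨a, ha⟩ := hne
  have hsymm : -s = s := Subset.antisymm (fun x hx => by simpa using hneg _ hx) hneg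
  have hinterior : -interior s = interior s := by
    conv_rhs => rw [← hsymm]
    exact (Homeomorph.neg Y).preimage_interior s
  have hna : -a ∈ interior s := by
    rw [← hinterior]
    simpa using ha
  simpa using hs.interior.midpoint_mem ha hna

theorem exists_approx_of_ball_subset_closure (f : E →L[ℝ] Y) {ε r : ℝ} (hε : 0 < ε)
    (hball : ball 0 ε ⊆ closure (f '' ball 0 r)) (y : Y) :
    ∃ x, ‖y - f x‖ ≤ 1 / 2 * ‖y‖ ∧ ‖x‖ ≤ 2 * r / ε * ‖y‖ := by
  rcases eq_or_ne y 0 with rfl | hy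
  · exact ⟨0, by simp⟩
  have : 0 < ‖y‖ := norm_pos_iff.2 hy
  set d : ℝ := ε / (2 * ‖y‖) with hd
  have hd0 : 0 < d := by positivity
  have hdy : d * ‖y‖ = ε / 2 := by rw [hd]; field_simp
  have hmem : d • y ∈ ball (0 : Y) ε := by
    rw [mem_ball_zero_iff, norm_smul_of_nonneg hd0.le, hdy]
    linarith
  obtain ⟨_, ⟨x, hx, rfl⟩, hdist⟩ := Metric.mem_closure_iff.1 (hball hmem) (ε / 4) (by positivity)
  rw [dist_eq_norm] at hdist
  refine ⟨d⁻¹ • x, ?_, ?_⟩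
  · calc ‖y - f (d⁻¹ • x)‖ = d⁻¹ * ‖d • y - f x‖ := by
          rw [map_smul, ← norm_smul_of_nonneg (inv_nonneg.2 hd0.le), smul_sub,
            inv_smul_smul₀ hd0.ne']
      _ ≤ d⁻¹ * (d * ‖y‖ / 2) := by gcongr; linarith
      _ = 1 / 2 * ‖y‖ := by field_simp
  · calc ‖d⁻¹ • x‖ = d⁻¹ * ‖x‖ :=
          norm_smul_of_nonneg (inv_nonneg.2 hd0.le) x
      _ ≤ d⁻¹ * r := by gcongr; exact (mem_ball_zero_iff.1 hx).le
      _ = 2 * r / ε * ‖y‖ := by rw [hd]; field_simp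

theorem exists_preimage_norm_le_of_interior_closure [CompleteSpace E] (f : E →L[ℝ] Y) {r : ℝ}
    (hr : 0 ≤ r) (hne : (interior (closure (f '' ball 0 r))).Nonempty) :
    ∃ C > 0, ∀ y, ∃ x, f x = y ∧ ‖x‖ ≤ C * ‖y‖ := by
  have hconv : Convex ℝ (closure (f '' ball 0 r)) :=
    ((convex_ball 0 r).is_linear_image f.isBoundedLinearMap.toIsLinearMap).closure
  have hneg : ∀ y ∈ closure (f '' ball 0 r), -y ∈ closure (f '' ball 0 r) := fun y hy =>
    map_mem_closure continuous_neg hy <| by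
      rintro _ ⟨x, hx, rfl⟩
      exact ⟨-x, by simpa using hx, map_neg f x⟩
  obtain ⟨ε, hε, hball⟩ := Metric.mem_nhds_iff.1
    (mem_interior_iff_mem_nhds.1 (convex_zero_mem_interior_of_neg_mem hconv hneg hne))
  refine ⟨2 * (2 * r / ε) + 1, by positivity, fun y => ?_⟩
  obtain ⟨x, hx, hxC⟩ := exists_preimage_norm_le_of_approx f
    (exists_approx_of_ball_subset_closure f hε hball) (by positivity) y
  exact ⟨x, hx, hxC.trans (by gcongr; linarith)⟩

theorem exists_preimage_norm_le_of_iUnion_range [CompleteSpace Y] {ι : Type*} [Countable ι]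
    {E : ι → Type*} [∀ i, NormedAddCommGroup (E i)] [∀ i, NormedSpace ℝ (E i)]
    [∀ i, CompleteSpace (E i)] (f : ∀ i, E i →L[ℝ] Y) (hcover : ∀ y, ∃ i x, f i x = y) :
    ∃ i, ∃ C > 0, ∀ y, ∃ x, f i x = y ∧ ‖x‖ ≤ C * ‖y‖ := by
  have hUnion : ⋃ p : ι × ℕ, closure (f p.1 '' ball 0 p.2) = univ :=
    eq_univ_of_forall fun y => by
      obtain ⟨i, x, rfl⟩ := hcover y
      obtain ⟨n, hn⟩ := exists_nat_gt ‖x‖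
      exact mem_iUnion.2 ⟨(i, n), subset_closure ⟨x, mem_ball_zero_iff.2 hn, rfl⟩⟩
  obtain ⟨⟨i, n⟩, hne⟩ := nonempty_interior_of_iUnion_of_closed (fun _ => isClosed_closure) hUnion
  exact ⟨i, exists_preimage_norm_le_of_interior_closure (f i) n.cast_nonneg hne⟩

theorem exists_norm_le_of_isClosed_relation {X : Type*} [NormedAddCommGroup X] [NormedSpace ℝ X]
    [CompleteSpace X] [CompleteSpace Y] {ι : Type*} [Countable ι] (R : ι → Submodule ℝ (X × Y))
    (hclosed : ∀ i, IsClosed (R i : Set (X × Y))) (hcover : ∀ y, ∃ i x, (x, y) ∈ R i) :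
    ∃ i, ∃ C > 0, ∀ y, ∃ x, (x, y) ∈ R i ∧ ‖x‖ ≤ C * ‖y‖ := by
  have (i : ι) : CompleteSpace (R i) := (hclosed i).completeSpace_coe
  obtain ⟨i, C, hC, hbound⟩ := exists_preimage_norm_le_of_iUnion_range
    (fun i => (ContinuousLinearMap.snd ℝ X Y).comp (R i).subtypeL) fun y =>
      let ⟨i, x, hx⟩ := hcover y
      ⟨i, ⟨(x, y), hx⟩, rfl⟩
  refine ⟨i, C, hC, fun y => ?_⟩
  obtain ⟨⟨⟨x, _⟩, hx⟩, rfl, hnorm⟩ := hbound y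
  exact ⟨x, hx, (norm_fst_le _).trans hnorm⟩

end OpenMapping

section DerivativeRelations

open Set Filter Topology

variable {F X : Type*} [NormedAddCommGroup F] [NormedSpace ℝ F] [NormedAddCommGroup X]
  [NormedSpace ℝ X]

theorem tendstoUniformlyOn_apply_of_norm_le {α : Type*} {A : α → X →L[ℝ] F} {s : Set α} {C : ℝ}
    (hA : ∀ x ∈ s, ∀ g, ‖A x g‖ ≤ C * ‖g‖) {f : ℕ → X} {g : X} (hfg : Tendsto f atTop (𝓝 g)) :
    TendstoUniformlyOn (fun m x => A x (f m)) (fun x => A x g) atTop s := by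
  have hlim : Tendsto (fun m => C * ‖g - f m‖) atTop (𝓝 0) := by
    simpa using (hfg.const_sub g).norm.const_mul C
  rw [Metric.tendstoUniformlyOn_iff]
  intro ε hε
  filter_upwards [hlim.eventually_lt_const hε] with m hm x hx
  rw [dist_eq_norm, ← map_sub]
  exact (hA x hx _).trans_lt hm

/-- The subspace of those `g` for which the field `x ↦ A x g` is continuous on `s`. -/
def contRelation {α : Type*} [TopologicalSpace α] (s : Set α) (A : α → X →L[ℝ] F) :
    Submodule ℝ X where
  carrier := {g | ContinuousOn (fun x => A x g) s}
  zero_mem' := by simpa only [mem_ofPred_eq, map_zero] using continuousOn_const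
  add_mem' hf hg := by simpa only [mem_ofPred_eq, map_add] using hf.fun_add hg
  smul_mem' c _ hf := by simpa only [mem_ofPred_eq, map_smul] using hf.fun_const_smul c

theorem isClosed_contRelation {α : Type*} [TopologicalSpace α] {s : Set α} {A : α → X →L[ℝ] F}
    {C : ℝ} (hA : ∀ x ∈ s, ∀ g, ‖A x g‖ ≤ C * ‖g‖) : IsClosed (contRelation s A : Set X) :=
  IsSeqClosed.isClosed fun _ _ hf hfg =>
    (tendstoUniformlyOn_apply_of_norm_le hA hfg).continuousOn (Frequently.of_forall hf)

variable {E : Type*} [NormedAddCommGroup E] [NormedSpace ℝ E]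

/-- The subspace of those `g` for which the field `x ↦ B x g` is the derivative of the field
`x ↦ A x g` on `O`. -/
def derivRelation (O : Set E) (A : E → X →L[ℝ] F) (B : E → X →L[ℝ] E →L[ℝ] F) :
    Submodule ℝ X where
  carrier := {g | ∀ x ∈ O, HasFDerivAt (fun y => A y g) (B x g) x}
  zero_mem' x _ := by simpa only [map_zero] using hasFDerivAt_const (0 : F) x
  add_mem' hf hg x hx := by simpa only [map_add] using (hf x hx).fun_add (hg x hx)
  smul_mem' c _ hf x hx := by simpa only [map_smul] using (hf x hx).fun_const_smul c

theorem isClosed_derivRelation {O : Set E} (hO : IsOpen O) {A : E → X →L[ℝ] F}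
    {B : E → X →L[ℝ] E →L[ℝ] F} {C : ℝ} (hB : ∀ x ∈ O, ∀ g, ‖B x g‖ ≤ C * ‖g‖) :
    IsClosed (derivRelation O A B : Set X) :=
  IsSeqClosed.isClosed fun _ g hf hfg _ hx =>
    hasFDerivAt_of_tendstoUniformlyOn hO (tendstoUniformlyOn_apply_of_norm_le hB hfg)
      (fun m y hy => hf m y hy) (fun y _ => ((A y).continuous.tendsto g).comp hfg) hx

end DerivativeRelations

section Jets

open Set Filter Topology

variable {E F : Type*} [NormedAddCommGroup E] [NormedSpace ℝ E] [NormedAddCommGroup F]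
  [NormedSpace ℝ F]

variable (E F) in
/-- Second order jets at a point: a value, a first derivative and a second derivative. -/
def Jet : Type _ := F × (E →L[ℝ] F) × (E →L[ℝ] E →L[ℝ] F)

namespace Jet

noncomputable instance : NormedAddCommGroup (Jet E F) :=
  inferInstanceAs (NormedAddCommGroup (F × (E →L[ℝ] F) × (E →L[ℝ] E →L[ℝ] F)))

noncomputable instance : NormedSpace ℝ (Jet E F) :=
  inferInstanceAs (NormedSpace ℝ (F × (E →L[ℝ] F) × (E →L[ℝ] E →L[ℝ] F)))

instance [CompleteSpace F] : CompleteSpace (Jet E F) :=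
  inferInstanceAs (CompleteSpace (F × (E →L[ℝ] F) × (E →L[ℝ] E →L[ℝ] F)))

/-- The value of a jet. -/
noncomputable def value : Jet E F →L[ℝ] F := ContinuousLinearMap.fst ℝ F _

/-- The first derivative of a jet. -/
noncomputable def deriv : Jet E F →L[ℝ] E →L[ℝ] F :=
  (ContinuousLinearMap.fst ℝ (E →L[ℝ] F) _).comp (ContinuousLinearMap.snd ℝ F _)

/-- The second derivative of a jet. -/
noncomputable def secondDeriv : Jet E F →L[ℝ] E →L[ℝ] E →L[ℝ] F :=
  (ContinuousLinearMap.snd ℝ (E →L[ℝ] F) _).comp (ContinuousLinearMap.snd ℝ F _)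

theorem norm_value_le (p : Jet E F) : ‖p.value‖ ≤ ‖p‖ := norm_fst_le _

theorem norm_deriv_le (p : Jet E F) : ‖p.deriv‖ ≤ ‖p‖ := (norm_fst_le _).trans (norm_snd_le p)

theorem norm_secondDeriv_le (p : Jet E F) : ‖p.secondDeriv‖ ≤ ‖p‖ :=
  (norm_snd_le _).trans (norm_snd_le p)

theorem ext {p q : Jet E F} (hvalue : p.value = q.value) (hderiv : p.deriv = q.deriv)
    (hsecondDeriv : p.secondDeriv = q.secondDeriv) : p = q :=
  Prod.ext hvalue (Prod.ext hderiv hsecondDeriv)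

end Jet

/-- The second order jet of `u` at `x`. -/
noncomputable def jet (u : E → F) (x : E) : Jet E F :=
  (u x, fderiv ℝ u x, fderiv ℝ (fderiv ℝ u) x)

variable (E F) in
/-- The Banach space of bounded fields of second order jets. -/
abbrev JetField : Type _ := lp (fun _ : E => Jet E F) ⊤

/-- Evaluation of a jet field at a point. -/
noncomputable def jetEval (x : E) : JetField E F →L[ℝ] Jet E F :=
  lp.evalCLM ℝ (fun _ : E => Jet E F) ⊤ x

theorem norm_jetEval_apply_le (x : E) (g : JetField E F) : ‖jetEval x g‖ ≤ ‖g‖ :=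
  lp.norm_apply_le_norm (by simp) g x

/-- The bounded jet fields which are, on `O`, the jets of a function of class `C²`. -/
noncomputable def jetSpace (O : Set E) : Submodule ℝ (JetField E F) :=
  derivRelation O (fun x => Jet.value.comp (jetEval x)) (fun x => Jet.deriv.comp (jetEval x)) ⊓
    derivRelation O (fun x => Jet.deriv.comp (jetEval x))
      (fun x => Jet.secondDeriv.comp (jetEval x)) ⊓
    contRelation O jetEval

theorem mem_jetSpace {O : Set E} {g : JetField E F} :
    g ∈ jetSpace O ↔ ((∀ x ∈ O, HasFDerivAt (fun y => (g y).value) (g x).deriv x) ∧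
      ∀ x ∈ O, HasFDerivAt (fun y => (g y).deriv) (g x).secondDeriv x) ∧
      ContinuousOn g O :=
  Iff.rfl

theorem isClosed_jetSpace {O : Set E} (hO : IsOpen O) :
    IsClosed (jetSpace (F := F) O : Set (JetField E F)) := by
  have hderiv (x : E) (g : JetField E F) : ‖(jetEval x g).deriv‖ ≤ 1 * ‖g‖ := by
    rw [one_mul]
    exact (Jet.norm_deriv_le _).trans (norm_jetEval_apply_le x g)
  have hsecondDeriv (x : E) (g : JetField E F) : ‖(jetEval x g).secondDeriv‖ ≤ 1 * ‖g‖ := by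
    rw [one_mul]
    exact (Jet.norm_secondDeriv_le _).trans (norm_jetEval_apply_le x g)
  have hjet (x : E) (g : JetField E F) : ‖jetEval x g‖ ≤ 1 * ‖g‖ :=
    (norm_jetEval_apply_le x g).trans_eq (one_mul _).symm
  simp only [jetSpace, Submodule.coe_inf]
  refine IsClosed.inter (IsClosed.inter (isClosed_derivRelation (C := 1) hO ?_)
    (isClosed_derivRelation (C := 1) hO ?_)) (isClosed_contRelation (C := 1) ?_)
  · exact fun x _ => hderiv x
  · exact fun x _ => hsecondDeriv x
  · exact fun x _ => hjet x

theorem contDiffOn_two_of_hasFDerivAt {O : Set E} (hO : IsOpen O) {f : E → F} {f' : E → E →L[ℝ] F}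
    {f'' : E → E →L[ℝ] E →L[ℝ] F} (hf : ∀ x ∈ O, HasFDerivAt f (f' x) x)
    (hf' : ∀ x ∈ O, HasFDerivAt f' (f'' x) x) (hf'' : ContinuousOn f'' O) : ContDiffOn ℝ 2 f O := by
  have h₁ : ContDiffOn ℝ 1 f' O := by
    rw [← zero_add 1, contDiffOn_succ_iff_fderiv_of_isOpen hO]
    exact ⟨fun x hx => (hf' x hx).differentiableAt.differentiableWithinAt, by simp,
      contDiffOn_zero.2 (hf''.congr fun x hx => (hf' x hx).fderiv)⟩
  rw [← one_add_one_eq_two, contDiffOn_succ_iff_fderiv_of_isOpen hO]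
  exact ⟨fun x hx => (hf x hx).differentiableAt.differentiableWithinAt, by simp,
    h₁.congr fun x hx => (hf x hx).fderiv⟩

theorem hasFDerivAt_fderiv_of_contDiffOn_two {O : Set E} (hO : IsOpen O) {u : E → F}
    (hu : ContDiffOn ℝ 2 u O) {x : E} (hx : x ∈ O) :
    HasFDerivAt (fderiv ℝ u) (fderiv ℝ (fderiv ℝ u) x) x :=
  (((hu.fderiv_of_isOpen hO (m := 1) (by norm_num)).contDiffAt
    (hO.mem_nhds hx)).differentiableAt one_ne_zero).hasFDerivAt

theorem continuousOn_jet {O : Set E} (hO : IsOpen O) {u : E → F} (hu : ContDiffOn ℝ 2 u O) :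
    ContinuousOn (jet u) O :=
  have hfderiv := hu.fderiv_of_isOpen hO (m := 1) (by norm_num)
  hu.continuousOn.prodMk (hfderiv.continuousOn.prodMk
    (hfderiv.fderiv_of_isOpen hO (m := 0) (by norm_num)).continuousOn)

theorem eqOn_jet {O : Set E} (hO : IsOpen O) {u v : E → F} (huv : EqOn u v O) :
    EqOn (jet u) (jet v) O := fun x hx => by
  have heq : u =ᶠ[𝓝 x] v := huv.eventuallyEq_of_mem (hO.mem_nhds hx)
  rw [jet, jet, heq.eq_of_nhds, heq.fderiv_eq, heq.fderiv.fderiv_eq]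

theorem jet_sub {O : Set E} (hO : IsOpen O) {u v : E → F} (hu : ContDiffOn ℝ 2 u O)
    (hv : ContDiffOn ℝ 2 v O) {x : E} (hx : x ∈ O) :
    jet (fun x => u x - v x) x = jet u x - jet v x := by
  have hfderiv : fderiv ℝ (fun x => u x - v x) =ᶠ[𝓝 x] fun x => fderiv ℝ u x - fderiv ℝ v x := by
    filter_upwards [hO.mem_nhds hx] with y hy
    exact fderiv_fun_sub ((hu.contDiffAt (hO.mem_nhds hy)).differentiableAt two_ne_zero)
      ((hv.contDiffAt (hO.mem_nhds hy)).differentiableAt two_ne_zero)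
  refine Jet.ext rfl hfderiv.eq_of_nhds (hfderiv.fderiv_eq.trans ?_)
  exact fderiv_fun_sub (hasFDerivAt_fderiv_of_contDiffOn_two hO hu hx).differentiableAt
    (hasFDerivAt_fderiv_of_contDiffOn_two hO hv hx).differentiableAt

theorem jet_eq_zero_iff {u : E → F} {x : E} :
    jet u x = 0 ↔ u x = 0 ∧ fderiv ℝ u x = 0 ∧ fderiv ℝ (fderiv ℝ u) x = 0 :=
  Prod.mk_eq_zero.trans (and_congr_right' Prod.mk_eq_zero)

theorem mem_jetSpace_of_eqOn_jet {O : Set E} (hO : IsOpen O) {u : E → F} (hu : ContDiffOn ℝ 2 u O)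
    {g : JetField E F} (hg : EqOn g (jet u) O) : g ∈ jetSpace O := by
  have hg_nhds {x : E} (hx : x ∈ O) : g =ᶠ[𝓝 x] jet u := hg.eventuallyEq_of_mem (hO.mem_nhds hx)
  refine mem_jetSpace.2 ⟨⟨fun x hx => ?_, fun x hx => ?_⟩, ?_⟩
  · rw [hg hx]
    exact ((hu.contDiffAt (hO.mem_nhds hx)).differentiableAt two_ne_zero).hasFDerivAt
      |>.congr_of_eventuallyEq ((hg_nhds hx).fun_comp Jet.value)
  · rw [hg hx]
    exact (hasFDerivAt_fderiv_of_contDiffOn_two hO hu hx).congr_of_eventuallyEq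
      ((hg_nhds hx).fun_comp Jet.deriv)
  · exact (continuousOn_jet hO hu).congr hg

theorem contDiffOn_of_mem_jetSpace {O : Set E} (hO : IsOpen O) {g : JetField E F}
    (hg : g ∈ jetSpace O) : ContDiffOn ℝ 2 (fun x => (g x).value) O :=
  let ⟨⟨h₀, h₁⟩, h₂⟩ := mem_jetSpace.1 hg
  contDiffOn_two_of_hasFDerivAt hO h₀ h₁ (Jet.secondDeriv.continuous.comp_continuousOn h₂)

theorem jet_eq_of_mem_jetSpace {O : Set E} (hO : IsOpen O) {g : JetField E F}
    (hg : g ∈ jetSpace O) {x : E} (hx : x ∈ O) : jet (fun x => (g x).value) x = g x := by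
  obtain ⟨⟨h₀, h₁⟩, -⟩ := mem_jetSpace.1 hg
  have hfderiv : fderiv ℝ (fun x => (g x).value) =ᶠ[𝓝 x] fun y => (g y).deriv := by
    filter_upwards [hO.mem_nhds hx] with y hy using (h₀ y hy).fderiv
  exact Jet.ext rfl hfderiv.eq_of_nhds (hfderiv.fderiv_eq.trans (h₁ x hx).fderiv)

end Jets

section JetSystems

open Set Filter Topology

variable {E F G Y : Type*} [NormedAddCommGroup E] [NormedSpace ℝ E] [NormedAddCommGroup F]
  [NormedSpace ℝ F] [NormedAddCommGroup G] [NormedSpace ℝ G] [NormedAddCommGroup Y]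
  [NormedSpace ℝ Y]

variable (E F G Y) in
/-- A linear condition `form (jet u point) = source y` on the jet at one point of an unknown
function `u`, with right-hand side depending on a datum `y`. The equation and the initial
conditions of a linear Cauchy problem of second order are families of such conditions. -/
structure JetCondition where
  point : E
  form : Jet E F →L[ℝ] G
  source : Y →L[ℝ] G

/-- `u` is a solution of class `C²` on `O` of the system `S` of jet conditions with datum `y`. -/
def SolvesOn (S : Set (JetCondition E F G Y)) (O : Set E) (y : Y) (u : E → F) : Prop :=
  ContDiffOn ℝ 2 u O ∧ ∀ c ∈ S, c.point ∈ O → c.form (jet u c.point) = c.source y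

theorem SolvesOn.mono {S : Set (JetCondition E F G Y)} {O O' : Set E} {y : Y} {u : E → F}
    (hu : SolvesOn S O y u) (hO : O' ⊆ O) : SolvesOn S O' y u :=
  ⟨hu.1.mono hO, fun c hc hcO => hu.2 c hc (hO hcO)⟩

/-- The relation between bounded jet fields of solutions on `O` and data. -/
noncomputable def solutionRelation (S : Set (JetCondition E F G Y)) (O : Set E) :
    Submodule ℝ (JetField E F × Y) :=
  (jetSpace O).comap (ContinuousLinearMap.fst ℝ (JetField E F) Y).toLinearMap ⊓
    ⨅ c ∈ S, ⨅ _ : c.point ∈ O,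
      ((c.form.comp (jetEval c.point)).comp (ContinuousLinearMap.fst ℝ (JetField E F) Y) -
        c.source.comp (ContinuousLinearMap.snd ℝ (JetField E F) Y)).ker

theorem mem_solutionRelation {S : Set (JetCondition E F G Y)} {O : Set E} {g : JetField E F}
    {y : Y} : (g, y) ∈ solutionRelation S O ↔
      g ∈ jetSpace O ∧ ∀ c ∈ S, c.point ∈ O → c.form (g c.point) = c.source y := by
  simp only [solutionRelation, Submodule.mem_inf, Submodule.mem_iInf, Submodule.mem_comap,
    LinearMap.mem_ker]
  exact and_congr Iff.rfl (forall₃_congr fun _ _ _ => sub_eq_zero)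

theorem isClosed_solutionRelation (S : Set (JetCondition E F G Y)) {O : Set E} (hO : IsOpen O) :
    IsClosed (solutionRelation S O : Set (JetField E F × Y)) := by
  simp only [solutionRelation, Submodule.coe_inf, Submodule.coe_iInf]
  exact ((isClosed_jetSpace hO).preimage continuous_fst).inter <| isClosed_biInter fun _ _ =>
    isClosed_iInter fun _ => ContinuousLinearMap.isClosed_ker _

theorem solvesOn_of_mem_solutionRelation {S : Set (JetCondition E F G Y)} {O : Set E}
    (hO : IsOpen O) {g : JetField E F} {y : Y} (hg : (g, y) ∈ solutionRelation S O) :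
    SolvesOn S O y fun x => (g x).value := by
  obtain ⟨hjet, hS⟩ := mem_solutionRelation.1 hg
  exact ⟨contDiffOn_of_mem_jetSpace hO hjet, fun c hc hcO => by
    rw [jet_eq_of_mem_jetSpace hO hjet hcO, hS c hc hcO]⟩

theorem SolvesOn.exists_mem_solutionRelation {S : Set (JetCondition E F G Y)} {O : Set E}
    (hO : IsOpen O) {y : Y} {u : E → F} (hu : SolvesOn S O y u) {M : ℝ}
    (hM : ∀ x ∈ O, ‖jet u x‖ ≤ M) : ∃ g, (g, y) ∈ solutionRelation S O := by
  classical
  have hbdd : Memℓp (O.indicator (jet u)) ⊤ := memℓp_infty ⟨max M 0, by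
    rintro _ ⟨x, rfl⟩
    by_cases hx : x ∈ O
    · simp only [indicator_of_mem hx, hM x hx, le_max_iff, true_or]
    · simp only [indicator_of_notMem hx, norm_zero, le_max_right]⟩
  let g : JetField E F := ⟨O.indicator (jet u), hbdd⟩
  have hg : EqOn g (jet u) O := eqOn_indicator
  exact ⟨g, mem_solutionRelation.2 ⟨mem_jetSpace_of_eqOn_jet hO hu.1 hg, fun c hc hcO => by
    rw [hg hcO, hu.2 c hc hcO]⟩⟩

theorem SolvesOn.exists_nhds_mem_solutionRelation {S : Set (JetCondition E F G Y)} {y : Y}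
    {u : E → F} {x₀ : E} {U : Set E} (hU : U ∈ 𝓝 x₀) (hu : SolvesOn S U y u) :
    ∃ V ∈ 𝓝 x₀, ∀ O ⊆ V, IsOpen O → ∃ g, (g, y) ∈ solutionRelation S O := by
  have hjet : ContinuousAt (jet u) x₀ :=
    (continuousOn_jet isOpen_interior (hu.1.mono interior_subset)).continuousAt
      (interior_mem_nhds.2 hU)
  have hbdd : ∀ᶠ x in 𝓝 x₀, ‖jet u x‖ < ‖jet u x₀‖ + 1 :=
    hjet.norm.eventually_lt_const (lt_add_one _)
  refine ⟨_, inter_mem hU hbdd, fun O hOV hO => ?_⟩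
  exact (hu.mono fun x hx => (hOV hx).1).exists_mem_solutionRelation hO fun x hx => (hOV hx).2.le

theorem exists_solvesOn_norm_jet_le [CompleteSpace F] [CompleteSpace Y]
    {S : Set (JetCondition E F G Y)} {x₀ : E} {D : ℕ → Set E} (hopen : ∀ n, IsOpen (D n))
    (hbasis : ∀ V ∈ 𝓝 x₀, ∃ n, D n ⊆ V) (hsolv : ∀ y, ∃ U ∈ 𝓝 x₀, ∃ u, SolvesOn S U y u) :
    ∃ n, ∃ C > 0, ∀ y, ∃ u, SolvesOn S (D n) y u ∧ ∀ x ∈ D n, ‖jet u x‖ ≤ C * ‖y‖ := by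
  obtain ⟨n, C, hC, hbound⟩ := exists_norm_le_of_isClosed_relation
    (fun n => solutionRelation S (D n)) (fun n => isClosed_solutionRelation S (hopen n)) fun y => by
      obtain ⟨U, hU, u, hu⟩ := hsolv y
      obtain ⟨V, hV, hgerm⟩ := hu.exists_nhds_mem_solutionRelation hU
      obtain ⟨n, hn⟩ := hbasis V hV
      exact ⟨n, hgerm (D n) hn (hopen n)⟩
  refine ⟨n, C, hC, fun y => ?_⟩
  obtain ⟨g, hg, hgC⟩ := hbound y
  refine ⟨fun x => (g x).value, solvesOn_of_mem_solutionRelation (hopen n) hg, fun x hx => ?_⟩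
  rw [jet_eq_of_mem_jetSpace (hopen n) (mem_solutionRelation.1 hg).1 hx]
  exact (norm_jetEval_apply_le x g).trans hgC

end JetSystems

section PartialDerivatives

variable {n : ℕ} {f : (Fin n → ℝ) → ℂ} {x : Fin n → ℝ}

/-- The linear form on `ℝⁿ` with given complex coefficients. -/
noncomputable def linearForm : (Fin n → ℂ) ≃L[ℝ] (Fin n → ℝ) →L[ℝ] ℂ :=
  (ContinuousLinearEquiv.piRing (Fin n)).symm

theorem linearForm_symm_fderiv_apply (f : (Fin n → ℝ) → ℂ) (x : Fin n → ℝ) (i : Fin n) :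
    linearForm.symm (fderiv ℝ f x) i = pd i f x :=
  LinearEquiv.piRing_apply ℝ (fderiv ℝ f x).toLinearMap i

theorem fderiv_eq_linearForm_pd (f : (Fin n → ℝ) → ℂ) (x : Fin n → ℝ) :
    fderiv ℝ f x = linearForm fun i => pd i f x := by
  rw [← ContinuousLinearEquiv.symm_apply_eq]
  exact funext (linearForm_symm_fderiv_apply f x)

theorem pd_eq_of_hasFDerivAt_linearForm {a : Fin n → ℂ} (hf : HasFDerivAt f (linearForm a) x)
    (i : Fin n) : pd i f x = a i := by
  rw [← linearForm_symm_fderiv_apply, hf.fderiv, ContinuousLinearEquiv.symm_apply_apply]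

theorem contDiffOn_pd {m k : WithTop ℕ∞} {U : Set (Fin n → ℝ)} (hf : ContDiffOn ℝ k f U)
    (hU : IsOpen U) (hm : m + 1 ≤ k) (i : Fin n) : ContDiffOn ℝ m (pd i f) U :=
  (hf.fderiv_of_isOpen hU hm).clm_apply contDiffOn_const

theorem contDiff_infty_pd (hf : ContDiff ℝ (⊤ : ℕ∞) f) (i : Fin n) :
    ContDiff ℝ (⊤ : ℕ∞) (pd i f) :=
  contDiffOn_univ.1 (contDiffOn_pd (contDiffOn_univ.2 hf) isOpen_univ le_rfl i)

theorem contDiffOn_succ_iff_pd {m : ℕ} {U : Set (Fin n → ℝ)} (hU : IsOpen U) :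
    ContDiffOn ℝ (m + 1) f U ↔ DifferentiableOn ℝ f U ∧ ∀ i, ContDiffOn ℝ m (pd i f) U := by
  refine ⟨fun hf => ⟨hf.differentiableOn (by simp), contDiffOn_pd hf hU le_rfl⟩, fun hf => ?_⟩
  rw [contDiffOn_succ_iff_fderiv_of_isOpen hU, funext (fderiv_eq_linearForm_pd f)]
  exact ⟨hf.1, by simp, linearForm.contDiff.comp_contDiffOn
    (contDiffOn_pi.2 hf.2)⟩

theorem pd_pd_eq_fderiv_fderiv (hf : ContDiffAt ℝ 2 f x) (i j : Fin n) :
    pd i (pd j f) x = fderiv ℝ (fderiv ℝ f) x (Pi.single i 1) (Pi.single j 1) := by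
  have hfderiv : DifferentiableAt ℝ (fderiv ℝ f) x :=
    (hf.fderiv_right (m := 1) (by norm_num)).differentiableAt one_ne_zero
  have hpd := hfderiv.hasFDerivAt.clm_apply (hasFDerivAt_const (Pi.single j 1 : Fin n → ℝ) x)
  rw [pd, show pd j f = fun y => fderiv ℝ f y (Pi.single j 1) from rfl, hpd.fderiv]
  simp

theorem pd_comm (hf : ContDiffAt ℝ 2 f x) (i j : Fin n) : pd i (pd j f) x = pd j (pd i f) x := by
  rw [pd_pd_eq_fderiv_fderiv hf, pd_pd_eq_fderiv_fderiv hf]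
  exact (hf.isSymmSndFDerivAt (by simp)).eq _ _

theorem pdIter_succ (j : Fin n) (k : ℕ) (f : (Fin n → ℝ) → ℂ) :
    pdIter j (k + 1) f = pd j (pdIter j k f) :=
  Function.iterate_succ_apply' _ _ _

theorem contDiff_infty_pdIter (hf : ContDiff ℝ (⊤ : ℕ∞) f) (j : Fin n) (k : ℕ) :
    ContDiff ℝ (⊤ : ℕ∞) (pdIter j k f) := by
  induction k with
  | zero => exact hf
  | succ k ih => exact pdIter_succ j k f ▸ contDiff_infty_pd ih j

theorem pd_pdIter_comm (hf : ContDiff ℝ (⊤ : ℕ∞) f) (i j : Fin n) (k : ℕ) :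
    pd i (pdIter j k f) = pdIter j k (pd i f) := by
  induction k with
  | zero => rfl
  | succ k ih =>
    rw [pdIter_succ, pdIter_succ, ← ih]
    exact funext fun x => pd_comm (contDiff_infty.1 (contDiff_infty_pdIter hf j k) 2).contDiffAt i j

end PartialDerivatives

section GevreyData

open Set Topology

theorem contDiff_infty_pdMulti {f : (Fin 2 → ℝ) → ℂ} (hf : ContDiff ℝ (⊤ : ℕ∞) f)
    (α : Fin 2 → ℕ) : ContDiff ℝ (⊤ : ℕ∞) (pdMulti α f) :=
  contDiff_infty_pdIter (contDiff_infty_pdIter hf 1 _) 0 _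

theorem pd_pdMulti {f : (Fin 2 → ℝ) → ℂ} (hf : ContDiff ℝ (⊤ : ℕ∞) f) (α : Fin 2 → ℕ)
    (i : Fin 2) : pd i (pdMulti α f) = pdMulti (α + Pi.single i 1) f := by
  fin_cases i
  · simp [pdMulti, pdIter_succ]
  · simp [pdMulti, pdIter_succ, pd_pdIter_comm (contDiff_infty_pdIter hf 1 _)]

theorem hasFDerivAt_pdMulti {f : (Fin 2 → ℝ) → ℂ} (hf : ContDiff ℝ (⊤ : ℕ∞) f) (α : Fin 2 → ℕ)
    (x : Fin 2 → ℝ) : HasFDerivAt (pdMulti α f)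
      (linearForm fun i => pdMulti (α + Pi.single i 1) f x) x := by
  simp only [← pd_pdMulti hf, ← fderiv_eq_linearForm_pd]
  exact ((contDiff_infty_pdMulti hf α).differentiable (by simp) x).hasFDerivAt

section DerivativeFamilies

variable {n : ℕ} {F : (Fin n → ℕ) → (Fin n → ℝ) → ℂ}

theorem contDiff_infty_of_hasFDerivAt_family
    (hF : ∀ α x, HasFDerivAt (F α) (linearForm fun i => F (α + Pi.single i 1) x) x)
    (α : Fin n → ℕ) : ContDiff ℝ (⊤ : ℕ∞) (F α) := by
  refine contDiff_infty.2 fun m => contDiffOn_univ.1 ?_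
  induction m generalizing α with
  | zero => exact contDiffOn_zero.2 fun x _ => (hF α x).continuousAt.continuousWithinAt
  | succ m ih =>
    refine (contDiffOn_succ_iff_pd isOpen_univ).2
      ⟨fun x _ => (hF α x).differentiableAt.differentiableWithinAt, fun i => ?_⟩
    rw [funext fun x => pd_eq_of_hasFDerivAt_linearForm (hF α x) i]
    exact ih _

theorem pdIter_family
    (hF : ∀ α x, HasFDerivAt (F α) (linearForm fun i => F (α + Pi.single i 1) x) x)
    (α : Fin n → ℕ) (i : Fin n) (k : ℕ) : pdIter i k (F α) = F (α + Pi.single i k) := by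
  induction k with
  | zero => simp [pdIter]
  | succ k ih =>
    rw [pdIter_succ, ih, Pi.single_add, ← add_assoc]
    exact funext fun x => pd_eq_of_hasFDerivAt_linearForm (hF _ x) i

end DerivativeFamilies

theorem pdMulti_family {F : (Fin 2 → ℕ) → (Fin 2 → ℝ) → ℂ}
    (hF : ∀ α x, HasFDerivAt (F α) (linearForm fun i => F (α + Pi.single i 1) x) x)
    (α : Fin 2 → ℕ) : pdMulti α (F 0) = F α := by
  rw [pdMulti, pdIter_family hF, pdIter_family hF]
  congr 1
  ext i
  fin_cases i <;> simp

/-- The weight `h^|α| · (|α|!)^s` in the norm of `γ^(s,h)`. -/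
noncomputable def gevreyWeight (s h : ℝ) (α : Fin 2 → ℕ) : ℝ :=
  h ^ (α 0 + α 1) * (Nat.factorial (α 0 + α 1) : ℝ) ^ s

theorem gevreyWeight_pos {h : ℝ} (hh : 0 < h) (s : ℝ) (α : Fin 2 → ℕ) :
    0 < gevreyWeight s h α := by
  unfold gevreyWeight
  positivity

theorem gevreyBound_iff_le_mul_gevreyWeight {s h N : ℝ} {f : (Fin 2 → ℝ) → ℂ} :
    GevreyBound s h N f ↔ ∀ α x, ‖pdMulti α f x‖ ≤ N * gevreyWeight s h α := by
  simp only [GevreyBound, gevreyWeight, mul_assoc]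

theorem GevreyBound.nonneg {s h N : ℝ} {f : (Fin 2 → ℝ) → ℂ} (hf : GevreyBound s h N f) :
    0 ≤ N := by
  simpa using (norm_nonneg _).trans (hf 0 0)

/-- The Banach space of bounded families indexed by a multi-index and a point of the plane. -/
abbrev MultiIndexField : Type := lp (fun _ : (Fin 2 → ℕ) × (Fin 2 → ℝ) => ℂ) ⊤

/-- The field `x ↦ h^|α| · (|α|!)^s · a (α, x)`. -/
noncomputable def weightedEval (s h : ℝ) (α : Fin 2 → ℕ) (x : Fin 2 → ℝ) :
    MultiIndexField →L[ℝ] ℂ :=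
  gevreyWeight s h α • lp.evalCLM ℝ (fun _ : (Fin 2 → ℕ) × (Fin 2 → ℝ) => ℂ) ⊤ (α, x)

theorem weightedEval_apply (s h : ℝ) (α : Fin 2 → ℕ) (x : Fin 2 → ℝ) (a : MultiIndexField) :
    weightedEval s h α x a = gevreyWeight s h α • a (α, x) :=
  rfl

theorem norm_weightedEval_apply_le (s h : ℝ) (α : Fin 2 → ℕ) (x : Fin 2 → ℝ)
    (a : MultiIndexField) : ‖weightedEval s h α x a‖ ≤ |gevreyWeight s h α| * ‖a‖ := by
  rw [weightedEval_apply, norm_smul, Real.norm_eq_abs]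
  exact mul_le_mul_of_nonneg_left (lp.norm_apply_le_norm ENNReal.top_ne_zero a _) (abs_nonneg _)

/-- The linear form on the plane whose coefficients are the weighted values at `x` of the
components of indices `α + eᵢ`. -/
noncomputable def weightedGradient (s h : ℝ) (α : Fin 2 → ℕ) (x : Fin 2 → ℝ) :
    MultiIndexField →L[ℝ] (Fin 2 → ℝ) →L[ℝ] ℂ :=
  linearForm.toContinuousLinearMap.comp
    (ContinuousLinearMap.pi fun i => weightedEval s h (α + Pi.single i 1) x)

theorem norm_weightedGradient_apply_le (s h : ℝ) (α : Fin 2 → ℕ) (x : Fin 2 → ℝ)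
    (a : MultiIndexField) : ‖weightedGradient s h α x a‖ ≤
      ‖(linearForm (n := 2)).toContinuousLinearMap‖ *
        ‖fun i => gevreyWeight s h (α + Pi.single i 1)‖ * ‖a‖ := by
  have hcoeff : ‖fun i => weightedEval s h (α + Pi.single i 1) x a‖ ≤
      ‖fun i => gevreyWeight s h (α + Pi.single i 1)‖ * ‖a‖ := by
    refine (pi_norm_le_iff_of_nonneg (mul_nonneg (norm_nonneg _) (norm_nonneg _))).2 fun i => ?_
    refine (norm_weightedEval_apply_le s h _ x a).trans ?_
    gcongr
    exact norm_le_pi_norm (fun i => gevreyWeight s h (α + Pi.single i 1)) i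
  rw [mul_assoc]
  exact linearForm.toContinuousLinearMap.le_opNorm_of_le hcoeff

/-- The space `γ^(s,h)(ℝ²)`, a function `f` being encoded by the family of all its weighted
derivatives `∂^α f(x) / (h^|α| · (|α|!)^s)` so that its norm becomes a supremum norm. -/
noncomputable def gevreySpace (s h : ℝ) : Submodule ℝ MultiIndexField :=
  ⨅ α, derivRelation univ (weightedEval s h α) (weightedGradient s h α)

theorem mem_gevreySpace {s h : ℝ} {a : MultiIndexField} : a ∈ gevreySpace s h ↔ ∀ α x,
    HasFDerivAt (fun y => weightedEval s h α y a)
      (linearForm fun i => weightedEval s h (α + Pi.single i 1) x a) x := by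
  simp only [gevreySpace, Submodule.mem_iInf]
  exact forall_congr' fun α => ⟨fun h x => h x (mem_univ x), fun h x _ => h x⟩

instance (s h : ℝ) : CompleteSpace (gevreySpace s h) := by
  refine IsClosed.completeSpace_coe (hs := ?_)
  rw [gevreySpace, Submodule.coe_iInf]
  exact isClosed_iInter fun α =>
    isClosed_derivRelation isOpen_univ fun x _ => norm_weightedGradient_apply_le s h α x

/-- The function encoded by an element of `gevreySpace s h`. -/
noncomputable def gevreyEval {s h : ℝ} (x : Fin 2 → ℝ) : gevreySpace s h →L[ℝ] ℂ :=
  (weightedEval s h 0 x).comp (gevreySpace s h).subtypeL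

theorem gevreyClass_gevreyEval {s h : ℝ} (hh : 0 < h) (a : gevreySpace s h) :
    GevreyClass s fun x => gevreyEval x a := by
  have hfamily := mem_gevreySpace.1 a.2
  refine ⟨contDiff_infty_of_hasFDerivAt_family hfamily 0, fun K _ =>
    ⟨‖(a : MultiIndexField)‖ + 1, by positivity, h, hh, fun x _ α => ?_⟩⟩
  have hpd : pdMulti α (fun x => gevreyEval x a) = fun x => weightedEval s h α x a :=
    pdMulti_family hfamily α
  have hweight := gevreyWeight_pos hh s α
  calc ‖pdMulti α (fun x => gevreyEval x a) x‖ = ‖weightedEval s h α x a‖ := by rw [hpd]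
    _ ≤ gevreyWeight s h α * ‖(a : MultiIndexField)‖ :=
      abs_of_pos hweight ▸ norm_weightedEval_apply_le s h α x a
    _ ≤ gevreyWeight s h α * (‖(a : MultiIndexField)‖ + 1) := by gcongr; simp
    _ = (‖(a : MultiIndexField)‖ + 1) * h ^ (α 0 + α 1) *
        (Nat.factorial (α 0 + α 1) : ℝ) ^ s := by rw [gevreyWeight]; ring

theorem exists_gevreyEval_eq {s h N : ℝ} (hh : 0 < h) {f : (Fin 2 → ℝ) → ℂ}
    (hf : ContDiff ℝ (⊤ : ℕ∞) f) (hN : GevreyBound s h N f) :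
    ∃ a : gevreySpace s h, (∀ x, gevreyEval x a = f x) ∧ ‖a‖ ≤ N := by
  have hbound (k : (Fin 2 → ℕ) × (Fin 2 → ℝ)) :
      ‖(gevreyWeight s h k.1)⁻¹ • pdMulti k.1 f k.2‖ ≤ N := by
    have hweight := gevreyWeight_pos hh s k.1
    rw [norm_smul, norm_inv, Real.norm_of_nonneg hweight.le, inv_mul_le_iff₀ hweight, mul_comm]
    exact gevreyBound_iff_le_mul_gevreyWeight.1 hN k.1 k.2
  let a : MultiIndexField := ⟨_, memℓp_infty ⟨N, forall_mem_range.2 hbound⟩⟩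
  have ha (α x) : weightedEval s h α x a = pdMulti α f x :=
    smul_inv_smul₀ (gevreyWeight_pos hh s α).ne' _
  have hmem : a ∈ gevreySpace s h := mem_gevreySpace.2 fun α x => by
    simpa only [ha] using hasFDerivAt_pdMulti hf α x
  exact ⟨⟨a, hmem⟩, ha 0, lp.norm_le_of_forall_le hN.nonneg hbound⟩

end GevreyData

section CauchyProblem

open Set Filter Topology

section JetPartials

variable {n : ℕ}

/-- The `i`-th partial derivative of a jet. -/
noncomputable def firstPartial (i : Fin n) : Jet (Fin n → ℝ) ℂ →L[ℝ] ℂ :=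
  (ContinuousLinearMap.apply ℝ ℂ (Pi.single i 1)).comp Jet.deriv

/-- The second order partial derivative of a jet in the directions `i` and `j`. -/
noncomputable def secondPartial (i j : Fin n) : Jet (Fin n → ℝ) ℂ →L[ℝ] ℂ :=
  (ContinuousLinearMap.apply ℝ ℂ (Pi.single j 1)).comp
    ((ContinuousLinearMap.apply ℝ _ (Pi.single i 1)).comp Jet.secondDeriv)

theorem firstPartial_jet (i : Fin n) (u : (Fin n → ℝ) → ℂ) (x : Fin n → ℝ) :
    firstPartial i (jet u x) = pd i u x :=
  rfl

theorem secondPartial_jet {u : (Fin n → ℝ) → ℂ} {x : Fin n → ℝ} (hu : ContDiffAt ℝ 2 u x)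
    (i j : Fin n) : secondPartial i j (jet u x) = pd i (pd j u) x :=
  (pd_pd_eq_fderiv_fderiv hu i j).symm

theorem norm_apply_single_le {F : Type*} [NormedAddCommGroup F] [NormedSpace ℝ F]
    (L : (Fin n → ℝ) →L[ℝ] F) (i : Fin n) : ‖L (Pi.single i 1)‖ ≤ ‖L‖ :=
  L.unit_le_opNorm _ (by rw [Pi.norm_single, norm_one])

theorem norm_firstPartial_le (i : Fin n) (p : Jet (Fin n → ℝ) ℂ) : ‖firstPartial i p‖ ≤ ‖p‖ :=
  (norm_apply_single_le _ i).trans p.norm_deriv_le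

theorem norm_secondPartial_le (i j : Fin n) (p : Jet (Fin n → ℝ) ℂ) :
    ‖secondPartial i j p‖ ≤ ‖p‖ :=
  ((norm_apply_single_le _ j).trans (norm_apply_single_le _ i)).trans p.norm_secondDeriv_le

theorem norm_partials_le_of_norm_jet_le {u : (Fin n → ℝ) → ℂ} {x : Fin n → ℝ} {C : ℝ}
    (hu : ContDiffAt ℝ 2 u x) (hC : ‖jet u x‖ ≤ C) :
    ‖u x‖ ≤ C ∧ (∀ i, ‖pd i u x‖ ≤ C) ∧ ∀ i j, ‖pd i (pd j u) x‖ ≤ C :=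
  ⟨(jet u x).norm_value_le.trans hC, fun i => (norm_firstPartial_le i (jet u x)).trans hC,
    fun i j => secondPartial_jet hu i j ▸ (norm_secondPartial_le i j _).trans hC⟩

end JetPartials

/-- The action on jets at `x` of the operator `Pop b₀ b₁ b₂`. -/
noncomputable def popForm (b₀ b₁ b₂ : ℂ) (x : Fin 3 → ℝ) : Jet (Fin 3 → ℝ) ℂ →L[ℝ] ℂ :=
  secondPartial 0 0 - (2 * (x 1 : ℂ)) • secondPartial 2 0 - secondPartial 1 1 -
    (x 1 : ℂ) ^ 3 • secondPartial 2 2 + b₀ • -I • firstPartial 0 + b₁ • -I • firstPartial 1 +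
    b₂ • -I • firstPartial 2

theorem popForm_jet (b₀ b₁ b₂ : ℂ) {u : (Fin 3 → ℝ) → ℂ} {x : Fin 3 → ℝ}
    (hu : ContDiffAt ℝ 2 u x) : popForm b₀ b₁ b₂ x (jet u x) = Pop b₀ b₁ b₂ u x := by
  simp only [Pop, Pmod, ← secondPartial_jet hu, ← firstPartial_jet]
  rfl

variable {b₀ b₁ b₂ : ℂ} {s h : ℝ}

theorem Pop_congr {u v : (Fin 3 → ℝ) → ℂ} {U : Set (Fin 3 → ℝ)} (hU : IsOpen U)
    (hu : ContDiffOn ℝ 2 u U) (huv : EqOn u v U) {x : Fin 3 → ℝ} (hx : x ∈ U) :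
    Pop b₀ b₁ b₂ u x = Pop b₀ b₁ b₂ v x := by
  have hUx := hU.mem_nhds hx
  rw [← popForm_jet b₀ b₁ b₂ (hu.contDiffAt hUx),
    ← popForm_jet b₀ b₁ b₂ ((hu.congr huv.symm).contDiffAt hUx), eqOn_jet hU huv hx]

/-- The Cauchy problem for `Pop b₀ b₁ b₂` with data in `γ^(s,h)`, as a system of conditions on
jets. -/
noncomputable def cauchySystem (b₀ b₁ b₂ : ℂ) (s h : ℝ) :
    Set (JetCondition (Fin 3 → ℝ) ℂ ℂ (gevreySpace s h × gevreySpace s h)) :=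
  range (fun x => ⟨x, popForm b₀ b₁ b₂ x, 0⟩) ∪
    (range (fun x' : Fin 2 → ℝ => ⟨Fin.cons 0 x', Jet.value,
      (gevreyEval x').comp (ContinuousLinearMap.fst ℝ _ _)⟩) ∪
    range (fun x' : Fin 2 → ℝ => ⟨Fin.cons 0 x', -I • firstPartial 0,
      (gevreyEval x').comp (ContinuousLinearMap.snd ℝ _ _)⟩))

theorem solvesOn_cauchySystem {U : Set (Fin 3 → ℝ)} (hU : IsOpen U)
    {a : gevreySpace s h × gevreySpace s h} {u : (Fin 3 → ℝ) → ℂ} :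
    SolvesOn (cauchySystem b₀ b₁ b₂ s h) U a u ↔ IsCauchySolution (Pop b₀ b₁ b₂) U
      (fun x => gevreyEval x a.1) (fun x => gevreyEval x a.2) u := by
  refine and_congr_right fun hu => ?_
  simp only [cauchySystem, mem_union, or_imp, forall_and, forall_mem_range]
  refine and_congr (forall₂_congr fun x hx => ?_) Iff.rfl
  rw [popForm_jet b₀ b₁ b₂ (hu.contDiffAt (hU.mem_nhds hx))]
  rfl

theorem IsCauchySolution.mono {P : ((Fin 3 → ℝ) → ℂ) → (Fin 3 → ℝ) → ℂ}
    {U V : Set (Fin 3 → ℝ)} {u₀ u₁ : (Fin 2 → ℝ) → ℂ} {u : (Fin 3 → ℝ) → ℂ}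
    (hu : IsCauchySolution P U u₀ u₁ u) (hV : V ⊆ U) : IsCauchySolution P V u₀ u₁ u :=
  ⟨hu.1.mono hV, fun x hx => hu.2.1 x (hV hx), fun x' hx' => hu.2.2 x' (hV hx')⟩

theorem isOpen_Dset (δ : ℝ) : IsOpen (Dset δ) :=
  isOpen_lt (by fun_prop) continuous_const

theorem exists_Dset_subset {δ : ℝ} (hδ : 0 < δ) {V : Set (Fin 3 → ℝ)} (hV : V ∈ 𝓝 0) :
    ∃ n : ℕ, Dset (δ / (n + 1)) ⊆ V := by
  obtain ⟨r, hr, hrV⟩ := Metric.mem_nhds_iff.1 hV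
  obtain ⟨n, hn⟩ := exists_nat_one_div_lt (show 0 < min r (r ^ 2) / δ by positivity)
  have hsmall : δ / (n + 1) < min r (r ^ 2) := by
    rw [lt_div_iff₀ hδ] at hn
    rwa [div_eq_mul_one_div, mul_comm]
  refine ⟨n, fun x hx => hrV (mem_ball_zero_iff.2 ((pi_norm_lt_iff hr).2 fun i => ?_))⟩
  have hx' : x 1 ^ 2 + x 2 ^ 2 + |x 0| < min r (r ^ 2) := hx.trans hsmall
  rw [lt_min_iff] at hx'
  have h0 := abs_nonneg (x 0)
  have h1 := sq_nonneg (x 1)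
  have h2 := sq_nonneg (x 2)
  rw [Real.norm_eq_abs]
  fin_cases i
  · exact lt_of_le_of_lt (by simp only [Fin.zero_eta]; linarith) hx'.1
  · exact abs_lt_of_sq_lt_sq (lt_of_le_of_lt (by simp only [Fin.mk_one]; linarith) hx'.2) hr.le
  · exact abs_lt_of_sq_lt_sq (lt_of_le_of_lt (by simp only [Fin.reduceFinMk]; linarith) hx'.2) hr.le

theorem LocallySolvable.exists_isCauchySolution_norm_jet_le
    (hsolv : LocallySolvable (Pop b₀ b₁ b₂) s) (hh : 0 < h) {δ₀ : ℝ} (hδ₀ : 0 < δ₀) :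
    ∃ δ > 0, δ ≤ δ₀ ∧ ∃ C > 0, ∀ u₀ u₁ : (Fin 2 → ℝ) → ℂ, ContDiff ℝ (⊤ : ℕ∞) u₀ →
      ContDiff ℝ (⊤ : ℕ∞) u₁ → ∀ N₀ N₁, GevreyBound s h N₀ u₀ → GevreyBound s h N₁ u₁ →
        ∃ u, IsCauchySolution (Pop b₀ b₁ b₂) (Dset δ) u₀ u₁ u ∧
          ∀ x ∈ Dset δ, ‖jet u x‖ ≤ C * (N₀ + N₁) := by
  obtain ⟨n, C, hC, hbound⟩ := exists_solvesOn_norm_jet_le (S := cauchySystem b₀ b₁ b₂ s h)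
    (fun n : ℕ => isOpen_Dset (δ₀ / (n + 1))) (fun V => exists_Dset_subset hδ₀) fun a => by
      obtain ⟨U, hU, u, hu⟩ :=
        hsolv _ _ (gevreyClass_gevreyEval hh a.1) (gevreyClass_gevreyEval hh a.2)
      exact ⟨interior U, interior_mem_nhds.2 hU, u,
        (solvesOn_cauchySystem isOpen_interior).2 (hu.mono interior_subset)⟩
  refine ⟨δ₀ / (n + 1), by positivity, div_le_self hδ₀.le (by simp), C, hC,
    fun u₀ u₁ hu₀ hu₁ N₀ N₁ hN₀ hN₁ => ?_⟩
  obtain ⟨a₀, ha₀, ha₀N⟩ := exists_gevreyEval_eq hh hu₀ hN₀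
  obtain ⟨a₁, ha₁, ha₁N⟩ := exists_gevreyEval_eq hh hu₁ hN₁
  obtain ⟨u, hu, huC⟩ := hbound (a₀, a₁)
  rw [solvesOn_cauchySystem (isOpen_Dset _), funext ha₀, funext ha₁] at hu
  refine ⟨u, hu, fun x hx => (huC x hx).trans (mul_le_mul_of_nonneg_left ?_ hC.le)⟩
  exact max_le (ha₀N.trans (le_add_of_nonneg_right hN₁.nonneg))
    (ha₁N.trans (le_add_of_nonneg_left hN₀.nonneg))

end CauchyProblem

section MomentDeterminacy

open Set Filter Topology MeasureTheory

variable {ι : Type*}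

variable (ι) in
/-- The algebra of polynomial functions of several real variables. -/
noncomputable def mvPolynomialFunctions : Subalgebra ℝ C(ι → ℝ, ℝ) :=
  (MvPolynomial.aeval fun i => (⟨fun x => x i, continuous_apply i⟩ : C(ι → ℝ, ℝ))).range

theorem mvPolynomialFunctions_separatesPoints : (mvPolynomialFunctions ι).SeparatesPoints := by
  intro x y hxy
  obtain ⟨i, hi⟩ := Function.ne_iff.1 hxy
  exact ⟨_, ⟨_, ⟨MvPolynomial.X i, MvPolynomial.aeval_X _ i⟩, rfl⟩, hi⟩

variable [Fintype ι]

/-- The monomial `y^α` of a point `y` of a coordinate space. -/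
def coordMonomial (α : ι → ℕ) (y : ι → ℝ) : ℝ := ∏ i, y i ^ α i

theorem contDiff_coordMonomial (α : ι → ℕ) : ContDiff ℝ (⊤ : ℕ∞) (coordMonomial α) := by
  unfold coordMonomial
  fun_prop

variable {E : Type*} [NormedAddCommGroup E] [NormedSpace ℝ E] {φ : (ι → ℝ) → E}

theorem integrable_smul_of_hasCompactSupport (hφ : Continuous φ) (hc : HasCompactSupport φ)
    {g : (ι → ℝ) → ℝ} (hg : Continuous g) : Integrable fun x => g x • φ x :=
  (hg.smul hφ).integrable_of_hasCompactSupport hc.smul_left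

theorem integral_smul_eq_zero_of_mem_mvPolynomialFunctions (hφ : Continuous φ)
    (hc : HasCompactSupport φ) (hmoment : ∀ α, ∫ x, coordMonomial α x • φ x = 0)
    {g : C(ι → ℝ, ℝ)} (hg : g ∈ mvPolynomialFunctions ι) : ∫ x, g x • φ x = 0 := by
  obtain ⟨p, rfl⟩ := hg
  induction p using MvPolynomial.induction_on' with
  | monomial α c =>
    have hmonomial (x : ι → ℝ) : (MvPolynomial.aeval fun i =>
        (⟨fun x => x i, continuous_apply i⟩ : C(ι → ℝ, ℝ))) (MvPolynomial.monomial α c) x • φ x =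
          c • coordMonomial α x • φ x := by
      simp [MvPolynomial.aeval_monomial, Finsupp.prod_fintype, coordMonomial, mul_smul]
    simp only [RingHom.coe_coe, AlgHom.toRingHom_eq_coe, hmonomial, integral_smul, hmoment,
      smul_zero]
  | add p q hp hq =>
    simp only [map_add, ContinuousMap.add_apply, add_smul]
    rw [integral_add (integrable_smul_of_hasCompactSupport hφ hc (map_continuous _))
      (integrable_smul_of_hasCompactSupport hφ hc (map_continuous _))]
    exact (congrArg₂ _ hp hq).trans (add_zero 0)

theorem integral_smul_eq_zero_of_moments_eq_zero (hφ : Continuous φ) (hc : HasCompactSupport φ)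
    (hmoment : ∀ α, ∫ x, coordMonomial α x • φ x = 0) (g : C(ι → ℝ, ℝ)) :
    ∫ x, g x • φ x = 0 := by
  have happrox {η : ℝ} (hη : 0 < η) : ‖∫ x, g x • φ x‖ ≤ η * ∫ x, ‖φ x‖ := by
    obtain ⟨p, hp, hpg⟩ :=
      ContinuousMap.exists_mem_subalgebra_near_continuous_of_isCompact_of_separatesPoints
        mvPolynomialFunctions_separatesPoints g hc hη
    have hsub : ∫ x, g x • φ x = -∫ x, (p x - g x) • φ x := by
      simp only [sub_smul]
      rw [integral_sub (integrable_smul_of_hasCompactSupport hφ hc p.continuous)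
        (integrable_smul_of_hasCompactSupport hφ hc g.continuous),
        integral_smul_eq_zero_of_mem_mvPolynomialFunctions hφ hc hmoment hp, zero_sub, neg_neg]
    rw [hsub, norm_neg, ← integral_const_mul]
    refine norm_integral_le_of_norm_le
      ((hφ.norm.integrable_of_hasCompactSupport hc.norm).const_mul η) (ae_of_all _ fun x => ?_)
    by_cases hx : x ∈ tsupport φ
    · exact (norm_smul_le _ _).trans (by gcongr; exact (hpg x hx).le)
    · simp [image_eq_zero_of_notMem_tsupport hx]
  have hlim : Tendsto (fun η : ℝ => η * ∫ x, ‖φ x‖) (𝓝[>] 0) (𝓝 (0 * ∫ x, ‖φ x‖)) :=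
    (tendsto_id.mono_left nhdsWithin_le_nhds).mul_const _
  rw [zero_mul] at hlim
  exact norm_le_zero_iff.1 (ge_of_tendsto hlim (eventually_mem_nhdsWithin.mono fun η => happrox))

theorem eq_zero_of_moments_eq_zero [CompleteSpace E] (hφ : Continuous φ)
    (hc : HasCompactSupport φ) (hmoment : ∀ α, ∫ x, coordMonomial α x • φ x = 0) : φ = 0 :=
  (hφ.ae_eq_iff_eq volume continuous_zero).1 <|
    ae_eq_zero_of_integral_contDiff_smul_eq_zero hφ.locallyIntegrable fun g hg _ =>
      integral_smul_eq_zero_of_moments_eq_zero hφ hc hmoment ⟨g, hg.continuous⟩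

end MomentDeterminacy

section ParaboloidMoments

open Set Filter Topology MeasureTheory

theorem coordMonomial_add_single {ι : Type*} [Fintype ι] [DecidableEq ι] (α : ι → ℕ) (i : ι)
    (y : ι → ℝ) : coordMonomial (α + Pi.single i 1) y = y i * coordMonomial α y := by
  simp only [coordMonomial, Pi.add_apply, pow_add, Finset.prod_mul_distrib, Pi.single_apply,
    pow_ite, pow_one, pow_zero, Finset.prod_ite_eq', Finset.mem_univ, if_true, mul_comm]

theorem fderiv_coordMonomial_single {ι : Type*} [Fintype ι] [DecidableEq ι] (α : ι → ℕ)
    (y : ι → ℝ) (i : ι) : fderiv ℝ (coordMonomial α) y (Pi.single i 1) =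
      α i * coordMonomial (α - Pi.single i 1) y := by
  have hprod := HasFDerivAt.finsetProd (u := Finset.univ) fun j _ =>
    (hasFDerivAt_apply (𝕜 := ℝ) j y).pow (α j)
  have hmonomial : coordMonomial (α - Pi.single i 1) y =
      (∏ j ∈ Finset.univ.erase i, y j ^ α j) * y i ^ (α i - 1) := by
    rw [coordMonomial, ← Finset.prod_erase_mul _ _ (Finset.mem_univ i)]
    refine congrArg₂ _ (Finset.prod_congr rfl fun j hj => ?_) (by simp)
    simp [Finset.ne_of_mem_erase hj]
  rw [show coordMonomial α = fun y => ∏ j, y j ^ α j from rfl, hprod.fderiv, hmonomial,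
    sum_apply, Finset.sum_eq_single i (fun j _ hj => by simp [hj]) (by simp)]
  simp
  ring

theorem abs_coordMonomial_le {ι : Type*} [Fintype ι] (α : ι → ℕ) {y : ι → ℝ} {r : ℝ}
    (hy : ∀ i, |y i| ≤ r) : |coordMonomial α y| ≤ r ^ ∑ i, α i := by
  rw [coordMonomial, Finset.abs_prod, ← Finset.prod_pow_eq_pow_sum]
  gcongr with i
  rw [abs_pow]
  gcongr
  exact hy i

variable {n m : ℕ} {ε δ t T : ℝ} {F G : (Fin (n + 1) → ℝ) → ℂ}

/-- The point above `y` on the paraboloid `ε x₀ + |x'|² = t`, where `ε = ±1`. -/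
def paraboloid (ε t : ℝ) (y : Fin n → ℝ) : Fin (n + 1) → ℝ :=
  Fin.cons (ε * (t - ∑ i, y i ^ 2)) y

/-- The region below the paraboloid `ε x₀ + |x'|² = δ`. -/
def paraboloidRegion (n : ℕ) (ε δ : ℝ) : Set (Fin (n + 1) → ℝ) :=
  {x | ∑ i : Fin n, x i.succ ^ 2 + ε * x 0 < δ}

/-- The moment of order `α` of the restriction of `F` to the paraboloid `ε x₀ + |x'|² = t`. -/
noncomputable def moment (ε : ℝ) (F : (Fin (n + 1) → ℝ) → ℂ) (α : Fin n → ℕ) (t : ℝ) : ℂ :=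
  ∫ y, coordMonomial α y • F (paraboloid ε t y)

/-- `F` is of class `C^m` below the paraboloid `ε x₀ + |x'|² = δ` and vanishes there in the past
`ε x₀ ≤ 0`. -/
structure VanishesInPast (ε δ : ℝ) (m : ℕ) (F : (Fin (n + 1) → ℝ) → ℂ) : Prop where
  contDiffOn : ContDiffOn ℝ m F (paraboloidRegion n ε δ)
  eq_zero : ∀ x ∈ paraboloidRegion n ε δ, ε * x 0 ≤ 0 → F x = 0

theorem isOpen_paraboloidRegion (n : ℕ) (ε δ : ℝ) : IsOpen (paraboloidRegion n ε δ) :=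
  isOpen_lt (by fun_prop) continuous_const

theorem mul_paraboloid_zero (hε : ε * ε = 1) (t : ℝ) (y : Fin n → ℝ) :
    ε * paraboloid ε t y 0 = t - ∑ i, y i ^ 2 := by
  rw [paraboloid, Fin.cons_zero, ← mul_assoc, hε, one_mul]

theorem paraboloid_mem_paraboloidRegion (hε : ε * ε = 1) (ht : t < δ) (y : Fin n → ℝ) :
    paraboloid ε t y ∈ paraboloidRegion n ε δ := by
  change ∑ i, y i ^ 2 + ε * paraboloid ε t y 0 < δ
  rwa [mul_paraboloid_zero hε, add_sub_cancel]

theorem continuous_paraboloid (ε : ℝ) :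
    Continuous fun p : ℝ × (Fin n → ℝ) => paraboloid ε p.1 p.2 :=
  Continuous.finCons (by fun_prop) continuous_snd

theorem hasDerivAt_paraboloid (ε t : ℝ) (y : Fin n → ℝ) :
    HasDerivAt (fun t => paraboloid ε t y) (ε • Pi.single 0 1) t := by
  refine hasDerivAt_pi.2 (Fin.cases ?_ fun i => ?_)
  · simpa [paraboloid] using ((hasDerivAt_id t).sub_const (∑ i, y i ^ 2)).const_mul ε
  · simpa [paraboloid] using hasDerivAt_const t (y i)

theorem exists_hasFDerivAt_paraboloid (ε t : ℝ) (y : Fin n → ℝ) :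
    ∃ L : (Fin n → ℝ) →L[ℝ] (Fin (n + 1) → ℝ), HasFDerivAt (paraboloid ε t) L y ∧
      ∀ i, L (Pi.single i 1) = Pi.single i.succ 1 - (2 * ε * y i) • Pi.single 0 1 := by
  have hsq := HasFDerivAt.fun_sum (u := Finset.univ) fun i _ =>
    (hasFDerivAt_apply (𝕜 := ℝ) i y).pow 2
  refine ⟨_, ((hsq.const_sub t).const_mul ε).finCons (hasFDerivAt_id y), fun i => ?_⟩
  ext j
  refine Fin.cases ?_ (fun j => ?_) j
  · simp [Pi.single_apply]
    ring
  · simp [Pi.single_apply]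

theorem isCompact_setOf_sum_sq_le (n : ℕ) (t : ℝ) :
    IsCompact {y : Fin n → ℝ | ∑ i, y i ^ 2 ≤ t} := by
  refine (isCompact_closedBall 0 √t).of_isClosed_subset
    (isClosed_le (by fun_prop) continuous_const) fun y hy => ?_
  rw [mem_closedBall_zero_iff, pi_norm_le_iff_of_nonneg (Real.sqrt_nonneg t)]
  exact fun i => Real.abs_le_sqrt
    ((Finset.single_le_sum (fun j _ => sq_nonneg (y j)) (Finset.mem_univ i)).trans hy)

namespace VanishesInPast

theorem of_le {k : ℕ} (hF : VanishesInPast ε δ m F) (hk : k ≤ m) : VanishesInPast ε δ k F :=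
  ⟨hF.contDiffOn.of_le (by exact_mod_cast hk), hF.eq_zero⟩

theorem add (hF : VanishesInPast ε δ m F) (hG : VanishesInPast ε δ m G) :
    VanishesInPast ε δ m fun x => F x + G x :=
  ⟨hF.contDiffOn.add hG.contDiffOn, fun x hx hx₀ => by
    rw [hF.eq_zero x hx hx₀, hG.eq_zero x hx hx₀, add_zero]⟩

theorem mul_left {g : (Fin (n + 1) → ℝ) → ℂ} (hg : ContDiff ℝ m g) (hF : VanishesInPast ε δ m F) :
    VanishesInPast ε δ m fun x => g x * F x :=
  ⟨hg.contDiffOn.mul hF.contDiffOn, fun x hx hx₀ => by rw [hF.eq_zero x hx hx₀, mul_zero]⟩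

theorem differentiableAt (hF : VanishesInPast ε δ 1 F) {x : Fin (n + 1) → ℝ}
    (hx : x ∈ paraboloidRegion n ε δ) : DifferentiableAt ℝ F x :=
  (hF.contDiffOn.differentiableOn (by simp)).differentiableAt
    ((isOpen_paraboloidRegion n ε δ).mem_nhds hx)

theorem partialDeriv (hε : ε * ε = 1) (hF : VanishesInPast ε δ (m + 1) F) (i : Fin (n + 1)) :
    VanishesInPast ε δ m (pd i F) := by
  refine ⟨contDiffOn_pd hF.contDiffOn (isOpen_paraboloidRegion n ε δ) le_rfl i,
    fun x hx hx₀ => ?_⟩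
  have hopen : IsOpen {x : Fin (n + 1) → ℝ | ε * x 0 < 0} :=
    isOpen_lt (by fun_prop) continuous_const
  have hconvex : Convex ℝ {x : Fin (n + 1) → ℝ | ε * x 0 ≤ 0} :=
    convex_halfSpace_le ⟨fun _ _ => by simp [mul_add], fun _ _ => by simp [mul_left_comm]⟩ 0
  have hsub : {x : Fin (n + 1) → ℝ | ε * x 0 < 0} ⊆ {x | ε * x 0 ≤ 0} :=
    fun x (hx : ε * x 0 < 0) => hx.le
  have hmem : (fun _ => -ε) ∈ {x : Fin (n + 1) → ℝ | ε * x 0 < 0} :=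
    show ε * -ε < 0 by linarith
  have hnonempty := Set.Nonempty.mono (interior_maximal hsub hopen) ⟨_, hmem⟩
  have hnhds := (isOpen_paraboloidRegion n ε δ).mem_nhds hx
  have hzero : HasFDerivWithinAt F 0 {x | ε * x 0 ≤ 0} x :=
    ((hasFDerivWithinAt_const (𝕜 := ℝ) (0 : ℂ) x _).congr_of_eventuallyEq
      (by filter_upwards [self_mem_nhdsWithin, mem_nhdsWithin_of_mem_nhds hnhds] with z hz₀ hz
          exact hF.eq_zero z hz hz₀) (hF.eq_zero x hx hx₀))
  have hfderiv := ((hF.of_le (Nat.le_add_left 1 m)).differentiableAt hx).hasFDerivAt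
  rw [pd, (uniqueDiffOn_convex hconvex hnonempty x hx₀).eq hfderiv.hasFDerivWithinAt hzero]
  rfl

theorem comp_paraboloid_eq_zero (hε : ε * ε = 1) (hF : VanishesInPast ε δ m F) (ht : t < δ)
    {y : Fin n → ℝ} (hy : t ≤ ∑ i, y i ^ 2) : F (paraboloid ε t y) = 0 :=
  hF.eq_zero _ (paraboloid_mem_paraboloidRegion hε ht y)
    (by rw [mul_paraboloid_zero hε]; exact sub_nonpos.2 hy)

theorem continuous_comp_paraboloid (hε : ε * ε = 1) (hF : VanishesInPast ε δ m F) (ht : t < δ) :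
    Continuous fun y => F (paraboloid ε t y) :=
  hF.contDiffOn.continuousOn.comp_continuous
    ((continuous_paraboloid ε).comp (Continuous.prodMk_right t))
    (paraboloid_mem_paraboloidRegion hε ht)

theorem hasCompactSupport_comp_paraboloid (hε : ε * ε = 1) (hF : VanishesInPast ε δ m F)
    (ht : t < δ) : HasCompactSupport fun y => F (paraboloid ε t y) :=
  HasCompactSupport.intro (isCompact_setOf_sum_sq_le n t) fun _ hy =>
    hF.comp_paraboloid_eq_zero hε ht (not_le.1 hy).le

theorem integrable_moment (hε : ε * ε = 1) (hF : VanishesInPast ε δ m F) (ht : t < δ)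
    (α : Fin n → ℕ) : Integrable fun y => coordMonomial α y • F (paraboloid ε t y) :=
  integrable_smul_of_hasCompactSupport (hF.continuous_comp_paraboloid hε ht)
    (hF.hasCompactSupport_comp_paraboloid hε ht) (contDiff_coordMonomial α).continuous

theorem exists_norm_comp_paraboloid_le (hε : ε * ε = 1) (hF : VanishesInPast ε δ m F) (hT : T < δ)
    (a : ℝ) : ∃ M ≥ 0, ∀ t ∈ Icc a T, ∀ y,
      ‖F (paraboloid ε t y)‖ ≤ {y | ∑ i, y i ^ 2 ≤ T}.indicator (fun _ => M) y := by
  have hcont : ContinuousOn (fun p : ℝ × (Fin n → ℝ) => F (paraboloid ε p.1 p.2))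
      (Icc a T ×ˢ {y | ∑ i, y i ^ 2 ≤ T}) :=
    hF.contDiffOn.continuousOn.comp (continuous_paraboloid ε).continuousOn fun p hp =>
      paraboloid_mem_paraboloidRegion hε (hp.1.2.trans_lt hT) p.2
  obtain ⟨M, hM⟩ :=
    (isCompact_Icc.prod (isCompact_setOf_sum_sq_le n T)).exists_bound_of_continuousOn
    hcont
  refine ⟨max M 0, le_max_right _ _, fun t ht y => ?_⟩
  by_cases hy : y ∈ {y | ∑ i, y i ^ 2 ≤ T}
  · rw [indicator_of_mem hy]
    exact (hM (t, y) ⟨ht, hy⟩).trans (le_max_left _ _)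
  · rw [indicator_of_notMem hy, norm_le_zero_iff]
    exact hF.comp_paraboloid_eq_zero hε (ht.2.trans_lt hT) (ht.2.trans (not_le.1 hy).le)

theorem hasDerivAt_comp_paraboloid (hε : ε * ε = 1) (hF : VanishesInPast ε δ 1 F) (ht : t < δ)
    (y : Fin n → ℝ) : HasDerivAt (fun t => F (paraboloid ε t y))
      (ε • pd 0 F (paraboloid ε t y)) t := by
  have hF' := (hF.differentiableAt (paraboloid_mem_paraboloidRegion hε ht y)).hasFDerivAt
  have hcomp := hF'.comp_hasDerivAt t (hasDerivAt_paraboloid ε t y)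
  rwa [map_smul] at hcomp

theorem hasDerivAt_moment (hε : ε * ε = 1) (hF : VanishesInPast ε δ 1 F) (ht : t < δ)
    (α : Fin n → ℕ) : HasDerivAt (moment ε F α) (ε • moment ε (pd 0 F) α t) t := by
  have hpd := hF.partialDeriv (m := 0) hε 0
  obtain ⟨T, htT, hT⟩ := exists_between ht
  obtain ⟨M, -, hM⟩ := hpd.exists_norm_comp_paraboloid_le hε hT (t - 1)
  have hs : Ioo (t - 1) T ∈ 𝓝 t := Ioo_mem_nhds (sub_one_lt t) htT
  have hbound : Integrable fun y : Fin n → ℝ =>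
      |ε| * (|coordMonomial α y| * {y | ∑ i, y i ^ 2 ≤ T}.indicator (fun _ => M) y) := by
    have hcont : Continuous fun y : Fin n → ℝ => |coordMonomial α y| * M :=
      ((contDiff_coordMonomial α).continuous.abs).mul_const M
    have hcompact := isCompact_setOf_sum_sq_le n T
    have hint := (integrable_indicator_iff hcompact.measurableSet).2
      (hcont.continuousOn.integrableOn_compact (μ := volume) hcompact)
    simpa only [indicator_mul_right] using hint.const_mul |ε|
  have hderiv := (hasDerivAt_integral_of_dominated_loc_of_deriv_le (μ := volume) hs
    (F' := fun t y => ε • coordMonomial α y • pd 0 F (paraboloid ε t y))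
    (by filter_upwards [hs] with t ht
        exact (hF.integrable_moment hε (ht.2.trans hT) α).aestronglyMeasurable)
    (hF.integrable_moment hε ht α)
    ((hpd.integrable_moment hε ht α).smul ε).aestronglyMeasurable
    (ae_of_all _ fun y t ht => ?_) hbound
    (ae_of_all _ fun y t ht => ?_)).2
  · rwa [integral_smul] at hderiv
  · rw [norm_smul, norm_smul, Real.norm_eq_abs, Real.norm_eq_abs]
    gcongr
    exact hM t (Ioo_subset_Icc_self ht) y
  · rw [smul_comm]
    exact (hF.hasDerivAt_comp_paraboloid hε (ht.2.trans hT) y).fun_const_smul _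

theorem differentiable_comp_paraboloid (hε : ε * ε = 1) (hF : VanishesInPast ε δ 1 F)
    (ht : t < δ) : Differentiable ℝ fun y => F (paraboloid ε t y) := fun y =>
  have ⟨_, hL, _⟩ := exists_hasFDerivAt_paraboloid ε t y
  DifferentiableAt.comp y (hF.differentiableAt (paraboloid_mem_paraboloidRegion hε ht y))
    hL.differentiableAt

theorem fderiv_comp_paraboloid_single (hε : ε * ε = 1) (hF : VanishesInPast ε δ 1 F)
    (ht : t < δ) (y : Fin n → ℝ) (i : Fin n) :
    fderiv ℝ (fun y => F (paraboloid ε t y)) y (Pi.single i 1) =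
      pd i.succ F (paraboloid ε t y) - (2 * ε * y i) • pd 0 F (paraboloid ε t y) := by
  obtain ⟨L, hL, hLsingle⟩ := exists_hasFDerivAt_paraboloid ε t y
  have hF' := (hF.differentiableAt (paraboloid_mem_paraboloidRegion hε ht y)).hasFDerivAt
  change fderiv ℝ (F ∘ paraboloid ε t) y (Pi.single i 1) = _
  rw [(hF'.comp y hL).fderiv, ContinuousLinearMap.comp_apply, hLsingle, map_sub, map_smul]
  rfl

theorem moment_pd_succ (hε : ε * ε = 1) (hF : VanishesInPast ε δ 1 F) (ht : t < δ)
    (α : Fin n → ℕ) (i : Fin n) : moment ε (pd i.succ F) α t =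
      (2 * ε) • moment ε (pd 0 F) (α + Pi.single i 1) t -
        α i • moment ε F (α - Pi.single i 1) t := by
  have hpd j := (hF.partialDeriv (m := 0) hε j).integrable_moment hε ht
  have hderiv (y : Fin n → ℝ) :
      coordMonomial α y • fderiv ℝ (fun y => F (paraboloid ε t y)) y (Pi.single i 1) =
      coordMonomial α y • pd i.succ F (paraboloid ε t y) -
        (2 * ε) • coordMonomial (α + Pi.single i 1) y • pd 0 F (paraboloid ε t y) := by
    rw [hF.fderiv_comp_paraboloid_single hε ht, coordMonomial_add_single, smul_sub, smul_smul,
      smul_smul, mul_comm (coordMonomial α y), mul_assoc (2 * ε)]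
  have hmonomial (y : Fin n → ℝ) :
      fderiv ℝ (coordMonomial α) y (Pi.single i 1) • F (paraboloid ε t y) =
      (α i : ℝ) • coordMonomial (α - Pi.single i 1) y • F (paraboloid ε t y) := by
    rw [fderiv_coordMonomial_single, mul_smul]
  have hsucc := hpd i.succ α
  have hzero := (hpd 0 (α + Pi.single i 1)).fun_smul (2 * ε)
  have hlower := (hF.integrable_moment hε ht (α - Pi.single i 1)).fun_smul (α i : ℝ)
  have hparts := integral_smul_fderiv_eq_neg_fderiv_smul_of_integrable (μ := volume)
    (f := coordMonomial α) (g := fun y => F (paraboloid ε t y)) (v := Pi.single i 1)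
    (by simpa only [hmonomial] using hlower) (by simp only [hderiv]; exact hsucc.sub hzero)
    (hF.integrable_moment hε ht α)
    (fun y _ => (contDiff_coordMonomial α).differentiable (by simp) y)
    (fun y _ => hF.differentiable_comp_paraboloid hε ht y)
  simp only [hderiv, hmonomial] at hparts
  rw [integral_sub hsucc hzero, integral_smul, integral_smul, Nat.cast_smul_eq_nsmul,
    sub_eq_iff_eq_add, neg_add_eq_sub] at hparts
  exact hparts

end VanishesInPast

end ParaboloidMoments

section MomentBounds

open Set Filter Topology MeasureTheory

variable {n m : ℕ} {ε δ t q N M : ℝ} {F G : (Fin (n + 1) → ℝ) → ℂ}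

theorem moment_congr (hε : ε * ε = 1) (ht : t < δ) (hFG : EqOn F G (paraboloidRegion n ε δ))
    (α : Fin n → ℕ) : moment ε F α t = moment ε G α t :=
  integral_congr_ae <| ae_of_all _ fun y =>
    congrArg (coordMonomial α y • ·) (hFG (paraboloid_mem_paraboloidRegion hε ht y))

theorem moment_const_mul (ε : ℝ) (c : ℂ) (F : (Fin (n + 1) → ℝ) → ℂ) (α : Fin n → ℕ) (t : ℝ) :
    moment ε (fun x => c * F x) α t = c * moment ε F α t := by
  simp only [moment, ← mul_smul_comm, integral_const_mul]

theorem moment_coord_mul (ε : ℝ) (i : Fin n) (F : (Fin (n + 1) → ℝ) → ℂ) (α : Fin n → ℕ)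
    (t : ℝ) : moment ε (fun x => x i.succ * F x) α t = moment ε F (α + Pi.single i 1) t := by
  refine integral_congr_ae (ae_of_all _ fun y => ?_)
  simp only [coordMonomial_add_single, paraboloid, Fin.cons_succ, Complex.real_smul,
    Complex.ofReal_mul]
  ring

theorem paraboloidRegion_subset {δ' : ℝ} (hδ : δ' ≤ δ) :
    paraboloidRegion n ε δ' ⊆ paraboloidRegion n ε δ := fun _ hx => lt_of_lt_of_le hx hδ

namespace VanishesInPast

theorem mono {δ' : ℝ} (hF : VanishesInPast ε δ m F) (hδ : δ' ≤ δ) : VanishesInPast ε δ' m F :=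
  ⟨hF.contDiffOn.mono (paraboloidRegion_subset hδ),
    fun x hx => hF.eq_zero x (paraboloidRegion_subset hδ hx)⟩

theorem congr (hF : VanishesInPast ε δ m F) (hGF : EqOn G F (paraboloidRegion n ε δ)) :
    VanishesInPast ε δ m G :=
  ⟨hF.contDiffOn.congr hGF, fun x hx hx₀ => (hGF hx).trans (hF.eq_zero x hx hx₀)⟩

theorem moment_zero (hε : ε * ε = 1) (hF : VanishesInPast ε δ m F) (hδ : 0 < δ) (α : Fin n → ℕ) :
    moment ε F α 0 = 0 :=
  integral_eq_zero_of_ae <| ae_of_all _ fun y => by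
    have hF₀ := hF.comp_paraboloid_eq_zero hε hδ (Finset.sum_nonneg fun i _ => sq_nonneg (y i))
    simp only [hF₀, smul_zero, Pi.zero_apply]

theorem eqOn_zero_of_moment_eq_zero (hε : ε * ε = 1) (hF : VanishesInPast ε δ m F)
    (hmoment : ∀ α, ∀ t ∈ Ico 0 δ, moment ε F α t = 0) :
    EqOn F 0 (paraboloidRegion n ε δ) := by
  intro x hx
  set T := ∑ i : Fin n, x i.succ ^ 2 + ε * x 0 with hT
  rcases le_or_gt 0 T with hT₀ | hT₀
  · have hpoint : paraboloid ε T (fun i => x i.succ) = x := by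
      rw [paraboloid, hT, add_sub_cancel_left, ← mul_assoc, hε, one_mul]
      exact Fin.cons_self_tail x
    have hzero := eq_zero_of_moments_eq_zero (hF.continuous_comp_paraboloid hε hx)
      (hF.hasCompactSupport_comp_paraboloid hε hx) fun α => hmoment α T ⟨hT₀, hx⟩
    rw [← hpoint]
    exact congrFun hzero fun i => x i.succ
  · have hsum : 0 ≤ ∑ i : Fin n, x i.succ ^ 2 := Finset.sum_nonneg fun i _ => sq_nonneg _
    exact hF.eq_zero x hx (by linarith)

end VanishesInPast

/-- `F` is continuous and vanishes in the past below the paraboloid `ε x₀ + |x'|² = δ`, and its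
moments satisfy the Cauchy-type bounds `|moment α t| ≤ N (q + t / q)^|α|`. Integration in `t` and
the factor `α i` produced by integrating a tangential derivative by parts compensate each other in
this scale of bounds. -/
structure MomentBound (ε δ q N : ℝ) (F : (Fin (n + 1) → ℝ) → ℂ) : Prop where
  vanishesInPast : VanishesInPast ε δ 0 F
  norm_moment_le : ∀ α, ∀ t ∈ Ico 0 δ, ‖moment ε F α t‖ ≤ N * (q + t / q) ^ ∑ i, α i

theorem abs_le_add_div {y : ℝ} (hq : 0 < q) (hy : y ^ 2 ≤ t) : |y| ≤ q + t / q := by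
  have ht : 0 ≤ t := (sq_nonneg y).trans hy
  refine abs_le_of_sq_le_sq (hy.trans ?_) (by positivity)
  have hsq : (q + t / q) ^ 2 = q ^ 2 + 2 * t + (t / q) ^ 2 := by
    field_simp
    ring
  rw [hsq]
  nlinarith [sq_nonneg q, sq_nonneg (t / q)]

theorem add_div_le_two_mul (hq : 0 < q) (ht : t ≤ q ^ 2) : q + t / q ≤ 2 * q := by
  have htq : t / q ≤ q := (div_le_iff₀ hq).2 (by rwa [← sq])
  linarith

theorem VanishesInPast.exists_momentBound {δ' : ℝ} (hε : ε * ε = 1) (hF : VanishesInPast ε δ m F)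
    (hδ : δ' < δ) (hq : 0 < q) : ∃ N, MomentBound ε δ' q N F := by
  obtain ⟨M, -, hM⟩ := hF.exists_norm_comp_paraboloid_le hε hδ 0
  refine ⟨∫ y, {y : Fin n → ℝ | ∑ i, y i ^ 2 ≤ δ'}.indicator (fun _ => M) y,
    (hF.of_le (Nat.zero_le m)).mono hδ.le, fun α t ht => ?_⟩
  have hcompact := isCompact_setOf_sum_sq_le n δ'
  have hint : Integrable ({y : Fin n → ℝ | ∑ i, y i ^ 2 ≤ δ'}.indicator fun _ => M) :=
    (integrable_indicator_iff hcompact.measurableSet).2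
      (integrableOn_const hcompact.measure_lt_top.ne)
  rw [← integral_mul_const]
  refine norm_integral_le_of_norm_le (hint.mul_const _) (ae_of_all _ fun y => ?_)
  rw [norm_smul, Real.norm_eq_abs, mul_comm]
  by_cases hy : t ≤ ∑ i, y i ^ 2
  · rw [hF.comp_paraboloid_eq_zero hε (ht.2.trans hδ) hy, norm_zero, zero_mul]
    have hnonneg := (norm_nonneg _).trans (hM t ⟨ht.1, ht.2.le⟩ y)
    exact mul_nonneg hnonneg (pow_nonneg (by have := ht.1; positivity) _)
  · have hcoord i : |y i| ≤ q + t / q := abs_le_add_div hq <|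
      (Finset.single_le_sum (fun j _ => sq_nonneg (y j)) (Finset.mem_univ i)).trans (not_le.1 hy).le
    exact mul_le_mul (hM t ⟨ht.1, ht.2.le⟩ y) (abs_coordMonomial_le α hcoord) (abs_nonneg _)
      ((norm_nonneg _).trans (hM t ⟨ht.1, ht.2.le⟩ y))

namespace MomentBound

theorem mono (hF : MomentBound ε δ q N F) (hq : 0 < q) (hN : N ≤ M) : MomentBound ε δ q M F :=
  ⟨hF.vanishesInPast, fun α t ht => (hF.norm_moment_le α t ht).trans <|
    mul_le_mul_of_nonneg_right hN (pow_nonneg (by have := ht.1; positivity) _)⟩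

theorem nonneg (hF : MomentBound ε δ q N F) (hδ : 0 < δ) : 0 ≤ N := by
  simpa using (norm_nonneg _).trans (hF.norm_moment_le 0 0 ⟨le_rfl, hδ⟩)

theorem congr (hε : ε * ε = 1) (hF : MomentBound ε δ q N F)
    (hGF : EqOn G F (paraboloidRegion n ε δ)) : MomentBound ε δ q N G :=
  ⟨hF.vanishesInPast.congr hGF, fun α t ht => by
    rw [moment_congr hε ht.2 hGF]; exact hF.norm_moment_le α t ht⟩

theorem add (hε : ε * ε = 1) (hF : MomentBound ε δ q N F) (hG : MomentBound ε δ q M G) :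
    MomentBound ε δ q (N + M) fun x => F x + G x := by
  refine ⟨hF.vanishesInPast.add hG.vanishesInPast, fun α t ht => ?_⟩
  have hadd : moment ε (fun x => F x + G x) α t = moment ε F α t + moment ε G α t := by
    simp only [moment, smul_add]
    exact integral_add (hF.vanishesInPast.integrable_moment hε ht.2 α)
      (hG.vanishesInPast.integrable_moment hε ht.2 α)
  rw [hadd, add_mul]
  exact norm_add_le_of_le (hF.norm_moment_le α t ht) (hG.norm_moment_le α t ht)

theorem const_mul (hF : MomentBound ε δ q N F) (c : ℂ) :
    MomentBound ε δ q (‖c‖ * N) fun x => c * F x := by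
  refine ⟨hF.vanishesInPast.mul_left contDiff_const, fun α t ht => ?_⟩
  rw [moment_const_mul, norm_mul, mul_assoc]
  gcongr
  exact hF.norm_moment_le α t ht

theorem norm_moment_add_single_le (hF : MomentBound ε δ q N F) (hq : 0 < q) (hδ : δ ≤ q ^ 2)
    (α : Fin n → ℕ) (i : Fin n) (ht : t ∈ Ico 0 δ) :
    ‖moment ε F (α + Pi.single i 1) t‖ ≤ 2 * q * N * (q + t / q) ^ ∑ j, α j := by
  have hsum : ∑ j, (α + Pi.single i 1 : Fin n → ℕ) j = ∑ j, α j + 1 := by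
    simp [Finset.sum_add_distrib, Pi.single_apply]
  have hbound := hF.norm_moment_le α t ht
  calc ‖moment ε F (α + Pi.single i 1) t‖ ≤ N * (q + t / q) ^ (∑ j, α j + 1) :=
        hsum ▸ hF.norm_moment_le (α + Pi.single i 1) t ht
    _ = N * (q + t / q) ^ (∑ j, α j) * (q + t / q) := by ring
    _ ≤ N * (q + t / q) ^ (∑ j, α j) * (2 * q) := mul_le_mul_of_nonneg_left
        (add_div_le_two_mul hq (ht.2.le.trans hδ)) ((norm_nonneg _).trans hbound)
    _ = 2 * q * N * (q + t / q) ^ ∑ j, α j := by ring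

theorem coord_mul (hF : MomentBound ε δ q N F) (hq : 0 < q) (hδ : δ ≤ q ^ 2) (i : Fin n) :
    MomentBound ε δ q (2 * q * N) fun x => x i.succ * F x := by
  refine ⟨hF.vanishesInPast.mul_left (ofRealCLM.contDiff.comp (contDiff_apply ℝ ℝ i.succ)),
    fun α t ht => ?_⟩
  rw [moment_coord_mul]
  exact hF.norm_moment_add_single_le hq hδ α i ht

theorem norm_moment_le_of_pd_zero (hε : ε * ε = 1) (hF : VanishesInPast ε δ 1 F)
    (hF₀ : MomentBound ε δ q N (pd 0 F)) (hq : 0 < q) (α : Fin n → ℕ) (ht : t ∈ Ico 0 δ) :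
    ‖moment ε F α t‖ ≤ N * q / (∑ i, α i + 1 : ℕ) * (q + t / q) ^ (∑ i, α i + 1) := by
  set k := ∑ i, α i
  have hderiv (x : ℝ) : HasDerivAt (fun t => N * q / (k + 1 : ℕ) * (q + t / q) ^ (k + 1))
      (N * (q + x / q) ^ k) x := by
    have hpow := ((((hasDerivAt_id' x).div_const q).const_add q).fun_pow (k + 1)).const_mul
      (N * q / (k + 1 : ℕ))
    refine hpow.congr_deriv ?_
    rw [Nat.add_sub_cancel]
    field_simp
  have hnorm : ‖ε‖ = 1 := (abs_eq zero_le_one).2 (mul_self_eq_one_iff.1 hε)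
  have hlt {s : ℝ} (hs : s ≤ t) : s < δ := hs.trans_lt ht.2
  refine image_norm_le_of_norm_deriv_right_le_deriv_boundary
    (fun s hs => (hF.hasDerivAt_moment hε (hlt hs.2) α).continuousAt.continuousWithinAt)
    (fun s hs => (hF.hasDerivAt_moment hε (hlt hs.2.le) α).hasDerivWithinAt) ?_ hderiv
    (fun s hs => ?_) (right_mem_Icc.2 ht.1)
  · rw [hF.moment_zero hε (hlt ht.1), norm_zero]
    have hN := hF₀.nonneg (hlt ht.1)
    positivity
  · rw [norm_smul, hnorm, one_mul]
    exact hF₀.norm_moment_le α s ⟨hs.1, hlt hs.2.le⟩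

theorem of_pd_zero (hε : ε * ε = 1) (hF : VanishesInPast ε δ 1 F)
    (hF₀ : MomentBound ε δ q N (pd 0 F)) (hq : 0 < q) (hδ : δ ≤ q ^ 2) :
    MomentBound ε δ q (2 * q ^ 2 * N) F := by
  refine ⟨hF.of_le zero_le_one, fun α t ht => ?_⟩
  have hnonneg := (norm_nonneg _).trans (hF₀.norm_moment_le α t ht)
  calc ‖moment ε F α t‖ ≤ N * q / (∑ i, α i + 1 : ℕ) * (q + t / q) ^ (∑ i, α i + 1) :=
        norm_moment_le_of_pd_zero hε hF hF₀ hq α ht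
    _ = N * (q + t / q) ^ (∑ i, α i) * q * (q + t / q) / (∑ i, α i + 1 : ℕ) := by ring
    _ ≤ N * (q + t / q) ^ (∑ i, α i) * q * (q + t / q) :=
        div_le_self (by have := ht.1; positivity) (mod_cast Nat.le_add_left 1 _)
    _ ≤ N * (q + t / q) ^ (∑ i, α i) * q * (2 * q) := by
        gcongr
        exact add_div_le_two_mul hq (ht.2.le.trans hδ)
    _ = 2 * q ^ 2 * N * (q + t / q) ^ ∑ i, α i := by ring

theorem norm_nsmul_moment_sub_single_le (hε : ε * ε = 1) (hF : VanishesInPast ε δ 1 F)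
    (hF₀ : MomentBound ε δ q N (pd 0 F)) (hq : 0 < q) (α : Fin n → ℕ) (i : Fin n)
    (ht : t ∈ Ico 0 δ) :
    ‖α i • moment ε F (α - Pi.single i 1) t‖ ≤ q * N * (q + t / q) ^ ∑ j, α j := by
  have hnonneg := (norm_nonneg _).trans (hF₀.norm_moment_le α t ht)
  rcases Nat.eq_zero_or_pos (α i) with hi | hi
  · rw [hi, zero_smul, norm_zero, mul_assoc]
    positivity
  have hsum : ∑ j, (α - Pi.single i 1 : Fin n → ℕ) j + 1 = ∑ j, α j := by
    have hle : Pi.single i 1 ≤ α := fun j => by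
      rcases eq_or_ne j i with rfl | hj
      · rwa [Pi.single_eq_same]
      · simp [hj]
    have hsplit : α = (α - Pi.single i 1) + Pi.single i 1 := (tsub_add_cancel_of_le hle).symm
    conv_rhs => rw [hsplit]
    simp [Finset.sum_add_distrib, Pi.single_apply]
  have hpos : 0 < ∑ j, α j := hsum ▸ Nat.succ_pos _
  have hmoment := norm_moment_le_of_pd_zero hε hF hF₀ hq (α - Pi.single i 1) ht
  rw [hsum] at hmoment
  have hle : (α i : ℝ) / (∑ j, α j : ℕ) ≤ 1 := (div_le_one (by exact_mod_cast hpos)).2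
    (by exact_mod_cast Finset.single_le_sum (fun j _ => Nat.zero_le (α j)) (Finset.mem_univ i))
  calc ‖α i • moment ε F (α - Pi.single i 1) t‖ = α i * ‖moment ε F (α - Pi.single i 1) t‖ := by
        rw [nsmul_eq_mul, norm_mul, Complex.norm_natCast]
    _ ≤ α i * (N * q / (∑ j, α j : ℕ) * (q + t / q) ^ ∑ j, α j) := by gcongr
    _ = α i / (∑ j, α j : ℕ) * (q * (N * (q + t / q) ^ ∑ j, α j)) := by ring
    _ ≤ q * (N * (q + t / q) ^ ∑ j, α j) := mul_le_of_le_one_left (by positivity) hle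
    _ = q * N * (q + t / q) ^ ∑ j, α j := by ring

theorem pd_succ (hε : ε * ε = 1) (hF : VanishesInPast ε δ 1 F)
    (hF₀ : MomentBound ε δ q N (pd 0 F)) (hq : 0 < q) (hδ : δ ≤ q ^ 2) (i : Fin n) :
    MomentBound ε δ q (5 * q * N) (pd i.succ F) := by
  refine ⟨hF.partialDeriv (m := 0) hε i.succ, fun α t ht => ?_⟩
  have hnorm : ‖2 * ε‖ = 2 := by
    have habs : |ε| = 1 := (abs_eq zero_le_one).2 (mul_self_eq_one_iff.1 hε)
    rw [norm_mul, Real.norm_ofNat, Real.norm_eq_abs, habs, mul_one]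
  calc ‖moment ε (pd i.succ F) α t‖
      ≤ ‖(2 * ε) • moment ε (pd 0 F) (α + Pi.single i 1) t‖ +
          ‖α i • moment ε F (α - Pi.single i 1) t‖ := by
        rw [hF.moment_pd_succ hε ht.2]
        exact norm_sub_le _ _
    _ ≤ 2 * (2 * q * N * (q + t / q) ^ ∑ j, α j) + q * N * (q + t / q) ^ ∑ j, α j := by
        rw [norm_smul, hnorm]
        gcongr
        · exact hF₀.norm_moment_add_single_le hq hδ α i ht
        · exact norm_nsmul_moment_sub_single_le hε hF hF₀ hq α i ht
    _ = 5 * q * N * (q + t / q) ^ ∑ j, α j := by ring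

theorem zero_of_halving (hF : MomentBound ε δ q N F)
    (hhalf : ∀ N, MomentBound ε δ q N F → MomentBound ε δ q (N / 2) F) :
    MomentBound ε δ q 0 F := by
  have hpow (k : ℕ) : MomentBound ε δ q (N / 2 ^ k) F := by
    induction k with
    | zero => simpa using hF
    | succ k ih => simpa only [pow_succ, div_div] using hhalf _ ih
  have hlim : Tendsto (fun k : ℕ => N / 2 ^ k) atTop (𝓝 0) := by
    simpa only [mul_zero, div_eq_mul_inv, inv_pow] using
      (tendsto_pow_atTop_nhds_zero_of_lt_one (by norm_num) (by norm_num :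
        (2 : ℝ)⁻¹ < 1)).const_mul N
  exact ⟨hF.vanishesInPast, fun α t ht => ge_of_tendsto' (hlim.mul_const _) fun k =>
    (hpow k).norm_moment_le α t ht⟩

theorem eqOn_zero (hε : ε * ε = 1) (hF : MomentBound ε δ q 0 F) :
    EqOn F 0 (paraboloidRegion n ε δ) :=
  hF.vanishesInPast.eqOn_zero_of_moment_eq_zero hε fun α t ht =>
    norm_le_zero_iff.1 (by simpa only [zero_mul] using hF.norm_moment_le α t ht)

end MomentBound

end MomentBounds

section ZeroExtension

open Set Filter Topology

variable {E F : Type*} [NormedAddCommGroup E] [NormedAddCommGroup F] {H : Set E} {f : E → F}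
  {x : E}

theorem indicator_eventuallyEq_zero (hx : x ∉ closure H) (f : E → F) :
    H.indicator f =ᶠ[𝓝 x] fun _ => 0 := by
  filter_upwards [isClosed_closure.isOpen_compl.mem_nhds hx] with y hy
  exact indicator_of_notMem (fun hyH => hy (subset_closure hyH)) f

theorem continuousOn_indicator {X Y : Type*} [TopologicalSpace X] [TopologicalSpace Y] [Zero Y]
    {H V : Set X} {f : X → Y} (hf : ContinuousOn f (V ∩ closure H))
    (hfrontier : ∀ x ∈ V ∩ frontier H, f x = 0) : ContinuousOn (H.indicator f) V := by
  classical
  rw [← piecewise_eq_indicator]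
  exact hf.piecewise hfrontier continuousOn_const

variable [NormedSpace ℝ E] [NormedSpace ℝ F]

theorem hasFDerivAt_indicator {f' : E → E →L[ℝ] F} (hH : IsOpen H)
    (hf : x ∈ closure H → HasFDerivAt f (f' x) x)
    (hfrontier : x ∈ frontier H → f x = 0 ∧ f' x = 0) :
    HasFDerivAt (H.indicator f) (H.indicator f' x) x := by
  by_cases hx : x ∈ H
  · rw [indicator_of_mem hx]
    exact (hf (subset_closure hx)).congr_of_eventuallyEq
      (eqOn_indicator.eventuallyEq_of_mem (hH.mem_nhds hx))
  rw [indicator_of_notMem hx]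
  by_cases hcl : x ∈ closure H
  · obtain ⟨hfx, hfx'⟩ := hfrontier (hH.frontier_eq ▸ ⟨hcl, hx⟩)
    have hlittleO := (hasFDerivAt_iff_isLittleO (f := f)).1 (hf hcl)
    rw [hasFDerivAt_iff_isLittleO, indicator_of_notMem hx]
    simp only [hfx, hfx', sub_zero, zero_apply] at hlittleO ⊢
    exact (Asymptotics.IsBigO.of_bound' (Eventually.of_forall
      (norm_indicator_le_norm_self f))).trans_isLittleO hlittleO
  · exact (hasFDerivAt_const (0 : F) x).congr_of_eventuallyEq (indicator_eventuallyEq_zero hcl f)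

theorem contDiffOn_two_indicator {U V : Set E} {u : E → F} (hH : IsOpen H) (hU : IsOpen U)
    (hV : IsOpen V) (hVU : V ∩ closure H ⊆ U) (hu : ContDiffOn ℝ 2 u U)
    (hjet : ∀ x ∈ V ∩ frontier H, jet u x = 0) : ContDiffOn ℝ 2 (H.indicator u) V := by
  simp only [jet_eq_zero_iff] at hjet
  have hcont : ContinuousOn (fderiv ℝ (fderiv ℝ u)) U :=
    Jet.secondDeriv.continuous.comp_continuousOn (continuousOn_jet hU hu)
  have hfirst : ∀ x ∈ V, HasFDerivAt (H.indicator u) (H.indicator (fderiv ℝ u) x) x :=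
    fun x hx => hasFDerivAt_indicator hH
      (fun hcl => ((hu.contDiffAt (hU.mem_nhds (hVU ⟨hx, hcl⟩))).differentiableAt
        two_ne_zero).hasFDerivAt)
      fun hfr => ⟨(hjet x ⟨hx, hfr⟩).1, (hjet x ⟨hx, hfr⟩).2.1⟩
  have hsecond : ∀ x ∈ V, HasFDerivAt (H.indicator (fderiv ℝ u))
      (H.indicator (fderiv ℝ (fderiv ℝ u)) x) x := fun x hx => hasFDerivAt_indicator hH
    (fun hcl => hasFDerivAt_fderiv_of_contDiffOn_two hU hu (hVU ⟨hx, hcl⟩))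
    fun hfr => (hjet x ⟨hx, hfr⟩).2
  have hthird : ContinuousOn (H.indicator (fderiv ℝ (fderiv ℝ u))) V :=
    continuousOn_indicator (hcont.mono hVU) fun x hx => (hjet x hx).2.2
  exact contDiffOn_two_of_hasFDerivAt hV hfirst hsecond hthird

end ZeroExtension

section CauchyUniqueness

open Set Filter Topology

variable {b₀ b₁ b₂ : ℂ} {n : ℕ} {ε δ q N : ℝ}

theorem MomentBound.pd_succ_pd_succ {w : (Fin (n + 1) → ℝ) → ℂ} (hε : ε * ε = 1)
    (hw : VanishesInPast ε δ 2 w) (hN : MomentBound ε δ q N (pd 0 (pd 0 w))) (hq : 0 < q)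
    (hδ : δ ≤ q ^ 2) (i j : Fin n) :
    MomentBound ε δ q (5 * q * (5 * q * N)) (pd j.succ (pd i.succ w)) := by
  have hcomm : EqOn (pd 0 (pd i.succ w)) (pd i.succ (pd 0 w)) (paraboloidRegion n ε δ) :=
    fun x hx => pd_comm
      (hw.contDiffOn.contDiffAt ((isOpen_paraboloidRegion n ε δ).mem_nhds hx)) _ _
  have hmixed := (hN.pd_succ hε (hw.partialDeriv (m := 1) hε 0) hq hδ i).congr hε hcomm
  exact hmixed.pd_succ hε (hw.partialDeriv (m := 1) hε i.succ) hq hδ j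

theorem Pop_eq_zero_iff {u : (Fin 3 → ℝ) → ℂ} {x : Fin 3 → ℝ} : Pop b₀ b₁ b₂ u x = 0 ↔
    pd 0 (pd 0 u) x = 2 * (x 1 * pd 2 (pd 0 u) x) + (pd 1 (pd 1 u) x +
      (x 1 * (x 1 * (x 1 * pd 2 (pd 2 u) x)) +
        (I * b₀ * pd 0 u x + (I * b₁ * pd 1 u x + I * b₂ * pd 2 u x)))) := by
  rw [← sub_eq_zero (a := pd 0 (pd 0 u) x), Pop, Pmod]
  ring_nf

theorem momentBound_factor_le {a b c : ℝ} (ha : 0 ≤ a) (hb : 0 ≤ b) (hc : 0 ≤ c) (hq : 0 < q)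
    (hqabc : 10 * q * (1 + a + b + c) ≤ 1) :
    45 * q ^ 2 + 200 * q ^ 5 + 2 * q ^ 2 * a + 10 * q ^ 3 * (b + c) ≤ 1 / 2 := by
  have hsum : q * (a + b + c) ≤ 1 / 10 := by linarith
  have hq₁ : q ≤ 1 / 10 := by nlinarith [mul_nonneg hq.le (add_nonneg (add_nonneg ha hb) hc)]
  have hsq : q ^ 2 ≤ (1 / 10) ^ 2 := by gcongr
  have hfifth : q ^ 5 ≤ (1 / 10) ^ 5 := by gcongr
  have hcubic : 10 * q ^ 3 * (b + c) ≤ 2 * q * (q * (b + c)) := by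
    calc 10 * q ^ 3 * (b + c) = 10 * q * (q * (q * (b + c))) := by ring
      _ ≤ 2 * (q * (q * (b + c))) := by gcongr; linarith
      _ = 2 * q * (q * (b + c)) := by ring
  have hlower : 2 * q * (q * (a + b + c)) ≤ 2 * (1 / 10) * (1 / 10) := by gcongr
  linarith

theorem MomentBound.half_of_Pop_eq_zero {w : (Fin 3 → ℝ) → ℂ} (hε : ε * ε = 1)
    (hw : VanishesInPast ε δ 2 w) (hPw : ∀ x ∈ paraboloidRegion 2 ε δ, Pop b₀ b₁ b₂ w x = 0)
    (hq : 0 < q) (hqb : 10 * q * (1 + ‖b₀‖ + ‖b₁‖ + ‖b₂‖) ≤ 1) (hδ₀ : 0 < δ) (hδ : δ ≤ q ^ 2)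
    (hN : MomentBound ε δ q N (pd 0 (pd 0 w))) : MomentBound ε δ q (N / 2) (pd 0 (pd 0 w)) := by
  have hw₀ := hw.partialDeriv (m := 1) hε 0
  have hN₀ := hN.of_pd_zero hε hw₀ hq hδ
  have hfirst (i : Fin 2) := hN₀.pd_succ hε (hw.of_le one_le_two) hq hδ i
  have hmixed := ((hN.pd_succ hε hw₀ hq hδ 1).coord_mul hq hδ 0).const_mul 2
  have hsecond (i : Fin 2) := hN.pd_succ_pd_succ hε hw hq hδ i i
  have hcubic := (((hsecond 1).coord_mul hq hδ 0).coord_mul hq hδ 0).coord_mul hq hδ 0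
  have hlower := (hN₀.const_mul (I * b₀)).add hε
    (((hfirst 0).const_mul (I * b₁)).add hε ((hfirst 1).const_mul (I * b₂)))
  have hsum := (hmixed.add hε ((hsecond 0).add hε (hcubic.add hε hlower))).congr hε
    fun x hx => Pop_eq_zero_iff.1 (hPw x hx)
  refine hsum.mono hq ?_
  have hfactor := momentBound_factor_le (norm_nonneg b₀) (norm_nonneg b₁) (norm_nonneg b₂) hq hqb
  simp only [norm_mul, norm_I, one_mul, norm_ofNat]
  linarith [mul_le_mul_of_nonneg_left hfactor (hN.nonneg hδ₀)]

theorem VanishesInPast.eqOn_zero_of_Pop_eq_zero {w : (Fin 3 → ℝ) → ℂ} (hε : ε * ε = 1)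
    (hw : VanishesInPast ε δ 2 w) (hPw : ∀ x ∈ paraboloidRegion 2 ε δ, Pop b₀ b₁ b₂ w x = 0)
    (hq : 0 < q) (hqb : 10 * q * (1 + ‖b₀‖ + ‖b₁‖ + ‖b₂‖) ≤ 1) (hδ₀ : 0 < δ) (hδ : δ ≤ q ^ 2) :
    EqOn w 0 (paraboloidRegion 2 ε δ) := by
  intro x hx
  obtain ⟨δ', hlt, hδ'⟩ := exists_between (max_lt hδ₀ hx)
  rw [max_lt_iff] at hlt
  have hw' := hw.mono hδ'.le
  have hPw' : ∀ x ∈ paraboloidRegion 2 ε δ', Pop b₀ b₁ b₂ w x = 0 :=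
    fun x hx => hPw x (paraboloidRegion_subset hδ'.le hx)
  have hq' : δ' ≤ q ^ 2 := hδ'.le.trans hδ
  obtain ⟨N, hN⟩ := ((hw.partialDeriv (m := 1) hε 0).partialDeriv (m := 0) hε 0).exists_momentBound
    hε hδ' hq
  have hsecond := hN.zero_of_halving fun N hN =>
    hN.half_of_Pop_eq_zero hε hw' hPw' hq hqb hlt.1 hq'
  have hfirst := hsecond.of_pd_zero hε (hw'.partialDeriv (m := 1) hε 0) hq hq'
  rw [mul_zero] at hfirst
  have hzero := hfirst.of_pd_zero hε (hw'.of_le one_le_two) hq hq'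
  rw [mul_zero] at hzero
  exact hzero.eqOn_zero hε hlt.2

theorem VanishesInPast.Pop_eq_zero {w : (Fin 3 → ℝ) → ℂ} (hε : ε * ε = 1)
    (hw : VanishesInPast ε δ 2 w) {x : Fin 3 → ℝ} (hx : x ∈ paraboloidRegion 2 ε δ)
    (hx₀ : ε * x 0 ≤ 0) : Pop b₀ b₁ b₂ w x = 0 := by
  have hfirst i := hw.partialDeriv (m := 1) hε i
  have hsecond i j := ((hfirst j).partialDeriv (m := 0) hε i).eq_zero x hx hx₀
  simp only [Pop, Pmod, hsecond, (hfirst _).eq_zero x hx hx₀, mul_zero, sub_zero, add_zero]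

theorem pd_eq_zero_of_eq_zero_on_hyperplane {U : Set (Fin n → ℝ)} (hU : IsOpen U) {i j : Fin n}
    (hij : i ≠ j) {f : (Fin n → ℝ) → ℂ} (hf : ∀ x ∈ U, x j = 0 → f x = 0) {x : Fin n → ℝ}
    (hx : x ∈ U) (hxj : x j = 0) (hfx : DifferentiableAt ℝ f x) : pd i f x = 0 := by
  have hline : Tendsto (fun t : ℝ => x + t • (Pi.single i 1 : Fin n → ℝ)) (𝓝 0) (𝓝 x) :=
    Continuous.tendsto' (by fun_prop) _ _ (by simp)
  have hzero : (fun t : ℝ => f (x + t • Pi.single i 1)) =ᶠ[𝓝 0] fun _ => 0 := by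
    filter_upwards [hline (hU.mem_nhds hx)] with t ht
    exact hf _ ht (by simp [hxj, hij.symm])
  rw [pd, ← hfx.lineDeriv_eq_fderiv, lineDeriv, hzero.deriv_eq, deriv_const]

theorem eq_zero_of_apply_single_eq_zero {F : Type*} [NormedAddCommGroup F] [NormedSpace ℝ F]
    {L : (Fin n → ℝ) →L[ℝ] F} (hL : ∀ i, L (Pi.single i 1) = 0) : L = 0 :=
  ContinuousLinearMap.coe_injective
    (LinearMap.pi_ext' fun i => LinearMap.ext_ring (by simpa using hL i))

theorem jet_eq_zero_of_pd_eq_zero {u : (Fin n → ℝ) → ℂ} {x : Fin n → ℝ}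
    (hu : ContDiffAt ℝ 2 u x) (hvalue : u x = 0) (hfirst : ∀ i, pd i u x = 0)
    (hsecond : ∀ i j, pd i (pd j u) x = 0) : jet u x = 0 := by
  refine jet_eq_zero_iff.2 ⟨hvalue, eq_zero_of_apply_single_eq_zero hfirst,
    eq_zero_of_apply_single_eq_zero fun i => eq_zero_of_apply_single_eq_zero fun j => ?_⟩
  rw [← pd_pd_eq_fderiv_fderiv hu, hsecond]

theorem IsCauchySolution.jet_eq_zero {U : Set (Fin 3 → ℝ)} (hU : IsOpen U)
    {w : (Fin 3 → ℝ) → ℂ} (hw : IsCauchySolution (Pop b₀ b₁ b₂) U 0 0 w) {x : Fin 3 → ℝ}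
    (hx : x ∈ U) (hx₀ : x 0 = 0) : jet w x = 0 := by
  have hw₂ x (hx : x ∈ U) : ContDiffAt ℝ 2 w x := hw.1.contDiffAt (hU.mem_nhds hx)
  have hcons {x : Fin 3 → ℝ} (hx₀ : x 0 = 0) : Fin.cons 0 (Fin.tail x) = x :=
    hx₀ ▸ Fin.cons_self_tail x
  have hdata x (hx : x ∈ U) (hx₀ : x 0 = 0) := hw.2.2 (Fin.tail x) ((hcons hx₀).symm ▸ hx)
  have hvalue x (hx : x ∈ U) (hx₀ : x 0 = 0) : w x = 0 := by
    simpa only [hcons hx₀, Pi.zero_apply] using (hdata x hx hx₀).1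
  have hfirst i x (hx : x ∈ U) (hx₀ : x 0 = 0) : pd i w x = 0 := by
    rcases eq_or_ne i 0 with rfl | hi
    · simpa [hcons hx₀] using (hdata x hx hx₀).2
    · exact pd_eq_zero_of_eq_zero_on_hyperplane hU hi hvalue hx hx₀
        ((hw₂ x hx).differentiableAt two_ne_zero)
  have htangential i j (hi : i ≠ 0) : pd i (pd j w) x = 0 :=
    pd_eq_zero_of_eq_zero_on_hyperplane hU hi (hfirst j) hx hx₀
      (((contDiffOn_pd (m := 1) hw.1 hU (by norm_num) j).contDiffAt
        (hU.mem_nhds hx)).differentiableAt one_ne_zero)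
  refine jet_eq_zero_of_pd_eq_zero (hw₂ x hx) (hvalue x hx hx₀) (fun i => hfirst i x hx hx₀)
    fun i j => ?_
  rcases eq_or_ne i 0 with rfl | hi
  · rcases eq_or_ne j 0 with rfl | hj
    · simpa [htangential, hfirst _ x hx hx₀] using Pop_eq_zero_iff.1 (hw.2.1 x hx)
    · rw [pd_comm (hw₂ x hx), htangential j 0 hj]
  · exact htangential i j hi

variable {u₀ u₁ : (Fin 2 → ℝ) → ℂ} {u v w : (Fin 3 → ℝ) → ℂ}

theorem mem_paraboloidRegion_of_mem_Dset (hε : ε * ε = 1) {x : Fin 3 → ℝ} (hx : x ∈ Dset δ) :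
    x ∈ paraboloidRegion 2 ε δ := by
  have hx' : x 1 ^ 2 + x 2 ^ 2 + |x 0| < δ := hx
  have hlt : x 1 ^ 2 + x 2 ^ 2 + ε * x 0 < δ := by
    rcases mul_self_eq_one_iff.1 hε with rfl | rfl <;>
      linarith [le_abs_self (x 0), neg_le_abs (x 0)]
  simpa [paraboloidRegion, Fin.sum_univ_two] using hlt

theorem mem_Dset_of_mem_paraboloidRegion (hε : ε * ε = 1) {x : Fin 3 → ℝ}
    (hx : x ∈ paraboloidRegion 2 ε δ) (hx₀ : 0 ≤ ε * x 0) : x ∈ Dset δ := by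
  have habs : |x 0| = ε * x 0 := by
    rw [← abs_of_nonneg hx₀, abs_mul, (abs_eq zero_le_one).2 (mul_self_eq_one_iff.1 hε), one_mul]
  simpa [paraboloidRegion, Fin.sum_univ_two, Dset, habs] using hx

/-- The open half-space `ε x₀ > 0`, which for `ε = ±1` lies on one side of the initial
hyperplane. -/
def future (n : ℕ) (ε : ℝ) : Set (Fin (n + 1) → ℝ) := {x | 0 < ε * x 0}

theorem isOpen_future (n : ℕ) (ε : ℝ) : IsOpen (future n ε) :=
  isOpen_lt continuous_const (by fun_prop)

theorem nonneg_of_mem_closure_future {x : Fin (n + 1) → ℝ} (hx : x ∈ closure (future n ε)) :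
    0 ≤ ε * x 0 :=
  closure_lt_subset_le continuous_const (by fun_prop) hx

theorem eq_zero_of_mem_frontier_future (hε : ε * ε = 1) {x : Fin (n + 1) → ℝ}
    (hx : x ∈ frontier (future n ε)) : x 0 = 0 := by
  have hcont : Continuous fun y : Fin (n + 1) → ℝ => ε * y 0 := by fun_prop
  have hx₀ : 0 = ε * x 0 := frontier_lt_subset_eq continuous_const hcont hx
  exact (mul_eq_zero.1 hx₀.symm).resolve_left (left_ne_zero_of_mul_eq_one hε)

theorem IsCauchySolution.vanishesInPast_indicator (hε : ε * ε = 1)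
    (hw : IsCauchySolution (Pop b₀ b₁ b₂) (Dset δ) 0 0 w) :
    VanishesInPast ε δ 2 ((future 2 ε).indicator w) := by
  have hmem {x : Fin 3 → ℝ} (hx : x ∈ paraboloidRegion 2 ε δ) (hcl : x ∈ closure (future 2 ε)) :
      x ∈ Dset δ := mem_Dset_of_mem_paraboloidRegion hε hx (nonneg_of_mem_closure_future hcl)
  refine ⟨contDiffOn_two_indicator (isOpen_future 2 ε) (isOpen_Dset δ)
    (isOpen_paraboloidRegion 2 ε δ) (fun x hx => hmem hx.1 hx.2) hw.1 fun x hx => ?_,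
    fun x _ hx₀ => indicator_of_notMem (s := future 2 ε) (not_lt.2 hx₀) w⟩
  exact hw.jet_eq_zero (isOpen_Dset δ) (hmem hx.1 (frontier_subset_closure hx.2))
    (eq_zero_of_mem_frontier_future hε hx.2)

theorem IsCauchySolution.Pop_indicator_eq_zero (hε : ε * ε = 1)
    (hw : IsCauchySolution (Pop b₀ b₁ b₂) (Dset δ) 0 0 w) {x : Fin 3 → ℝ}
    (hx : x ∈ paraboloidRegion 2 ε δ) :
    Pop b₀ b₁ b₂ ((future 2 ε).indicator w) x = 0 := by
  rcases lt_or_ge 0 (ε * x 0) with hx₀ | hx₀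
  · have hxD := mem_Dset_of_mem_paraboloidRegion hε hx hx₀.le
    rw [← hw.2.1 x hxD]
    exact (Pop_congr ((isOpen_future 2 ε).inter (isOpen_Dset δ)) (hw.1.mono inter_subset_right)
      (eqOn_indicator.symm.mono inter_subset_left) ⟨hx₀, hxD⟩).symm
  · exact (hw.vanishesInPast_indicator hε).Pop_eq_zero hε hx hx₀

theorem IsCauchySolution.eq_zero_of_future (hε : ε * ε = 1) (hq : 0 < q)
    (hqb : 10 * q * (1 + ‖b₀‖ + ‖b₁‖ + ‖b₂‖) ≤ 1) (hδ₀ : 0 < δ) (hδ : δ ≤ q ^ 2)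
    (hw : IsCauchySolution (Pop b₀ b₁ b₂) (Dset δ) 0 0 w) {x : Fin 3 → ℝ} (hx : x ∈ Dset δ)
    (hx₀ : 0 < ε * x 0) : w x = 0 :=
  (indicator_of_mem (s := future 2 ε) hx₀ w).symm.trans
    ((hw.vanishesInPast_indicator hε).eqOn_zero_of_Pop_eq_zero hε
      (fun _ => hw.Pop_indicator_eq_zero hε) hq hqb hδ₀ hδ
      (mem_paraboloidRegion_of_mem_Dset hε hx))

theorem IsCauchySolution.eqOn_zero (hq : 0 < q) (hqb : 10 * q * (1 + ‖b₀‖ + ‖b₁‖ + ‖b₂‖) ≤ 1)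
    (hδ₀ : 0 < δ) (hδ : δ ≤ q ^ 2) (hw : IsCauchySolution (Pop b₀ b₁ b₂) (Dset δ) 0 0 w) :
    EqOn w 0 (Dset δ) := by
  intro x hx
  rcases lt_trichotomy (x 0) 0 with hx₀ | hx₀ | hx₀
  · exact hw.eq_zero_of_future (ε := -1) (by norm_num) hq hqb hδ₀ hδ hx (by linarith)
  · exact (jet_eq_zero_iff.1 (hw.jet_eq_zero (isOpen_Dset δ) hx hx₀)).1
  · exact hw.eq_zero_of_future (ε := 1) (by norm_num) hq hqb hδ₀ hδ hx (by linarith)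

theorem IsCauchySolution.sub {v₀ v₁ : (Fin 2 → ℝ) → ℂ} {U : Set (Fin 3 → ℝ)} (hU : IsOpen U)
    (hu : IsCauchySolution (Pop b₀ b₁ b₂) U u₀ u₁ u)
    (hv : IsCauchySolution (Pop b₀ b₁ b₂) U v₀ v₁ v) :
    IsCauchySolution (Pop b₀ b₁ b₂) U (u₀ - v₀) (u₁ - v₁) fun x => u x - v x := by
  have hjet x (hx : x ∈ U) := jet_sub hU hu.1 hv.1 hx
  refine ⟨hu.1.sub hv.1, fun x hx => ?_, fun x' hx' => ⟨?_, ?_⟩⟩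
  · have hUx := hU.mem_nhds hx
    rw [← popForm_jet b₀ b₁ b₂ ((hu.1.sub hv.1).contDiffAt hUx), hjet x hx, map_sub,
      popForm_jet b₀ b₁ b₂ (hu.1.contDiffAt hUx), popForm_jet b₀ b₁ b₂ (hv.1.contDiffAt hUx),
      hu.2.1 x hx, hv.2.1 x hx, sub_zero]
  · exact congrArg₂ (· - ·) (hu.2.2 x' hx').1 (hv.2.2 x' hx').1
  · rw [← firstPartial_jet, hjet _ hx', map_sub, firstPartial_jet, firstPartial_jet, mul_sub,
      (hu.2.2 x' hx').2, (hv.2.2 x' hx').2, Pi.sub_apply]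

theorem IsCauchySolution.eqOn (hq : 0 < q) (hqb : 10 * q * (1 + ‖b₀‖ + ‖b₁‖ + ‖b₂‖) ≤ 1)
    (hδ₀ : 0 < δ) (hδ : δ ≤ q ^ 2) (hu : IsCauchySolution (Pop b₀ b₁ b₂) (Dset δ) u₀ u₁ u)
    (hv : IsCauchySolution (Pop b₀ b₁ b₂) (Dset δ) u₀ u₁ v) : EqOn u v (Dset δ) := by
  have hw := hu.sub (isOpen_Dset δ) hv
  rw [sub_self, sub_self] at hw
  exact fun x hx => sub_eq_zero.1 (hw.eqOn_zero hq hqb hδ₀ hδ hx)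

theorem exists_pos_forall_isCauchySolution_eqOn (b₀ b₁ b₂ : ℂ) :
    ∃ δ₀ > 0, ∀ δ, 0 < δ → δ ≤ δ₀ → ∀ u₀ u₁ u v,
      IsCauchySolution (Pop b₀ b₁ b₂) (Dset δ) u₀ u₁ u →
      IsCauchySolution (Pop b₀ b₁ b₂) (Dset δ) u₀ u₁ v → EqOn u v (Dset δ) := by
  have hpos : 0 < 10 * (1 + ‖b₀‖ + ‖b₁‖ + ‖b₂‖) := by positivity
  refine ⟨(10 * (1 + ‖b₀‖ + ‖b₁‖ + ‖b₂‖))⁻¹ ^ 2, by positivity,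
    fun δ hδ₀ hδ u₀ u₁ u v hu hv => hu.eqOn (inv_pos.2 hpos) (le_of_eq ?_) hδ₀ hδ hv⟩
  rw [mul_right_comm, mul_inv_cancel₀ hpos.ne']

theorem a_priori_estimate_from_solvability_general (b₀ b₁ b₂ : ℂ) (s h : ℝ) (hh : 0 < h)
    (hsolv : LocallySolvable (Pop b₀ b₁ b₂) s) :
    ∃ δ > (0 : ℝ),
      (∀ u₀ u₁ : (Fin 2 → ℝ) → ℂ, ContDiff ℝ (⊤ : ℕ∞) u₀ → ContDiff ℝ (⊤ : ℕ∞) u₁ →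
        (∃ N₀, GevreyBound s h N₀ u₀) → (∃ N₁, GevreyBound s h N₁ u₁) →
          (∃ u, IsCauchySolution (Pop b₀ b₁ b₂) (Dset δ) u₀ u₁ u) ∧
          ∀ u v, IsCauchySolution (Pop b₀ b₁ b₂) (Dset δ) u₀ u₁ u →
            IsCauchySolution (Pop b₀ b₁ b₂) (Dset δ) u₀ u₁ v → EqOn u v (Dset δ)) ∧
      ∃ C > (0 : ℝ), ∀ u₀ u₁ : (Fin 2 → ℝ) → ℂ, ContDiff ℝ (⊤ : ℕ∞) u₀ →
        ContDiff ℝ (⊤ : ℕ∞) u₁ → ∀ u, IsCauchySolution (Pop b₀ b₁ b₂) (Dset δ) u₀ u₁ u →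
          ∀ N₀ N₁, GevreyBound s h N₀ u₀ → GevreyBound s h N₁ u₁ →
            ∀ x ∈ Dset δ, ‖u x‖ ≤ C * (N₀ + N₁) ∧ (∀ i, ‖pd i u x‖ ≤ C * (N₀ + N₁)) ∧
              ∀ i j, ‖pd i (pd j u) x‖ ≤ C * (N₀ + N₁) := by
  obtain ⟨δ₀, hδ₀, hunique⟩ := exists_pos_forall_isCauchySolution_eqOn b₀ b₁ b₂
  obtain ⟨δ, hδ, hδδ₀, C, hC, hsol⟩ := hsolv.exists_isCauchySolution_norm_jet_le hh hδ₀
  refine ⟨δ, hδ, fun u₀ u₁ hu₀ hu₁ ⟨N₀, hN₀⟩ ⟨N₁, hN₁⟩ =>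
    ⟨(hsol u₀ u₁ hu₀ hu₁ N₀ N₁ hN₀ hN₁).imp fun _ hu => hu.1, hunique δ hδ hδδ₀ u₀ u₁⟩,
    C, hC, fun u₀ u₁ hu₀ hu₁ u hu N₀ N₁ hN₀ hN₁ x hx => ?_⟩
  obtain ⟨v, hv, hvC⟩ := hsol u₀ u₁ hu₀ hu₁ N₀ N₁ hN₀ hN₁
  have huv : jet u x = jet v x := eqOn_jet (isOpen_Dset δ) (hunique δ hδ hδδ₀ u₀ u₁ u v hu hv) hx
  exact norm_partials_le_of_norm_jet_le (hu.1.contDiffAt ((isOpen_Dset δ).mem_nhds hx))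
    (huv ▸ hvC x hx)

end CauchyUniqueness

/-- If the Cauchy problem for `P = P_mod + b₀D₀ + b₁D₁ + b₂D₂` is locally solvable in
`γ^(s)` at the origin, then there is `δ > 0` such that for any `0 < ε₁ < δ` and any data
`u₀, u₁ ∈ γ₀^(s,h)({|x'| ≤ ε₁})` there is a unique `C²` solution of the Cauchy problem on
`D_δ`, and for every compact `L ⊆ D_δ` there is `C > 0`, independent of the data, with
`|u|_{C²(L)} ≤ C·Σ_{j=0,1} sup_{α,x'} |∂^α u_j(x')|/(h^|α|(|α|!)^s)` (expressed here via
arbitrary admissible bounding constants `N₀, N₁` for the data). -/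
theorem a_priori_estimate_from_solvability (b₀ b₁ b₂ : ℂ) (s h : ℝ) (hs : 1 < s)
    (hh : 0 < h) (hsolv : LocallySolvable (Pop b₀ b₁ b₂) s) :
    ∃ δ > (0:ℝ),
      (∀ ε₁ : ℝ, 0 < ε₁ → ε₁ < δ → ∀ u₀ u₁ : (Fin 2 → ℝ) → ℂ,
        MemGevreyZero s h ε₁ u₀ → MemGevreyZero s h ε₁ u₁ →
          (∃ u : (Fin 3 → ℝ) → ℂ, IsCauchySolution (Pop b₀ b₁ b₂) (Dset δ) u₀ u₁ u) ∧
          (∀ u v : (Fin 3 → ℝ) → ℂ, IsCauchySolution (Pop b₀ b₁ b₂) (Dset δ) u₀ u₁ u →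
            IsCauchySolution (Pop b₀ b₁ b₂) (Dset δ) u₀ u₁ v →
            Set.EqOn u v (Dset δ))) ∧
      (∀ L : Set (Fin 3 → ℝ), IsCompact L → L ⊆ Dset δ →
        ∃ C > (0:ℝ), ∀ ε₁ : ℝ, 0 < ε₁ → ε₁ < δ → ∀ u₀ u₁ : (Fin 2 → ℝ) → ℂ,
          MemGevreyZero s h ε₁ u₀ → MemGevreyZero s h ε₁ u₁ →
          ∀ u : (Fin 3 → ℝ) → ℂ, IsCauchySolution (Pop b₀ b₁ b₂) (Dset δ) u₀ u₁ u →
          ∀ N₀ N₁ : ℝ, GevreyBound s h N₀ u₀ → GevreyBound s h N₁ u₁ →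
            ∀ x ∈ L, ‖u x‖ ≤ C * (N₀ + N₁) ∧
              (∀ i : Fin 3, ‖pd i u x‖ ≤ C * (N₀ + N₁)) ∧
              (∀ i j : Fin 3, ‖pd i (pd j u) x‖ ≤ C * (N₀ + N₁))) := by
  obtain ⟨δ, hδ, hex, C, hC, hbound⟩ :=
    a_priori_estimate_from_solvability_general b₀ b₁ b₂ s h hh hsolv
  exact ⟨δ, hδ, fun _ _ _ u₀ u₁ hu₀ hu₁ => hex u₀ u₁ hu₀.1 hu₁.1 hu₀.2.2 hu₁.2.2,
    fun _ _ hL => ⟨C, hC, fun _ _ _ u₀ u₁ hu₀ hu₁ u hu N₀ N₁ hN₀ hN₁ x hx =>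
      hbound u₀ u₁ hu₀.1 hu₁.1 u hu N₀ N₁ hN₀ hN₁ x (hL hx)⟩⟩
end
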